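/- Every noncomplete k-contraction-critical graph with k ≥ 17 is 8-connected. -/

import Mathlib

/-!
Suppose a noncomplete `k`-contraction-critical graph `G` with `k ≥ 17` has a separator of at most seven
vertices, and let `S` be a minimum one, with sides `A` and `B`. If disjoint connected subgraphs of
`G - A` meet `S` in independent sets, then contracting them produces a proper minor, hence a
`(k - 1)`-colouring of `G - B` in which each of these independent sets is monochromatic (`Cut.ext`).
Colourings of `G - A` and `G - B` that induce the same partition of `S` combine to a colouring of `G`
(`Cut.no_match`), so it suffices to force the same partition from both sides.

The connected subgraphs come from a linking theorem in the style of Thomas and Wollan (`TW`): a graph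
with enough edges outside a set of terminals, and no small separation cutting off a dense part, links
prescribed classes of terminals by disjoint connected subgraphs. In a minimal counterexample every
edge lies in many triangles, some vertex has small degree, and the statement reduces to linking inside
its dense neighbourhood. This is carried out for two classes on at most seven terminals (`local_b`)
and for three pairs (`local_a`). The minimum degree is at least `k ≥ 17` (`deg_ge`), and `S` is a minimum
separator, so the linking theorem applies to both sides (`Side.solv`).

Let `I`, `J`, `K` be maximum independent sets chosen greedily from `S`. A colouring in which they are
monochromatic induces on `S` the partition into `I`, `J`, `K` and singletons, provided the rest of `S` is a
clique (`kernel`). Since `#S ≤ 7`, linking makes these classes monochromatic on both sides except when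
their sizes are 3, 2, 2. In that case the colouring with all three classes monochromatic exists on at
most one side. Kempe chains in that colouring are contracted to control the colourings of the other
side, until a common partition of `S` appears (`Conf.not_conf`).
-/

open SimpleGraph

/-- `G` is `k`-linked: any `2k` distinct vertices, grouped into `k` pairs, can be joined
by `k` pairwise vertex-disjoint paths. -/
def Linked {V : Type} (G : SimpleGraph V) (k : ℕ) : Prop :=
  ∀ u v : Fin k → V,
    Function.Injective (Sum.elim u v) →
    ∃ P : (i : Fin k) → G.Walk (u i) (v i),
      (∀ i, (P i).IsPath) ∧
      ∀ i j, i ≠ j → ∀ x ∈ (P i).support, x ∉ (P j).support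

/-- `G` is `(2,…,2,1)`-knitted with `k` twos: any `k` pairs of vertices together with one
further vertex `u₀` (all distinct) can be linked by `k` pairwise vertex-disjoint paths,
each avoiding `u₀`. -/
def KnittedOne {V : Type} (G : SimpleGraph V) (k : ℕ) : Prop :=
  ∀ (u₀ : V) (u v : Fin k → V),
    Function.Injective (Sum.elim (Sum.elim u v) (fun _ : Unit => u₀)) →
    ∃ P : (i : Fin k) → G.Walk (u i) (v i),
      (∀ i, (P i).IsPath) ∧
      (∀ i, u₀ ∉ (P i).support) ∧
      ∀ i j, i ≠ j → ∀ x ∈ (P i).support, x ∉ (P j).support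

/-- `H` is a minor of `G`, witnessed by pairwise-disjoint nonempty connected branch sets. -/
def IsMinor {W V : Type} (H : SimpleGraph W) (G : SimpleGraph V) : Prop :=
  ∃ f : W → Set V,
    (∀ w, (f w).Nonempty) ∧
    (∀ w, (G.induce (f w)).Connected) ∧
    (Pairwise fun w w' => Disjoint (f w) (f w')) ∧
    (∀ ⦃w w'⦄, H.Adj w w' → ∃ a ∈ f w, ∃ b ∈ f w', G.Adj a b)

/-- `H` is a proper minor of `G`. -/
def IsProperMinor {W V : Type} (H : SimpleGraph W) (G : SimpleGraph V) : Prop :=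
  IsMinor H G ∧ ¬ IsMinor G H

/-- `G` is `k`-contraction-critical: its chromatic number is `k`, but every proper minor
is `(k-1)`-colorable. -/
def ContractionCritical {V : Type} (k : ℕ) (G : SimpleGraph V) : Prop :=
  G.chromaticNumber = (k : ENat) ∧
  ∀ (W : Type) (H : SimpleGraph W), IsProperMinor H G → H.Colorable (k - 1)

/-- `G` is `t`-connected: more than `t` vertices, and deleting any fewer than `t`
vertices leaves it connected. -/
def KConnected {V : Type} [Fintype V] (G : SimpleGraph V) (t : ℕ) : Prop :=
  t < Fintype.card V ∧
  ∀ S : Finset V, S.card < t → (G.induce {v : V | v ∉ S}).Connected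

/-- Independence number of the subgraph of `G` induced on `S`. -/
noncomputable def alphaOn {V : Type} (G : SimpleGraph V) (S : Set V) : ℕ :=
  sSup {n | ∃ t : Finset V, ↑t ⊆ S ∧ t.card = n ∧
    ∀ a ∈ t, ∀ b ∈ t, a ≠ b → ¬ G.Adj a b}

/-- Number of common neighbors of `a` and `b` in `G`. -/
noncomputable def commonNbrs {V : Type} (G : SimpleGraph V) (a b : V) : ℕ :=
  {x : V | G.Adj a x ∧ G.Adj b x}.ncard

namespace CC
open scoped Classical
open Finset
variable {V : Type}

/-! ### Boundaries and a theorem of Menger type -/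

/-- The boundary of `W` in `U`: the vertices of `U` outside `W` with a neighbour in `W`. -/
noncomputable def bd (G : SimpleGraph V) (U W : Finset V) : Finset V :=
  {u ∈ U | u ∉ W ∧ ∃ w ∈ W, G.Adj u w}

/-- `x` and `y` are joined by a walk in `G[C]`. Reflexive at every vertex, also outside `C`. -/
def Jn (G : SimpleGraph V) (C : Finset V) : V → V → Prop :=
  Relation.ReflTransGen (fun a b => G.Adj a b ∧ a ∈ C ∧ b ∈ C)

theorem mem_bd {G : SimpleGraph V} {U W : Finset V} {u : V} :
    u ∈ bd G U W ↔ u ∈ U ∧ u ∉ W ∧ ∃ w ∈ W, G.Adj u w := by simp [bd]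

theorem Jn.refl {G : SimpleGraph V} {C : Finset V} (x : V) : Jn G C x x :=
  Relation.ReflTransGen.refl

theorem Jn.trans {G : SimpleGraph V} {C : Finset V} {x y z : V}
    (h : Jn G C x y) (h' : Jn G C y z) : Jn G C x z := Relation.ReflTransGen.trans h h'

theorem Jn.single {G : SimpleGraph V} {C : Finset V} {x y : V}
    (h : G.Adj x y) (hx : x ∈ C) (hy : y ∈ C) : Jn G C x y :=
  Relation.ReflTransGen.single ⟨h, hx, hy⟩

theorem Jn.symm {G : SimpleGraph V} {C : Finset V} {x y : V}
    (h : Jn G C x y) : Jn G C y x := by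
  induction h with
  | refl => exact .refl _
  | tail _ h ih => exact (Jn.single h.1.symm h.2.2 h.2.1).trans ih

theorem Jn.mono {G : SimpleGraph V} {C D : Finset V} (hCD : C ⊆ D) {x y : V}
    (h : Jn G C x y) : Jn G D x y := by
  induction h with
  | refl => exact .refl _
  | tail _ h ih => exact ih.trans (.single h.1 (hCD h.2.1) (hCD h.2.2))

theorem Jn.eq_or_mem {G : SimpleGraph V} {C : Finset V} {x y : V}
    (h : Jn G C x y) : x = y ∨ x ∈ C ∧ y ∈ C := by
  induction h with
  | refl => exact .inl rfl
  | tail _ h ih =>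
    rcases ih with rfl | ih
    · exact .inr h.2
    · exact .inr ⟨ih.1, h.2.2⟩

/-- The contraction of `u` into `v`: `v` acquires the neighbours of `u`. The vertex `u` stays in the
vertex type, so this is used on vertex sets avoiding `u`. -/
def con (G : SimpleGraph V) (u v : V) : SimpleGraph V where
  Adj a b := a ≠ b ∧ (G.Adj a b ∨ (a = v ∧ G.Adj u b) ∨ (b = v ∧ G.Adj u a))
  symm := ⟨by
    rintro a b ⟨h, h' | h' | h'⟩
    · exact ⟨h.symm, .inl h'.symm⟩
    · exact ⟨h.symm, .inr (.inr h')⟩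
    · exact ⟨h.symm, .inr (.inl h')⟩⟩
  loopless := ⟨fun _ h => h.1 rfl⟩

theorem con_adj {G : SimpleGraph V} {u v a b : V} : (con G u v).Adj a b ↔
    a ≠ b ∧ (G.Adj a b ∨ (a = v ∧ G.Adj u b) ∨ (b = v ∧ G.Adj u a)) := Iff.rfl

theorem Jn.of_con {G : SimpleGraph V} {u v : V} (huv : G.Adj u v) {C : Finset V} {x y : V}
    (h : Jn (con G u v) C x y) : Jn G (insert u C) x y := by
  induction h with
  | refl => exact .refl _
  | @tail b c _ h ih =>
    obtain ⟨⟨-, h1⟩, hb, hc⟩ := h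
    refine ih.trans ?_
    have hb' := mem_insert_of_mem (b := u) hb
    have hc' := mem_insert_of_mem (b := u) hc
    have hu := mem_insert_self u C
    rcases h1 with h1 | ⟨rfl, h1⟩ | ⟨rfl, h1⟩
    · exact .single h1 hb' hc'
    · exact (Jn.single huv.symm hb' hu).trans (.single h1 hu hc')
    · exact (Jn.single h1.symm hb' hu).trans (.single huv hu hc')

theorem Jn.of_con' {G : SimpleGraph V} {u v : V} {C : Finset V} (hv : v ∉ C) {x y : V}
    (h : Jn (con G u v) C x y) : Jn G C x y := by
  induction h with
  | refl => exact .refl _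
  | @tail b c _ h ih =>
    obtain ⟨⟨-, h1⟩, hb, hc⟩ := h
    refine ih.trans ?_
    rcases h1 with h1 | ⟨rfl, h1⟩ | ⟨rfl, h1⟩
    · exact .single h1 hb hc
    · exact absurd hb hv
    · exact absurd hc hv

/-- Inside the closed neighbourhood of `Z`, boundaries do not change. -/
theorem bd_sub {G : SimpleGraph V} {U Z Y : Finset V} (hZ : Z ⊆ U) (hY : Y ⊆ Z) :
    bd G (Z ∪ bd G U Z) Y = bd G U Y := by
  ext u
  simp only [mem_bd, mem_union]
  constructor
  · rintro ⟨h | h, h2⟩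
    · exact ⟨hZ h, h2⟩
    · exact ⟨h.1, h2⟩
  · rintro ⟨h, h2, w, hw, h3⟩
    refine ⟨?_, h2, w, hw, h3⟩
    by_cases hu : u ∈ Z
    · exact .inl hu
    · exact .inr ⟨h, hu, w, hY hw, h3⟩

/-- Menger's theorem, for linking `X` to the boundary of `Z` inside `U`: if no `W` between `Z` and
`U \ X` has a boundary smaller than `X`, then there are disjoint connected sets `P x`, `x ∈ X`, where
`P x` contains `x` and a vertex `t x` of the boundary of `Z`, and no other vertex of that boundary.

Induction on `#(U \ Z)`. If some `x0 ∈ X` is not on the boundary of `Z`, an edge from `x0` to a vertex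
`u` outside `X` is contracted; if this creates a set `W` with too small a boundary, then `W` has
boundary exactly `#X` in `G`, and `X` is linked to it and it is linked to `Z`. -/
theorem linking (n : ℕ) : ∀ (G : SimpleGraph V) (U X Z : Finset V), #(U \ Z) ≤ n → X ⊆ U →
    Z ⊆ U \ X → (∀ W, Z ⊆ W → W ⊆ U \ X → #X ≤ #(bd G U W)) →
    ∃ (t : V → V) (P : V → Finset V),
      (∀ x ∈ X, x ∈ P x ∧ Jn G (P x) x (t x) ∧ P x ⊆ U \ Z ∧ t x ∈ P x ∧ t x ∈ bd G U Z ∧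
        ∀ z ∈ P x, z ∈ bd G U Z → z = t x) ∧
      ∀ x ∈ X, ∀ y ∈ X, x ≠ y → Disjoint (P x) (P y) := by
  induction n with
  | zero =>
    intro G U X Z h0 hX hZ hc
    have hX0 : X = ∅ := by
      rw [eq_empty_iff_forall_notMem]
      intro x hx
      have : x ∈ U \ Z := mem_sdiff.2 ⟨hX hx, fun h => (mem_sdiff.1 (hZ h)).2 hx⟩
      have := card_pos.2 ⟨x, this⟩
      omega
    subst hX0
    exact ⟨id, fun _ => ∅, by simp, by simp⟩
  | succ n ih =>
    intro G U X Z h0 hX hZ hc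
    have hXZ : ∀ x ∈ X, x ∉ Z := fun x hx h => (mem_sdiff.1 (hZ h)).2 hx
    by_cases hXb : X ⊆ bd G U Z
    · refine ⟨id, fun x => {x}, fun x hx => ⟨by simp, .refl _, ?_, by simp, hXb hx, by simp⟩, ?_⟩
      · simpa using ⟨hX hx, hXZ x hx⟩
      · intro x _ y _ h; simpa using h
    obtain ⟨x0, hx0, hx0b⟩ := not_subset.1 hXb
    have hbA : bd G U (U \ X) = X := by
      refine eq_of_subset_of_card_le ?_ (hc _ hZ subset_rfl)
      intro u hu
      rw [mem_bd] at hu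
      by_contra h
      exact hu.2.1 (mem_sdiff.2 ⟨hu.1, h⟩)
    obtain ⟨-, -, u, huA, hux⟩ := mem_bd.1 (hbA.symm ▸ hx0 : x0 ∈ bd G U (U \ X))
    obtain ⟨huU, huX⟩ := mem_sdiff.1 huA
    have huZ : u ∉ Z := fun h => hx0b (mem_bd.2 ⟨hX hx0, hXZ _ hx0, u, h, hux⟩)
    have hne : u ≠ x0 := fun h => huX (h ▸ hx0)
    set G' := con G u x0 with hG'
    -- either contracting `u` into `x0` preserves the hypothesis, or there is a tight `W` off `u`
    by_cases hc' : ∀ W, Z ⊆ W → W ⊆ U.erase u \ X → #X ≤ #(bd G' (U.erase u) W)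
    · obtain ⟨t, P, h1, h2⟩ := ih G' (U.erase u) X Z (by
        have : U.erase u \ Z ⊂ U \ Z := by
          refine (ssubset_iff_of_subset (sdiff_subset_sdiff (erase_subset _ _) subset_rfl)).2
            ⟨u, by simp [huU, huZ], by simp⟩
        have := card_lt_card this
        omega) (fun x hx => mem_erase.2 ⟨fun h => huX (h ▸ hx), hX hx⟩) (fun z hz => by
          have := hZ hz
          simp only [mem_sdiff, mem_erase] at this ⊢
          exact ⟨⟨fun h => huZ (h ▸ hz), this.1⟩, this.2⟩) hc'
      -- a boundary vertex of `Z` other than `u` stays a boundary vertex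
      have hb1 : ∀ z ∈ bd G U Z, z ≠ u → z ∈ bd G' (U.erase u) Z := by
        intro z hz hzu
        obtain ⟨a, b, w, hw, hzw⟩ := mem_bd.1 hz
        exact mem_bd.2 ⟨mem_erase.2 ⟨hzu, a⟩, b, w, hw, con_adj.2 ⟨hzw.ne, .inl hzw⟩⟩
      have hb2 : ∀ z ∈ bd G' (U.erase u) Z, z ≠ x0 → z ∈ bd G U Z := by
        intro z hz hzx
        obtain ⟨a, b, w, hw, hzw⟩ := mem_bd.1 hz
        refine mem_bd.2 ⟨mem_of_mem_erase a, b, w, hw, ?_⟩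
        rcases (con_adj.1 hzw).2 with h | h | h
        · exact h
        · exact absurd h.1 hzx
        · exact absurd (h.1 ▸ hw) (hXZ _ hx0)
      have hb3 : x0 ∈ bd G' (U.erase u) Z ↔ u ∈ bd G U Z := by
        simp only [mem_bd, mem_erase]
        constructor
        · rintro ⟨-, -, w, hw, hzw⟩
          refine ⟨huU, huZ, w, hw, ?_⟩
          rcases (con_adj.1 hzw).2 with h | h | h
          · exact absurd (mem_bd.2 ⟨hX hx0, hXZ _ hx0, w, hw, h⟩) hx0b
          · exact h.2
          · exact absurd (h.1 ▸ hw) (hXZ _ hx0)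
        · rintro ⟨-, -, w, hw, hzw⟩
          exact ⟨⟨hne.symm, hX hx0⟩, hXZ _ hx0, w, hw,
            con_adj.2 ⟨fun h => hXZ _ hx0 (h ▸ hw), .inr (.inl ⟨rfl, hzw⟩)⟩⟩
      have huP : ∀ x ∈ X, u ∉ P x := fun x hx h => by
        have := (h1 x hx).2.2.1 h
        simp at this
      have hx0P : ∀ x ∈ X, x ≠ x0 → x0 ∉ P x := fun x hx hxx h =>
        disjoint_left.1 (h2 x hx x0 hx0 hxx) h (h1 x0 hx0).1
      refine ⟨fun x => if x = x0 ∧ t x0 = x0 then u else t x,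
        fun x => if x = x0 then insert u (P x) else P x, fun x hx => ?_, fun x hx y hy hxy => ?_⟩
      · obtain ⟨a1, a2, a3, a4, a5, a6⟩ := h1 x hx
        by_cases hxx : x = x0
        · subst hxx
          have hsub : insert u (P x) ⊆ U \ Z := by
            intro z hz
            rcases mem_insert.1 hz with rfl | hz
            · simp [huU, huZ]
            · have := a3 hz
              simp only [mem_sdiff, mem_erase] at this ⊢
              exact ⟨this.1.2, this.2⟩
          by_cases ht : t x = x
          · simp only [ht, and_self, if_true]
            rw [ht] at a5 a6
            refine ⟨by simp [a1], .single hux (by simp [a1]) (by simp), hsub, by simp,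
              hb3.1 a5, ?_⟩
            intro z hz hzb
            rcases mem_insert.1 hz with rfl | hz
            · rfl
            · by_contra hzu
              have := a6 z hz (hb1 z hzb hzu)
              exact hx0b (this ▸ hzb)
          · simp only [ht, and_false, if_false, if_true]
            refine ⟨by simp [a1], Jn.of_con hux.symm a2, hsub, by simp [a4], hb2 _ a5 ht, ?_⟩
            intro z hz hzb
            rcases mem_insert.1 hz with rfl | hz
            · exact absurd (a6 x a1 (hb3.2 hzb)).symm ht
            · exact a6 z hz (hb1 z hzb (fun h => huP x hx (h ▸ hz)))
        · simp only [hxx, false_and, if_false]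
          have htx : t x ≠ x0 := fun h => hx0P x hx hxx (h ▸ a4)
          refine ⟨a1, Jn.of_con' (hx0P x hx hxx) a2, fun z hz => ?_, a4, hb2 _ a5 htx, ?_⟩
          · have := a3 hz
            simp only [mem_sdiff, mem_erase] at this ⊢
            exact ⟨this.1.2, this.2⟩
          · intro z hz hzb
            exact a6 z hz (hb1 z hzb (fun h => huP x hx (h ▸ hz)))
      · have := h2 x hx y hy hxy
        dsimp only
        split_ifs with e1 e2 e2
        · exact absurd (e1.trans e2.symm) hxy
        · exact disjoint_insert_left.2 ⟨huP y hy, this⟩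
        · exact disjoint_insert_right.2 ⟨huP x hx, this⟩
        · exact this
    · push Not at hc'
      obtain ⟨W, hZW, hWA, hW⟩ := hc'
      have hWA' : W ⊆ U \ X := fun w hw => by
        have := hWA hw
        simp only [mem_sdiff, mem_erase] at this ⊢
        exact ⟨this.1.2, this.2⟩
      have huW : u ∉ W := fun h => by simpa using hWA h
      have hWU : W ⊆ U := fun w hw => (mem_sdiff.1 (hWA' hw)).1
      have hbs : bd G U W ⊆ insert u (bd G' (U.erase u) W) := by
        intro z hz
        obtain ⟨a, b, w, hw, hzw⟩ := mem_bd.1 hz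
        by_cases hzu : z = u
        · simp [hzu]
        · exact mem_insert_of_mem
            (mem_bd.2 ⟨mem_erase.2 ⟨hzu, a⟩, b, w, hw, con_adj.2 ⟨hzw.ne, .inl hzw⟩⟩)
      have hWge := hc W hZW hWA'
      have hWle : #(bd G U W) = #X := by
        have := card_le_card hbs
        have := card_insert_le u (bd G' (U.erase u) W)
        omega
      have hub : u ∈ bd G U W := by
        by_contra h
        have : bd G U W ⊆ bd G' (U.erase u) W := fun z hz => by
          rcases mem_insert.1 (hbs hz) with rfl | h'
          · exact absurd hz h
          · exact h'
        have := card_le_card this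
        omega
      have hWZ : Z ≠ W := by
        rintro rfl
        have hsub : insert x0 ((bd G U Z).erase u) ⊆ bd G' (U.erase u) Z := by
          intro z hz
          rcases mem_insert.1 hz with rfl | hz
          · obtain ⟨-, -, w, hw, hzw⟩ := mem_bd.1 hub
            exact mem_bd.2 ⟨mem_erase.2 ⟨hne.symm, hX hx0⟩, hXZ _ hx0, w, hw,
              con_adj.2 ⟨fun h => hXZ _ hx0 (h ▸ hw), .inr (.inl ⟨rfl, hzw⟩)⟩⟩
          · obtain ⟨hzu, hz⟩ := mem_erase.1 hz
            rcases mem_insert.1 (hbs hz) with h | h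
            · exact absurd h hzu
            · exact h
        have := card_le_card hsub
        rw [card_insert_of_notMem (fun h => hx0b (mem_of_mem_erase h)),
          card_erase_of_mem hub] at this
        have := card_pos.2 ⟨u, hub⟩
        omega
      have hbX : ∀ z ∈ bd G U W, z ∉ W := fun z hz => (mem_bd.1 hz).2.1
      obtain ⟨t1, P1, h11, h12⟩ := ih G U X W (by
        have : U \ W ⊂ U \ Z := by
          refine (ssubset_iff_of_subset (sdiff_subset_sdiff subset_rfl hZW)).2 ?_
          obtain ⟨w, hw, hw'⟩ := exists_of_ssubset (hZW.ssubset_of_ne hWZ)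
          exact ⟨w, mem_sdiff.2 ⟨hWU hw, hw'⟩, fun h => (mem_sdiff.1 h).2 hw⟩
        have := card_lt_card this
        omega) hX hWA' (fun W' h h' => hc W' (hZW.trans h) h')
      have hdis : Disjoint W (bd G U W) := disjoint_left.2 fun z hz h => hbX z h hz
      have hU1 : (W ∪ bd G U W) \ bd G U W = W := by
        rw [union_sdiff_right, sdiff_eq_self_of_disjoint hdis]
      obtain ⟨t2, P2, h21, h22⟩ := ih G (W ∪ bd G U W) (bd G U W) Z (by
        have e1 : #(W ∪ bd G U W) = #W + #X := by rw [card_union_of_disjoint hdis, hWle]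
        have e2 : #W < #(U \ X) := card_lt_card
          ((ssubset_iff_of_subset hWA').2 ⟨u, huA, huW⟩)
        have e3 : #(U \ X) + #X = #U := card_sdiff_add_card_eq_card hX
        have e4 := card_sdiff_add_card_eq_card (hZW.trans hWU)
        have e5 := card_sdiff_add_card_eq_card
          (hZW.trans (subset_union_left : W ⊆ W ∪ bd G U W))
        omega) subset_union_right (by rw [hU1]; exact hZW) (by
          intro W' h h'
          rw [hU1] at h'
          rw [bd_sub hWU h', hWle]
          exact hc W' h (h'.trans hWA'))
      rw [bd_sub hWU hZW] at h21
      have hP2b : ∀ y ∈ bd G U W, ∀ z ∈ P2 y, z ∈ bd G U W → z = y := by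
        intro y hy z hz hzb
        by_contra hne
        exact disjoint_left.1 (h22 z hzb y hy hne) (h21 z hzb).1 hz
      have hcross : ∀ x ∈ X, ∀ y ∈ bd G U W, ∀ z ∈ P1 x, z ∈ P2 y → z = t1 x ∧ z = y := by
        intro x hx y hy z hz hz'
        have hzW : z ∉ W := (mem_sdiff.1 ((h11 x hx).2.2.1 hz)).2
        have hzb : z ∈ bd G U W := by
          rcases mem_union.1 (mem_sdiff.1 ((h21 y hy).2.2.1 hz')).1 with h | h
          · exact absurd h hzW
          · exact h
        exact ⟨(h11 x hx).2.2.2.2.2 z hz hzb, hP2b y hy z hz' hzb⟩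
      have ht1 : ∀ x ∈ X, ∀ y ∈ X, x ≠ y → t1 x ≠ t1 y := by
        intro x hx y hy hxy h
        exact disjoint_left.1 (h12 x hx y hy hxy) (h11 x hx).2.2.2.1 (h ▸ (h11 y hy).2.2.2.1)
      refine ⟨fun x => t2 (t1 x), fun x => P1 x ∪ P2 (t1 x), fun x hx => ?_,
        fun x hx y hy hxy => ?_⟩
      · obtain ⟨a1, a2, a3, a4, a5, a6⟩ := h11 x hx
        obtain ⟨b1, b2, b3, b4, b5, b6⟩ := h21 _ a5
        refine ⟨mem_union_left _ a1, (a2.mono subset_union_left).trans (b2.mono subset_union_right),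
          ?_, mem_union_right _ b4, b5, ?_⟩
        · intro z hz
          rcases mem_union.1 hz with hz | hz
          · exact mem_sdiff.2 ⟨(mem_sdiff.1 (a3 hz)).1,
              fun h => (mem_sdiff.1 (a3 hz)).2 (hZW h)⟩
          · obtain ⟨h, h'⟩ := mem_sdiff.1 (b3 hz)
            refine mem_sdiff.2 ⟨?_, h'⟩
            rcases mem_union.1 h with h | h
            · exact hWU h
            · exact (mem_bd.1 h).1
        · intro z hz hzb
          rcases mem_union.1 hz with hz | hz
          · have hzW : z ∉ W := (mem_sdiff.1 (a3 hz)).2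
            obtain ⟨c1, c2, w, hw, c3⟩ := mem_bd.1 hzb
            have : z = t1 x := a6 z hz (mem_bd.2 ⟨c1, hzW, w, hZW hw, c3⟩)
            exact b6 z (this ▸ b1) hzb
          · exact b6 z hz hzb
      · have hxy' := ht1 x hx y hy hxy
        have hx5 := (h11 x hx).2.2.2.2.1
        have hy5 := (h11 y hy).2.2.2.2.1
        rw [disjoint_union_left, disjoint_union_right, disjoint_union_right]
        refine ⟨⟨h12 x hx y hy hxy, ?_⟩, ?_, h22 _ hx5 _ hy5 hxy'⟩
        · rw [Finset.disjoint_left]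
          intro z hz hz'
          obtain ⟨e1, e2⟩ := hcross x hx _ hy5 z hz hz'
          exact hxy' (e1.symm.trans e2)
        · rw [Finset.disjoint_left]
          intro z hz hz'
          obtain ⟨e1, e2⟩ := hcross y hy _ hx5 z hz' hz
          exact hxy' (e2.symm.trans e1)

/-! ### Labellings, linkages and massed pairs -/

/-- Number of ordered pairs of adjacent vertices of `U` with at least one entry in `Y`:
twice the number of edges of `G[U]` meeting `Y`. -/
noncomputable def rr (G : SimpleGraph V) (U Y : Finset V) : ℕ :=
  #{p ∈ U ×ˢ U | G.Adj p.1 p.2 ∧ (p.1 ∈ Y ∨ p.2 ∈ Y)}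

/-- The labelling `f` of `X` (`none` means unlabelled) is realised in `U`: there are disjoint sets
`C i ⊆ U` such that `C i` contains all vertices of `X` labelled `i` and joins them in `G[C i]`. -/
def Solv (G : SimpleGraph V) (U X : Finset V) (f : V → Option (Fin 3)) : Prop :=
  ∃ C : Fin 3 → Finset V, (∀ i, C i ⊆ U) ∧ (∀ i j, i ≠ j → Disjoint (C i) (C j)) ∧
    (∀ x ∈ X, ∀ i, f x = some i → x ∈ C i) ∧
    ∀ x ∈ X, ∀ y ∈ X, ∀ i, f x = some i → f y = some i → Jn G (C i) x y

/-- At most `c i` vertices of `X` have label `i`. -/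
def Good (c : Fin 3 → ℕ) (f : V → Option (Fin 3)) (X : Finset V) : Prop :=
  ∀ i, #{x ∈ X | f x = some i} ≤ c i

/-- The pair `(G[U], X)` is massed: twice the number of edges meeting `U \ X` exceeds `L * #(U \ X)`,
while a set `Y ⊆ U \ X` with fewer than `#X` boundary vertices meets at most `L * #Y / 2` edges. -/
structure Massed (L : ℕ) (G : SimpleGraph V) (U X : Finset V) : Prop where
  sub : X ⊆ U
  mass : L * #(U \ X) < rr G U (U \ X)
  small : ∀ Y ⊆ U \ X, #(bd G U Y) < #X → rr G U Y ≤ L * #Y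

/-- Every labelling of the boundary of `Z` with class sizes bounded by `c` is realised in the closed
neighbourhood of `Z`. -/
def Rigid (c : Fin 3 → ℕ) (G : SimpleGraph V) (U Z : Finset V) : Prop :=
  ∀ f, Good c f (bd G U Z) → Solv G (Z ∪ bd G U Z) (bd G U Z) f

theorem Jn.le {G G' : SimpleGraph V} (h : G ≤ G') {C : Finset V} {x y : V} (hx : Jn G C x y) :
    Jn G' C x y := by
  induction hx with
  | refl => exact .refl _
  | tail _ h' ih => exact ih.trans (.single (h h'.1) h'.2.1 h'.2.2)

theorem Solv.mono {G G' : SimpleGraph V} (hG : G ≤ G') {U U' X X' : Finset V} (hU : U ⊆ U')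
    (hX : X' ⊆ X) {f f' : V → Option (Fin 3)} (hf : ∀ x ∈ X', ∀ i, f' x = some i → f x = some i)
    (h : Solv G U X f) : Solv G' U' X' f' := by
  obtain ⟨C, h1, h2, h3, h4⟩ := h
  exact ⟨C, fun i => (h1 i).trans hU, h2, fun x hx i hi => h3 x (hX hx) i (hf x hx i hi),
    fun x hx y hy i hi hj => (h4 x (hX hx) y (hX hy) i (hf x hx i hi) (hf y hy i hj)).le hG⟩

theorem rr_mono {G G' : SimpleGraph V} (hG : G ≤ G') {U U' Y Y' : Finset V} (hU : U ⊆ U')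
    (hY : Y ⊆ Y') : rr G U Y ≤ rr G' U' Y' := by
  apply card_le_card
  intro p
  simp only [mem_filter, mem_product]
  rintro ⟨⟨h1, h2⟩, h3, h4⟩
  exact ⟨⟨hU h1, hU h2⟩, hG h3, h4.imp (fun h => hY h) (fun h => hY h)⟩

theorem bd_disj {G : SimpleGraph V} {U Z : Finset V} : Disjoint Z (bd G U Z) :=
  Finset.disjoint_left.2 fun _ hz h => (mem_bd.1 h).2.1 hz

theorem bd_subset {G : SimpleGraph V} {U Z : Finset V} : bd G U Z ⊆ U :=
  fun _ h => (mem_bd.1 h).1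

theorem sub_sdiff_bd {G : SimpleGraph V} {U Z : Finset V} :
    (Z ∪ bd G U Z) \ bd G U Z = Z := by
  rw [union_sdiff_right, sdiff_eq_self_of_disjoint bd_disj]

theorem rr_sub {G : SimpleGraph V} {U Z Y : Finset V} (hZ : Z ⊆ U) (hY : Y ⊆ Z) :
    rr G (Z ∪ bd G U Z) Y = rr G U Y := by
  refine le_antisymm (rr_mono le_rfl (union_subset hZ bd_subset) subset_rfl) ?_
  apply card_le_card
  intro p
  simp only [mem_filter, mem_product, mem_union, mem_bd]
  rintro ⟨⟨h1, h2⟩, h3, h4⟩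
  refine ⟨⟨?_, ?_⟩, h3, h4⟩
  · by_contra h
    push Not at h
    rcases h4 with h4 | h4
    · exact h.1 (hY h4)
    · exact h.2 h1 h.1 _ (hY h4) h3
  · by_contra h
    push Not at h
    rcases h4 with h4 | h4
    · exact h.2 h2 h.1 _ (hY h4) h3.symm
    · exact h.1 (hY h4)

/-- A smallest subset of `Y` that still meets many edges and has at most `m` boundary vertices is
massed relative to its boundary. -/
theorem exists_massed {L : ℕ} {G : SimpleGraph V} {U Y : Finset V} {m : ℕ} (hY : Y ⊆ U)
    (hm : #(bd G U Y) ≤ m) (hr : L * #Y < rr G U Y) :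
    ∃ Y' ⊆ Y, #(bd G U Y') ≤ m ∧ L * #Y' < rr G U Y' ∧
      Massed L G (Y' ∪ bd G U Y') (bd G U Y') := by
  let F := {W ∈ Y.powerset | #(bd G U W) ≤ m ∧ L * #W < rr G U W}
  have hF : F.Nonempty := ⟨Y, by simp [F, hm, hr]⟩
  obtain ⟨W, hW, hmin⟩ := exists_min_image F card hF
  simp only [F, mem_filter, mem_powerset] at hW hmin
  have hWU : W ⊆ U := hW.1.trans hY
  refine ⟨W, hW.1, hW.2.1, hW.2.2, subset_union_right, ?_, ?_⟩
  · rw [sub_sdiff_bd, rr_sub hWU subset_rfl]; exact hW.2.2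
  · intro W' hW' hlt
    rw [sub_sdiff_bd] at hW'
    rw [bd_sub hWU hW'] at hlt
    rw [rr_sub hWU hW']
    by_contra hcon
    have := hmin W' ⟨hW'.trans hW.1, by omega, by omega⟩
    have := eq_of_subset_of_card_le hW' this
    subst this
    omega

theorem nonempty_of_mass {L : ℕ} {G : SimpleGraph V} {U Y : Finset V} (h : L * #Y < rr G U Y) :
    Y.Nonempty := by
  by_contra hne
  rw [not_nonempty_iff_eq_empty] at hne
  subst hne
  simp [rr] at h

/-- Adding all edges inside `Y`. -/
def add (G : SimpleGraph V) (Y : Finset V) : SimpleGraph V where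
  Adj a b := a ≠ b ∧ (G.Adj a b ∨ (a ∈ Y ∧ b ∈ Y))
  symm := ⟨fun _ _ h => ⟨h.1.symm, h.2.imp (fun h => h.symm) (fun h => h.symm)⟩⟩
  loopless := ⟨fun _ h => h.1 rfl⟩

theorem le_add (G : SimpleGraph V) (Y : Finset V) : G ≤ add G Y := fun _ _ h => ⟨h.ne, .inl h⟩

/-- If `Z` is rigid, a realisation in the graph with `Z` deleted and its boundary made complete lifts to
a realisation in `G`: the added edges used by a class are replaced by a connected piece of `Z`. -/
theorem lift {c : Fin 3 → ℕ} {G : SimpleGraph V} {U Z U2 X : Finset V}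
    (hR : Rigid c G U Z) (hd : Disjoint U2 Z) {f : V → Option (Fin 3)} (hf : Good c f X)
    (h : Solv (add G (bd G U Z)) U2 X f) : Solv G (U2 ∪ Z ∪ bd G U Z) X f := by
  obtain ⟨C, h1, h2, h3, h4⟩ := h
  set Y := bd G U Z with hY
  have hatt : ∀ i x, ∃ y, (x ∈ C i → ∀ z ∈ Y ∩ C i, Jn G (insert z (C i \ Y)) x z →
      y ∈ Y ∩ C i ∧ Jn G (insert y (C i \ Y)) x y ∧ (x ∈ Y → y = x)) := by
    intro i x
    by_cases hx : x ∈ Y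
    · exact ⟨x, fun hxC _ _ _ => ⟨mem_inter.2 ⟨hx, hxC⟩, .refl _, fun _ => rfl⟩⟩
    · by_cases hz : ∃ z ∈ Y ∩ C i, Jn G (insert z (C i \ Y)) x z
      · obtain ⟨z, hz, hj⟩ := hz
        exact ⟨z, fun _ _ _ _ => ⟨hz, hj, fun h => absurd h hx⟩⟩
      · exact ⟨x, fun _ z hz' hj => absurd ⟨z, hz', hj⟩ hz⟩
  choose y hy using hatt
  let Att : Fin 3 → V → Prop := fun i x => ∃ z ∈ Y ∩ C i, Jn G (insert z (C i \ Y)) x z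
  let M : Fin 3 → Finset V := fun i => ({x ∈ X | f x = some i ∧ Att i x}).image (y i)
  have hM : ∀ i, ∀ z ∈ M i, z ∈ Y ∩ C i := by
    intro i z hz
    obtain ⟨x, hx, rfl⟩ := mem_image.1 hz
    obtain ⟨hx1, hx2, w, hw, hj⟩ := mem_filter.1 hx
    exact (hy i x (h3 x hx1 i hx2) w hw hj).1
  let f' : V → Option (Fin 3) := fun z => if h : ∃ i, z ∈ M i then some h.choose else none
  have hf1 : ∀ i z, f' z = some i → z ∈ M i := by
    intro i z hz
    by_cases h : ∃ i, z ∈ M i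
    · simp only [f', h, dite_true, Option.some.injEq] at hz
      rw [← hz]; exact h.choose_spec
    · simp [f', h] at hz
  have hf2 : ∀ i, ∀ z ∈ M i, f' z = some i := by
    intro i z hz
    have h : ∃ i, z ∈ M i := ⟨i, hz⟩
    simp only [f', h, dite_true, Option.some.injEq]
    by_contra hne
    exact Finset.disjoint_left.1 (h2 _ _ hne) (mem_inter.1 (hM _ _ h.choose_spec)).2
      (mem_inter.1 (hM _ _ hz)).2
  have hgood : Good c f' Y := by
    intro i
    calc #{x ∈ Y | f' x = some i} ≤ #(M i) :=
          card_le_card fun z hz => hf1 i z (mem_filter.1 hz).2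
      _ ≤ #{x ∈ X | f x = some i ∧ Att i x} := card_image_le
      _ ≤ #{x ∈ X | f x = some i} := card_le_card fun z hz => by
          simp only [mem_filter] at hz ⊢; exact ⟨hz.1, hz.2.1⟩
      _ ≤ c i := hf i
  obtain ⟨D, d1, d2, d3, d4⟩ := hR f' hgood
  rw [← hY] at d1 d3 d4
  -- a vertex of `C i` that reaches `Y` inside `C i`
  have hA : ∀ i x z, x ∈ C i → ¬ Att i x → Jn (add G Y) (C i) x z → Jn G (C i \ Y) x z := by
    intro i x z hx hna hj
    induction hj with
    | refl => exact .refl _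
    | @tail b d _ hbd ih =>
      have hbY : b ∉ Y := fun hb => hna ⟨b, mem_inter.2 ⟨hb, hbd.2.1⟩, ih.mono (subset_insert _ _)⟩
      have hbd' : G.Adj b d := hbd.1.2.resolve_right fun h => hbY h.1
      have hbC : b ∈ C i \ Y := mem_sdiff.2 ⟨hbd.2.1, hbY⟩
      have hdY : d ∉ Y := fun hd => hna ⟨d, mem_inter.2 ⟨hd, hbd.2.2⟩,
        (ih.mono (subset_insert _ _)).trans
          (.single hbd' (mem_insert_of_mem hbC) (mem_insert_self _ _))⟩
      exact ih.trans (.single hbd' hbC (mem_sdiff.2 ⟨hbd.2.2, hdY⟩))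
  have hB : ∀ i x z, z ∈ C i → Att i x → Jn (add G Y) (C i) x z → Att i z := by
    intro i x z hz hax hj
    by_contra hna
    obtain ⟨w, hw, hj'⟩ := hax
    exact hna ⟨w, hw, ((hA i z x hz hna hj.symm).mono (subset_insert _ _)).trans hj'⟩
  have hyM : ∀ x ∈ X, ∀ i, f x = some i → Att i x → y i x ∈ M i := fun x hx i hi ha =>
    mem_image_of_mem _ (mem_filter.2 ⟨hx, hi, ha⟩)
  have hMY : ∀ i, ∀ z ∈ M i, z ∈ Y := fun i z hz => (mem_inter.1 (hM i z hz)).1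
  refine ⟨fun i => (C i \ Y) ∪ D i, fun i => ?_, fun i j hij => ?_, fun x hx i hi => ?_,
    fun x hx x' hx' i hi hi' => ?_⟩
  · refine union_subset ?_ ((d1 i).trans ?_)
    · exact sdiff_subset.trans ((h1 i).trans (by rw [union_assoc]; exact subset_union_left))
    · rw [union_assoc]; exact subset_union_right
  · have key : ∀ i j, Disjoint (C i \ Y) (D j) := by
      intro i j
      rw [Finset.disjoint_left]
      intro z hz hz'
      obtain ⟨z1, z2⟩ := mem_sdiff.1 hz
      rcases mem_union.1 (d1 j hz') with h | h
      · exact Finset.disjoint_left.1 hd (h1 i z1) h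
      · exact z2 h
    rw [disjoint_union_left, disjoint_union_right, disjoint_union_right]
    exact ⟨⟨(h2 i j hij).mono sdiff_subset sdiff_subset, key i j⟩, (key j i).symm, d2 i j hij⟩
  · have hxC := h3 x hx i hi
    by_cases hxY : x ∈ Y
    · have ha : Att i x := ⟨x, mem_inter.2 ⟨hxY, hxC⟩, .refl _⟩
      have e : y i x = x := by
        obtain ⟨w, hw, hj⟩ := ha
        exact (hy i x hxC w hw hj).2.2 hxY
      have := hyM x hx i hi ha
      rw [e] at this
      exact mem_union_right _ (d3 x hxY i (hf2 i x this))
    · exact mem_union_left _ (mem_sdiff.2 ⟨hxC, hxY⟩)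
  · have hxC := h3 x hx i hi
    have hxC' := h3 x' hx' i hi'
    have hj := h4 x hx x' hx' i hi hi'
    have toM : ∀ x ∈ X, f x = some i → Att i x → Jn G ((C i \ Y) ∪ D i) x (y i x) := by
      intro x hx hi ha
      have hm := hyM x hx i hi ha
      have hm' := d3 _ (hMY _ _ hm) i (hf2 _ _ hm)
      obtain ⟨w, hw, hj⟩ := ha
      refine (hy i x (h3 x hx i hi) w hw hj).2.1.mono ?_
      intro z hz
      rcases mem_insert.1 hz with rfl | hz
      · exact mem_union_right _ hm'
      · exact mem_union_left _ hz
    by_cases ha : Att i x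
    · have ha' := hB i x x' hxC' ha hj
      have hm := hyM x hx i hi ha
      have hm' := hyM x' hx' i hi' ha'
      exact (toM x hx hi ha).trans (((d4 _ (hMY _ _ hm) _ (hMY _ _ hm') i (hf2 _ _ hm)
        (hf2 _ _ hm')).mono subset_union_right).trans (toM x' hx' hi' ha').symm)
    · exact (hA i x x' hxC ha hj).mono subset_union_left

/-- A realisation near `Z` is extended along disjoint connected sets `P x` to a realisation rooted
at `X`. -/
theorem transport {G : SimpleGraph V} {U X Z : Finset V} {t : V → V} {P : V → Finset V}
    (hZ : Z ⊆ U)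
    (h1 : ∀ x ∈ X, x ∈ P x ∧ Jn G (P x) x (t x) ∧ P x ⊆ U \ Z ∧ t x ∈ P x ∧ t x ∈ bd G U Z ∧
        ∀ z ∈ P x, z ∈ bd G U Z → z = t x)
    (h2 : ∀ x ∈ X, ∀ y ∈ X, x ≠ y → Disjoint (P x) (P y)) {f f' : V → Option (Fin 3)}
    (hf : ∀ x ∈ X, f' (t x) = f x) (h : Solv G (Z ∪ bd G U Z) (X.image t) f') :
    Solv G U X f := by
  obtain ⟨C, c1, c2, c3, c4⟩ := h
  let Q : Fin 3 → Finset V := fun i => ({x ∈ X | f x = some i}).biUnion P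
  have hQ : ∀ i z, z ∈ Q i → ∃ x ∈ X, f x = some i ∧ z ∈ P x := by
    intro i z hz
    obtain ⟨x, hx, hz⟩ := mem_biUnion.1 hz
    exact ⟨x, (mem_filter.1 hx).1, (mem_filter.1 hx).2, hz⟩
  have hPQ : ∀ x ∈ X, ∀ i, f x = some i → P x ⊆ Q i := fun x hx i hi z hz =>
    mem_biUnion.2 ⟨x, mem_filter.2 ⟨hx, hi⟩, hz⟩
  have htC : ∀ x ∈ X, ∀ i, f x = some i → t x ∈ C i := fun x hx i hi =>
    c3 _ (mem_image_of_mem _ hx) i ((hf x hx).trans hi)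
  have key : ∀ i j, i ≠ j → Disjoint (C i) (Q j) := by
    intro i j hij
    rw [Finset.disjoint_left]
    intro z hz hz'
    obtain ⟨x, hx, hj, hzP⟩ := hQ j z hz'
    have hzb : z ∈ bd G U Z := by
      rcases mem_union.1 (c1 i hz) with h | h
      · exact absurd h (mem_sdiff.1 ((h1 x hx).2.2.1 hzP)).2
      · exact h
    have := (h1 x hx).2.2.2.2.2 z hzP hzb
    subst this
    exact Finset.disjoint_left.1 (c2 i j hij) hz (htC x hx j hj)
  refine ⟨fun i => C i ∪ Q i, fun i => ?_, fun i j hij => ?_, fun x hx i hi => ?_,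
    fun x hx y hy i hi hj => ?_⟩
  · refine union_subset ((c1 i).trans (union_subset hZ bd_subset)) ?_
    intro z hz
    obtain ⟨x, hx, hj, hzP⟩ := hQ i z hz
    exact (mem_sdiff.1 ((h1 x hx).2.2.1 hzP)).1
  · rw [disjoint_union_left, disjoint_union_right, disjoint_union_right]
    refine ⟨⟨c2 i j hij, key i j hij⟩, (key j i hij.symm).symm, ?_⟩
    rw [Finset.disjoint_left]
    intro z hz hz'
    obtain ⟨x, hx, hi, hzP⟩ := hQ i z hz
    obtain ⟨y, hy, hj, hzP'⟩ := hQ j z hz'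
    refine Finset.disjoint_left.1 (h2 x hx y hy ?_) hzP hzP'
    rintro rfl
    rw [hi] at hj
    exact hij (Option.some.inj hj)
  · exact mem_union_right _ (hPQ x hx i hi (h1 x hx).1)
  · have toT : ∀ x ∈ X, f x = some i → Jn G (C i ∪ Q i) x (t x) := fun x hx hi =>
      (h1 x hx).2.1.mono ((hPQ x hx i hi).trans subset_union_right)
    exact (toT x hx hi).trans (((c4 _ (mem_image_of_mem _ hx) _ (mem_image_of_mem _ hy) i
      ((hf x hx).trans hi) ((hf y hy).trans hj)).mono subset_union_left).trans (toT y hy hj).symm)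

/-! ### A minimal counterexample to the linking theorem -/

/-- The linking theorem with parameters `c`, `L`, `N` for vertex sets with fewer than `n` elements:
if at most `N` vertices are labelled and the pair is massed, every labelling with class sizes bounded
by `c` is realised. -/
def IH (V : Type) (c : Fin 3 → ℕ) (L N n : ℕ) : Prop :=
  ∀ (G : SimpleGraph V) (U X : Finset V) (f : V → Option (Fin 3)), #U < n → #X ≤ N →
    Massed L G U X → Good c f X → Solv G U X f

theorem IH.rigid {c : Fin 3 → ℕ} {L N n : ℕ} (h : IH V c L N n) {G : SimpleGraph V}
    {U Y : Finset V} (hn : #(Y ∪ bd G U Y) < n) (hN : #(bd G U Y) ≤ N)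
    (hM : Massed L G (Y ∪ bd G U Y) (bd G U Y)) : Rigid c G U Y :=
  fun f hf => h G _ _ f hn hN hM hf

theorem mem_add {G : SimpleGraph V} {Y : Finset V} {a b : V} :
    (add G Y).Adj a b ↔ a ≠ b ∧ (G.Adj a b ∨ (a ∈ Y ∧ b ∈ Y)) := Iff.rfl

/-- A minimal counterexample has no nonempty rigid set `Z` with at most `#X` boundary vertices that
meets at most `L * #Z / 2` edges: for a largest such `Z`, deleting `Z` and making its boundary complete
leaves a massed pair, and `lift` applies. -/
theorem noRigid {c : Fin 3 → ℕ} {L N : ℕ} {G : SimpleGraph V} {U X : Finset V}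
    {f : V → Option (Fin 3)} (hIH : IH V c L N #U) (hN : #X ≤ N) (hM : Massed L G U X)
    (hf : Good c f X) (hns : ¬ Solv G U X f) :
    ∀ Z ⊆ U \ X, Z.Nonempty → #(bd G U Z) ≤ #X → rr G U Z ≤ L * #Z → ¬ Rigid c G U Z := by
  by_contra hcon
  push Not at hcon
  obtain ⟨Z0, h01, h02, h03, h04, h05⟩ := hcon
  let F := {Z ∈ (U \ X).powerset | Z.Nonempty ∧ #(bd G U Z) ≤ #X ∧ rr G U Z ≤ L * #Z ∧
    Rigid c G U Z}
  obtain ⟨Z, hZF, hmax⟩ := exists_max_image F card ⟨Z0, by simp [F, *]⟩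
  simp only [F, mem_filter, mem_powerset] at hZF hmax
  obtain ⟨hZA, hZne, hZb, hZr, hZR⟩ := hZF
  have hZU : Z ⊆ U := hZA.trans sdiff_subset
  have hXZ : ∀ x ∈ X, x ∉ Z := fun x hx h => (mem_sdiff.1 (hZA h)).2 hx
  set G' := add G (bd G U Z) with hG'
  have hcardU : #(U \ Z) < #U := by
    have := card_sdiff_add_card_eq_card hZU
    have := card_pos.2 hZne
    omega
  have hA : (U \ Z) \ X = (U \ X) \ Z := by ext; simp; tauto
  have hd : Disjoint (U \ Z) Z := sdiff_disjoint
  have hUZ : U \ Z ∪ Z ∪ bd G U Z ⊆ U :=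
    union_subset (union_subset sdiff_subset hZU) bd_subset
  have hM' : Massed L G' (U \ Z) X := by
    refine ⟨fun x hx => mem_sdiff.2 ⟨hM.sub hx, hXZ x hx⟩, ?_, ?_⟩
    · have h1 : rr G U (U \ X) ≤ rr G U Z + rr G (U \ Z) ((U \ Z) \ X) := by
        refine le_trans (card_le_card ?_) (card_union_le _ _)
        intro p
        simp only [mem_filter, mem_union, mem_product, mem_sdiff]
        tauto
      have h2 : rr G (U \ Z) ((U \ Z) \ X) ≤ rr G' (U \ Z) ((U \ Z) \ X) :=
        rr_mono (le_add _ _) subset_rfl subset_rfl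
      have h3 := card_sdiff_add_card_eq_card hZA
      have h4 := hM.mass
      rw [hA] at h1 h2 ⊢
      have h5 : L * #(U \ X) = L * #((U \ X) \ Z) + L * #Z := by rw [← h3, mul_add]
      omega
    · intro Y0 hY0 hlt0
      by_contra hr0
      push Not at hr0
      have hXpos : 0 < #X := by omega
      obtain ⟨Y, hYY, hYb, hYr, hYM⟩ := exists_massed (m := #X - 1) (hY0.trans sdiff_subset)
        (by omega) hr0
      have hYUZ : Y ⊆ U \ Z := (hYY.trans hY0).trans sdiff_subset
      have hYA : Y ⊆ U \ X := (hYY.trans hY0).trans (by rw [hA]; exact sdiff_subset)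
      have hYne := nonempty_of_mass hYr
      have hYR : Rigid c G' (U \ Z) Y := hIH.rigid
        ((card_le_card (union_subset hYUZ bd_subset)).trans_lt hcardU) (by omega) hYM
      have hYZ : ∀ y ∈ Y, y ∉ Z := fun y hy => (mem_sdiff.1 (hYUZ hy)).2
      -- if `Y` meets the boundary of `Z`, then `Z ∪ Y` is rigid, against the choice of `Z`;
      -- otherwise `Y` violates `small` already in `G`
      by_cases hint : ∃ y0 ∈ Y, y0 ∈ bd G U Z
      · obtain ⟨y0, hy0, hy0b⟩ := hint
        have hbe : bd G U (Z ∪ Y) = bd G' (U \ Z) Y := by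
          ext u
          simp only [mem_bd, mem_union, mem_sdiff, not_or]
          constructor
          · rintro ⟨hu, ⟨huZ, huY⟩, w, hw, huw⟩
            refine ⟨⟨hu, huZ⟩, huY, ?_⟩
            rcases hw with hw | hw
            · exact ⟨y0, hy0, fun h => huY (h ▸ hy0), .inr ⟨mem_bd.2 ⟨hu, huZ, w, hw, huw⟩, hy0b⟩⟩
            · exact ⟨w, hw, huw.ne, .inl huw⟩
          · rintro ⟨⟨hu, huZ⟩, huY, w, hw, -, huw⟩
            refine ⟨hu, ⟨huZ, huY⟩, ?_⟩
            rcases huw with huw | huw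
            · exact ⟨w, .inr hw, huw⟩
            · obtain ⟨-, -, z, hz, huz⟩ := mem_bd.1 huw.1
              exact ⟨z, .inl hz, huz⟩
        have hbig := hmax (Z ∪ Y) ⟨union_subset hZA hYA, hZne.mono subset_union_left,
          by rw [hbe]; omega, hM.small _ (union_subset hZA hYA) (by rw [hbe]; omega), by
            intro g hg
            rw [hbe] at hg ⊢
            have := lift (U2 := Y ∪ bd G' (U \ Z) Y) hZR
              (hd.mono_left (union_subset hYUZ bd_subset)) hg (hYR g hg)
            refine this.mono le_rfl ?_ subset_rfl (fun _ _ _ h => h)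
            intro z hz
            simp only [mem_union] at hz ⊢
            rcases hz with ((h | h) | h) | h
            · exact .inl (.inr h)
            · exact .inr h
            · exact .inl (.inl h)
            · by_cases hzY : z ∈ Y
              · exact .inl (.inr hzY)
              · obtain ⟨z1, z2, -⟩ := mem_bd.1 h
                exact .inr (mem_bd.2 ⟨mem_sdiff.2 ⟨z1, z2⟩, hzY, y0, hy0,
                  fun h' => hzY (h' ▸ hy0), .inr ⟨h, hy0b⟩⟩)⟩
        rw [card_union_of_disjoint (Finset.disjoint_left.2 fun z hz hz' => hYZ z hz' hz)] at hbig
        have := card_pos.2 hYne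
        omega
      · push Not at hint
        have e1 : ∀ a y, y ∈ Y → (G'.Adj a y ↔ G.Adj a y) := fun a y hy =>
          ⟨fun h => h.2.resolve_right fun h' => hint y hy h'.2, fun h => ⟨h.ne, .inl h⟩⟩
        have e2 : ∀ a ∈ U, ∀ y ∈ Y, G.Adj a y → a ∉ Z := fun a ha y hy h haZ =>
          hint y hy (mem_bd.2 ⟨(mem_sdiff.1 (hYUZ hy)).1, hYZ y hy, a, haZ, h.symm⟩)
        have hbs : bd G U Y ⊆ bd G' (U \ Z) Y := by
          intro u hu
          obtain ⟨h1, h2, w, hw, h3⟩ := mem_bd.1 hu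
          exact mem_bd.2 ⟨mem_sdiff.2 ⟨h1, e2 u h1 w hw h3⟩, h2, w, hw, (e1 u w hw).2 h3⟩
        have hrs : rr G' (U \ Z) Y ≤ rr G U Y := by
          apply card_le_card
          intro p
          simp only [mem_filter, mem_product, mem_sdiff]
          rintro ⟨⟨h1, h2⟩, h3, h4⟩
          refine ⟨⟨h1.1, h2.1⟩, ?_, h4⟩
          rcases h4 with h4 | h4
          · exact ((e1 _ _ h4).1 h3.symm).symm
          · exact (e1 _ _ h4).1 h3
        have := hM.small Y hYA (by have := card_le_card hbs; omega)
        omega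
  have hs := hIH G' (U \ Z) X f hcardU hN hM' hf
  exact hns ((lift hZR hd hf hs).mono le_rfl hUZ subset_rfl (fun _ _ _ h => h))

/-- A labelling of `X` pushed forward along an injection. -/
theorem exists_push {X : Finset V} {t : V → V} (ht : Set.InjOn t X) (f : V → Option (Fin 3)) :
    ∃ f' : V → Option (Fin 3), (∀ x ∈ X, f' (t x) = f x) ∧
      ∀ c, Good c f X → Good c f' (X.image t) := by
  refine ⟨fun z => if h : ∃ x ∈ X, t x = z then f h.choose else none, ?_⟩
  have h1 : ∀ x ∈ X, (if h : ∃ x' ∈ X, t x' = t x then f h.choose else none) = f x := by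
    intro x hx
    have h : ∃ x' ∈ X, t x' = t x := ⟨x, hx, rfl⟩
    rw [dif_pos h, ht h.choose_spec.1 hx h.choose_spec.2]
  refine ⟨h1, fun c hc i => ?_⟩
  refine le_trans ?_ (hc i)
  refine le_trans (card_le_card (t := ({x ∈ X | f x = some i}).image t) ?_) card_image_le
  intro z hz
  obtain ⟨hz, hi⟩ := mem_filter.1 hz
  obtain ⟨x, hx, rfl⟩ := mem_image.1 hz
  exact mem_image_of_mem _ (mem_filter.2 ⟨hx, (h1 x hx).symm.trans hi⟩)

/-- If the labellings of small subsets of the boundary of `Z` are realised near `Z`, and `X` cannot be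
separated from `Z` by fewer than `#X` vertices, then the labellings of `X` are realised. -/
theorem push_via {c : Fin 3 → ℕ} {G : SimpleGraph V} {U X Z T0 : Finset V} {m : ℕ}
    (hX : X ⊆ U) (hZ : Z ⊆ U \ X) (hc : ∀ W, Z ⊆ W → W ⊆ U \ X → #X ≤ #(bd G U W))
    (hm : #X ≤ m) (hT0 : ∀ x ∈ bd G U Z, x ∈ T0 → x ∈ X)
    (hQ : ∀ T ⊆ bd G U Z, (∀ x ∈ bd G U Z, x ∈ T0 → x ∈ T) → #T ≤ m → ∀ f, Good c f T →
      Solv G (Z ∪ bd G U Z) T f) :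
    ∀ f, Good c f X → Solv G U X f := by
  intro f hf
  obtain ⟨t, P, h1, h2⟩ := linking _ G U X Z le_rfl hX hZ hc
  have ht : Set.InjOn t X := by
    intro x hx y hy h
    by_contra hne
    exact Finset.disjoint_left.1 (h2 x hx y hy hne) (h1 x hx).2.2.2.1
      (h ▸ (h1 y hy).2.2.2.1)
  obtain ⟨f', hf', hg⟩ := exists_push ht f
  refine transport (hZ.trans sdiff_subset) h1 h2 hf' (hQ _ ?_ ?_ (card_image_le.trans hm) f' (hg c hf))
  · intro z hz
    obtain ⟨x, hx, rfl⟩ := mem_image.1 hz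
    exact (h1 x hx).2.2.2.2.1
  · intro x hx hx'
    have := hT0 x hx hx'
    exact mem_image.2 ⟨x, this, ((h1 x this).2.2.2.2.2 x (h1 x this).1 hx).symm⟩

/-- In a minimal counterexample no nonempty `Z ⊆ U \ X` realises all labellings of sets `T` of at most
`#X` boundary vertices containing those in `X`. For `W ⊇ Z` with fewest boundary vertices, either `X`
is linked to `Z` by `linking`, or `W` is rigid, against `noRigid`. -/
theorem core {c : Fin 3 → ℕ} {L N : ℕ} {G : SimpleGraph V} {U X : Finset V}
    {f : V → Option (Fin 3)} (hIH : IH V c L N #U) (hN : #X ≤ N) (hM : Massed L G U X)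
    (hf : Good c f X) (hns : ¬ Solv G U X f) {Z : Finset V} (hZ : Z ⊆ U \ X) (hZne : Z.Nonempty)
    (hQ : ∀ T ⊆ bd G U Z, (∀ x ∈ bd G U Z, x ∈ X → x ∈ T) → #T ≤ #X → ∀ f, Good c f T →
      Solv G (Z ∪ bd G U Z) T f) : False := by
  obtain ⟨W, hWF, hmin⟩ := exists_min_image {W ∈ (U \ X).powerset | Z ⊆ W}
    (fun W => #(bd G U W)) ⟨Z, by simp [hZ]⟩
  simp only [mem_filter, mem_powerset] at hWF hmin
  obtain ⟨hWA, hZW⟩ := hWF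
  have hWU : W ⊆ U := hWA.trans sdiff_subset
  by_cases hlt : #(bd G U W) < #X
  · refine noRigid hIH hN hM hf hns W hWA (hZne.mono hZW) hlt.le (hM.small W hWA hlt) ?_
    have e := bd_sub (G := G) hWU hZW
    refine push_via (Z := Z) (m := #X) (T0 := X) subset_union_right (by rwa [sub_sdiff_bd]) ?_ hlt.le
      ?_ ?_
    · intro W' h h'
      rw [sub_sdiff_bd] at h'
      rw [bd_sub hWU h']
      exact hmin W' ⟨h'.trans hWA, h⟩
    · intro x hx hxX
      rw [e] at hx
      obtain ⟨h1, -, w, hw, h3⟩ := mem_bd.1 hx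
      exact mem_bd.2 ⟨h1, fun h => (mem_sdiff.1 (hWA h)).2 hxX, w, hZW hw, h3⟩
    · rw [e]; exact hQ
  · exact hns (push_via hM.sub hZ (fun W' h h' => by have := hmin W' ⟨h', h⟩; omega) le_rfl
      (fun _ _ h => h) hQ f hf)

/-- A rigid set realises the labellings of every part of its boundary. -/
theorem Rigid.sub {c : Fin 3 → ℕ} {G : SimpleGraph V} {U Z T : Finset V} (h : Rigid c G U Z)
    (hT : T ⊆ bd G U Z) {f : V → Option (Fin 3)} (hf : Good c f T) :
    Solv G (Z ∪ bd G U Z) T f := by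
  refine (h (fun z => if z ∈ T then f z else none) fun i => ?_).mono le_rfl subset_rfl hT ?_
  · refine le_trans (card_le_card ?_) (hf i)
    intro z hz
    simp only [mem_filter] at hz ⊢
    split_ifs at hz with h
    · exact ⟨h, hz.2⟩
    · simp at hz
  · intro x hx i hi
    simpa [hx] using hi

/-- In a minimal counterexample every proper subset of `U \ X` with at most `#X` boundary vertices meets
few edges, since otherwise it contains a rigid set excluded by `core`. -/
theorem tight {c : Fin 3 → ℕ} {L N : ℕ} {G : SimpleGraph V} {U X : Finset V}
    {f : V → Option (Fin 3)} (hIH : IH V c L N #U) (hN : #X ≤ N) (hM : Massed L G U X)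
    (hf : Good c f X) (hns : ¬ Solv G U X f) {Z : Finset V} (hZ : Z ⊆ U \ X) (hZA : Z ≠ U \ X)
    (hb : #(bd G U Z) ≤ #X) : rr G U Z ≤ L * #Z := by
  by_contra hr
  push Not at hr
  obtain ⟨Y, hYZ, hYb, hYr, hYM⟩ := exists_massed (hZ.trans sdiff_subset) hb hr
  have hlt : #Z < #(U \ X) := card_lt_card (hZ.ssubset_of_ne hZA)
  have e1 := card_sdiff_add_card_eq_card hM.sub
  have e2 := card_le_card hYZ
  have e3 := card_union_le Y (bd G U Y)
  have hYR : Rigid c G U Y := hIH.rigid (by omega) (by omega) hYM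
  exact core hIH hN hM hf hns (hYZ.trans hZ) (nonempty_of_mass hYr)
    fun T hT _ _ g hg => hYR.sub hT hg

/-- Undoing a contraction keeps solvability. -/
theorem Solv.of_con {G : SimpleGraph V} {u w : V} (huw : G.Adj u w) {U X : Finset V}
    (hu : u ∉ U) {f : V → Option (Fin 3)} (h : Solv (con G u w) U X f) :
    Solv G (insert u U) X f := by
  obtain ⟨C, h1, h2, h3, h4⟩ := h
  have huC : ∀ i, u ∉ C i := fun i h => hu (h1 i h)
  refine ⟨fun i => if w ∈ C i then insert u (C i) else C i, fun i => ?_, fun i j hij => ?_,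
    fun x hx i hi => ?_, fun x hx y hy i hi hj => ?_⟩
  · dsimp only; split_ifs
    · exact insert_subset_insert _ (h1 i)
    · exact (h1 i).trans (subset_insert _ _)
  · dsimp only; split_ifs with a b b
    · exact absurd b (Finset.disjoint_left.1 (h2 i j hij) a)
    · exact disjoint_insert_left.2 ⟨huC j, h2 i j hij⟩
    · exact disjoint_insert_right.2 ⟨huC i, h2 i j hij⟩
    · exact h2 i j hij
  · dsimp only; split_ifs
    · exact mem_insert_of_mem (h3 x hx i hi)
    · exact h3 x hx i hi
  · dsimp only; split_ifs with a
    · exact (h4 x hx y hy i hi hj).of_con huw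
    · exact (h4 x hx y hy i hi hj).of_con' a

/-- Ordered edges of `G` other than `uw` and those in triangles with `uw` stay distinct after contracting
`u` into `w`. -/
theorem con_inj1 {G : SimpleGraph V} {u w a b a' b' : V} (h3 : G.Adj a b) (g3 : G.Adj a' b')
    (h5 : a = u → b ≠ w ∧ ¬ G.Adj b w) (h6 : b = u → a ≠ w ∧ ¬ G.Adj a w)
    (g5 : a' = u → b' ≠ w ∧ ¬ G.Adj b' w) (g6 : b' = u → a' ≠ w ∧ ¬ G.Adj a' w)
    (he1 : (if a = u then w else a) = if a' = u then w else a')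
    (he2 : (if b = u then w else b) = if b' = u then w else b') : a = a' ∧ b = b' := by
  have n1 := h3.ne
  have n2 := g3.ne
  have s1 := h3.symm
  have s2 := g3.symm
  by_cases ha : a = u
  · have hb : b ≠ u := fun h => n1 (ha.trans h.symm)
    rw [if_pos ha, if_neg hb] at *
    split_ifs at he1 he2 <;> grind
  · rw [if_neg ha] at *
    split_ifs at he1 he2 <;> grind

/-- An injection from the ordered edges of the contracted graph to those of `G`. -/
theorem con_inj2 {G : SimpleGraph V} {u w a b a' b' : V} (h1 : a ≠ u) (h2 : b ≠ u)
    (g1 : a' ≠ u) (g2 : b' ≠ u) (h5 : G.Adj a b ∨ a = w ∧ G.Adj u b ∨ b = w ∧ G.Adj u a)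
    (g5 : G.Adj a' b' ∨ a' = w ∧ G.Adj u b' ∨ b' = w ∧ G.Adj u a')
    (he : (if G.Adj a b then (a, b) else if a = w then (u, b) else (a, u)) =
      if G.Adj a' b' then (a', b') else if a' = w then (u, b') else (a', u)) :
    a = a' ∧ b = b' := by
  by_cases hab : G.Adj a b <;> by_cases hab' : G.Adj a' b' <;> by_cases haw : a = w <;>
    by_cases haw' : a' = w <;>
    simp only [hab, hab', haw, haw', if_true, if_false, Prod.mk.injEq] at he <;> grind

/-- In a minimal counterexample every edge `uw` with `u ∉ X` lies in many triangles, since contracting it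
must lose more than `L / 2` edges. Edges inside `X` are not counted by `Massed`, so the neighbours of
`u` in `X` are lost too when `w ∈ X`. -/
theorem contr {c : Fin 3 → ℕ} {L N : ℕ} {G : SimpleGraph V} {U X : Finset V}
    {f : V → Option (Fin 3)} (hIH : IH V c L N #U) (hN : #X ≤ N) (hM : Massed L G U X)
    (hf : Good c f X) (hns : ¬ Solv G U X f) {u w : V} (hu : u ∈ U \ X) (hw : w ∈ U)
    (huw : G.Adj u w) :
    L + 1 ≤ 2 * #{b ∈ U | G.Adj u b ∧ (b = w ∨ G.Adj b w ∨ (w ∈ X ∧ b ∈ X))} := by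
  by_contra hlt
  push Not at hlt
  obtain ⟨huU, huX⟩ := mem_sdiff.1 hu
  set G' := con G u w with hG'
  set D := {b ∈ U | G.Adj u b ∧ (b = w ∨ G.Adj b w ∨ (w ∈ X ∧ b ∈ X))} with hD
  have hcU : #(U.erase u) < #U := card_erase_lt_of_mem huU
  have hXU : X ⊆ U.erase u := fun x hx => mem_erase.2 ⟨fun h => huX (h ▸ hx), hM.sub hx⟩
  have hle : ∀ a b, G.Adj a b → G'.Adj a b := fun a b h => ⟨h.ne, .inl h⟩
  have hM' : Massed L G' (U.erase u) X := by
    refine ⟨hXU, ?_, ?_⟩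
    · have hkey : rr G U (U \ X) ≤ rr G' (U.erase u) (U.erase u \ X) + (#D + #D) := by
        have : rr G U (U \ X) ≤ rr G' (U.erase u) (U.erase u \ X) +
            #(D.image (fun b => (u, b)) ∪ D.image (fun b => (b, u))) := by
          let φ : V × V → V × V := fun p => (if p.1 = u then w else p.1, if p.2 = u then w else p.2)
          rw [rr]
          have hsub : #{p ∈ U ×ˢ U | G.Adj p.1 p.2 ∧ (p.1 ∈ U \ X ∨ p.2 ∈ U \ X)} ≤
              #({p ∈ U ×ˢ U | G.Adj p.1 p.2 ∧ (p.1 ∈ U \ X ∨ p.2 ∈ U \ X)} \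
                (D.image (fun b => (u, b)) ∪ D.image (fun b => (b, u)))) +
              #(D.image (fun b => (u, b)) ∪ D.image (fun b => (b, u))) :=
            card_le_card_sdiff_add_card
          refine hsub.trans (Nat.add_le_add_right ?_ _)
          have hmem : ∀ p ∈ ({p ∈ U ×ˢ U | G.Adj p.1 p.2 ∧ (p.1 ∈ U \ X ∨ p.2 ∈ U \ X)} \
              (D.image (fun b => (u, b)) ∪ D.image (fun b => (b, u)))),
              p.1 ∈ U ∧ p.2 ∈ U ∧ G.Adj p.1 p.2 ∧ (p.1 ∉ X ∨ p.2 ∉ X) ∧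
              (p.1 = u → p.2 ≠ w ∧ ¬ G.Adj p.2 w ∧ ¬ (w ∈ X ∧ p.2 ∈ X)) ∧
              (p.2 = u → p.1 ≠ w ∧ ¬ G.Adj p.1 w ∧ ¬ (w ∈ X ∧ p.1 ∈ X)) := by
            rintro ⟨a, b⟩ hp
            simp only [mem_sdiff, mem_filter, mem_product, mem_union, mem_image, hD, not_or,
              not_exists, not_and, Prod.mk.injEq] at hp ⊢
            obtain ⟨⟨⟨h1, h2⟩, h3, h4⟩, h5, h6⟩ := hp
            refine ⟨h1, h2, h3, h4.imp (·.2) (·.2), ?_, ?_⟩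
            · rintro rfl
              have := fun h => h5 b ⟨h2, h3, h⟩ rfl
              simp only [imp_false] at this
              tauto
            · rintro rfl
              have := fun h => h6 a ⟨h1, h3.symm, h⟩
              simp only [forall_true_left] at this
              tauto
          apply card_le_card_of_injOn φ
          · rintro ⟨a, b⟩ hp
            obtain ⟨h1, h2, h3, h4, h5, h6⟩ := hmem _ hp
            dsimp only at h1 h2 h3 h4 h5 h6
            simp only [φ, coe_filter, Set.mem_ofPred_eq, mem_product, mem_erase, mem_sdiff]
            have hwu : w ≠ u := huw.ne.symm
            by_cases ha : a = u
            · subst ha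
              have hb : b ≠ a := h3.ne.symm
              obtain ⟨h7, h8, h9⟩ := h5 rfl
              simp only [hb, if_true, if_false]
              refine ⟨⟨⟨hwu, hw⟩, hb, h2⟩, ⟨h7.symm, .inr (.inl ⟨rfl, h3⟩)⟩, ?_⟩
              tauto
            · by_cases hb : b = u
              · subst hb
                obtain ⟨h7, h8, h9⟩ := h6 rfl
                simp only [ha, if_true, if_false]
                refine ⟨⟨⟨ha, h1⟩, hwu, hw⟩, ⟨h7, .inr (.inr ⟨rfl, h3.symm⟩)⟩, ?_⟩
                tauto
              · simp only [ha, hb, if_false]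
                refine ⟨⟨⟨ha, h1⟩, hb, h2⟩, hle _ _ h3, ?_⟩
                tauto
          · rintro ⟨a, b⟩ hp ⟨a', b'⟩ hp' he
            obtain ⟨h1, h2, h3, h4, h5, h6⟩ := hmem _ hp
            obtain ⟨g1, g2, g3, g4, g5, g6⟩ := hmem _ hp'
            dsimp only at h1 h2 h3 h4 h5 h6 g1 g2 g3 g4 g5 g6
            simp only [φ, Prod.mk.injEq] at he
            obtain ⟨rfl, rfl⟩ := con_inj1 (u := u) (w := w) h3 g3 (fun h => ⟨(h5 h).1, (h5 h).2.1⟩)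
              (fun h => ⟨(h6 h).1, (h6 h).2.1⟩) (fun h => ⟨(g5 h).1, (g5 h).2.1⟩)
              (fun h => ⟨(g6 h).1, (g6 h).2.1⟩) he.1 he.2
            rfl
        have h2 := card_union_le (D.image (fun b => (u, b))) (D.image (fun b => (b, u)))
        have h3 : #(D.image (fun b => (u, b))) ≤ #D := card_image_le
        have h4 : #(D.image (fun b => (b, u))) ≤ #D := card_image_le
        omega
      have e : U.erase u \ X = (U \ X).erase u := by ext; simp; tauto
      have e2 : #(U.erase u \ X) + 1 = #(U \ X) := by rw [e, card_erase_add_one hu]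
      have := hM.mass
      rw [← e2, mul_add, mul_one] at this
      omega
    · intro Y0 hY0 hlt0
      by_contra hr0
      push Not at hr0
      obtain ⟨Y, hYY, hYb, hYr, hYM⟩ := exists_massed (m := #X - 1) (hY0.trans sdiff_subset)
        (by omega) hr0
      have hYU : Y ⊆ U.erase u := (hYY.trans hY0).trans sdiff_subset
      have hYA : Y ⊆ U \ X := fun y hy => by
        have := hY0 (hYY hy)
        simp only [mem_sdiff, mem_erase] at this ⊢
        exact ⟨this.1.2, this.2⟩
      have huY : u ∉ Y := fun h => by simpa using hYU h
      have hYR : Rigid c G' (U.erase u) Y := hIH.rigid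
        ((card_le_card (union_subset hYU bd_subset)).trans_lt hcU) (by omega) hYM
      by_cases hwY : w ∈ Y
      · have hbe : bd G U (insert u Y) = bd G' (U.erase u) Y := by
          ext z
          simp only [mem_bd, mem_insert, mem_erase, not_or]
          constructor
          · rintro ⟨h1, ⟨h2, h3⟩, y, rfl | hy, h4⟩
            · exact ⟨⟨h2, h1⟩, h3, w, hwY, fun h => h3 (h ▸ hwY), .inr (.inr ⟨rfl, h4.symm⟩)⟩
            · exact ⟨⟨h2, h1⟩, h3, y, hy, hle _ _ h4⟩
          · rintro ⟨⟨h2, h1⟩, h3, y, hy, -, h4⟩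
            refine ⟨h1, ⟨h2, h3⟩, ?_⟩
            rcases h4 with h4 | h4 | h4
            · exact ⟨y, .inr hy, h4⟩
            · exact absurd (h4.1 ▸ hwY) h3
            · exact ⟨u, .inl rfl, h4.2.symm⟩
        have hiA : insert u Y ⊆ U \ X := insert_subset hu hYA
        have hlt' : #(bd G U (insert u Y)) < #X := by rw [hbe]; omega
        refine noRigid hIH hN hM hf hns (insert u Y) hiA (insert_nonempty _ _) hlt'.le
          (hM.small _ hiA hlt') ?_
        intro g hg
        rw [hbe] at hg ⊢
        rw [insert_union]
        refine (hYR g hg).of_con huw ?_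
        intro h
        rcases mem_union.1 h with h | h
        · exact huY h
        · simpa using bd_subset h
      · have hbs : bd G U Y ⊆ insert u (bd G' (U.erase u) Y) := by
          intro z hz
          obtain ⟨h1, h2, y, hy, h3⟩ := mem_bd.1 hz
          by_cases hzu : z = u
          · simp [hzu]
          · exact mem_insert_of_mem (mem_bd.2 ⟨mem_erase.2 ⟨hzu, h1⟩, h2, y, hy, hle _ _ h3⟩)
        have hrs : rr G' (U.erase u) Y ≤ rr G U Y := by
          let ψ : V × V → V × V := fun p => if G.Adj p.1 p.2 then p else
            if p.1 = w then (u, p.2) else (p.1, u)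
          apply card_le_card_of_injOn ψ
          · rintro ⟨a, b⟩ hp
            simp only [coe_filter, mem_product, mem_erase, Set.mem_ofPred_eq] at hp
            obtain ⟨⟨⟨h1, h2⟩, h3, h4⟩, ⟨-, h5⟩, h6⟩ := hp
            simp only [ψ, coe_filter, mem_product, Set.mem_ofPred_eq]
            by_cases hab : G.Adj a b
            · simp [hab, h2, h4, h6]
            · simp only [hab, if_false, false_or] at h5 ⊢
              by_cases haw : a = w
              · subst haw
                have : G.Adj u b := by
                  rcases h5 with h5 | h5
                  · exact h5.2
                  · exact absurd (h5.1) (fun h => by rw [h] at h6; tauto)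
                simp only [if_true]
                exact ⟨⟨huU, h4⟩, this, by tauto⟩
              · have h5 := h5.resolve_left (fun h => haw h.1)
                simp only [haw, if_false]
                refine ⟨⟨h2, huU⟩, h5.2.symm, ?_⟩
                have : b ∉ Y := h5.1 ▸ hwY
                tauto
          · rintro ⟨a, b⟩ hp ⟨a', b'⟩ hp' he
            simp only [coe_filter, mem_product, mem_erase, Set.mem_ofPred_eq] at hp hp'
            obtain ⟨⟨⟨h1, h2⟩, h3, h4⟩, ⟨h0, h5⟩, h6⟩ := hp
            obtain ⟨⟨⟨g1, g2⟩, g3, g4⟩, ⟨g0, g5⟩, g6⟩ := hp'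
            simp only [ψ] at he
            obtain ⟨rfl, rfl⟩ := con_inj2 h1 h3 g1 g3 h5 g5 he
            rfl
        have := tight hIH hN hM hf hns hYA (fun h => huY (h ▸ hu)) (by
          have := card_le_card hbs
          have := card_insert_le u (bd G' (U.erase u) Y)
          omega)
        omega
  have hs := hIH G' (U.erase u) X f hcU hN hM' hf
  refine hns ?_
  have := hs.of_con huw (notMem_erase _ _)
  rwa [insert_erase huU] at this

/-! ### The linking theorem reduced to a neighbourhood of small degree -/

/-- The local form of the linking theorem: if `v` is adjacent to all of `H`, fewer than `L` vertices,
and every vertex of `H` has at least `(L + 1) / 2` neighbours in `H` (itself included, and with the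
terminals `T ⊆ H` regarded as pairwise adjacent), then the labellings of `T` are realised in
`H ∪ {v}`. -/
def Local (V : Type) (c : Fin 3 → ℕ) (L N : ℕ) : Prop :=
  ∀ (G : SimpleGraph V) (v : V) (H T : Finset V) (f : V → Option (Fin 3)),
    (∀ h ∈ H, G.Adj v h) → T ⊆ H → #T ≤ N → #H < L →
    (∀ w ∈ H, w ∉ T → L + 1 ≤ 2 * #{b ∈ H | b = w ∨ G.Adj b w}) →
    (∀ w ∈ T, L + 1 ≤ 2 * #{b ∈ H | b = w ∨ G.Adj b w ∨ b ∈ T}) →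
    Good c f T → Solv G (insert v H) T f

/-- If only one label occurs more than once, a vertex adjacent to all terminals joins that class. -/
theorem star {G : SimpleGraph V} {v : V} {H T : Finset V} {f : V → Option (Fin 3)}
    (hv : ∀ h ∈ H, G.Adj v h) (hT : T ⊆ H) (i0 : Fin 3)
    (h : ∀ i, i ≠ i0 → ∀ x ∈ T, ∀ y ∈ T, f x = some i → f y = some i → x = y) :
    Solv G (insert v H) T f := by
  have hvT : v ∉ T := fun h => (hv v (hT h)).ne rfl
  refine ⟨fun i => if i = i0 then insert v {x ∈ T | f x = some i} else {x ∈ T | f x = some i},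
    fun i => ?_, fun i j hij => ?_, fun x hx i hi => ?_, fun x hx y hy i hi hj => ?_⟩
  · dsimp only; split_ifs
    · exact insert_subset_insert _ ((filter_subset _ _).trans hT)
    · exact ((filter_subset _ _).trans hT).trans (subset_insert _ _)
  · have key : Disjoint ({x ∈ T | f x = some i}) ({x ∈ T | f x = some j}) := by
      rw [Finset.disjoint_left]
      intro z hz hz'
      have := (mem_filter.1 hz).2.symm.trans (mem_filter.1 hz').2
      exact hij (Option.some.inj this)
    dsimp only; split_ifs with a b b
    · exact absurd (a.trans b.symm) hij
    · exact disjoint_insert_left.2 ⟨fun h => hvT (mem_filter.1 h).1, key⟩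
    · exact disjoint_insert_right.2 ⟨fun h => hvT (mem_filter.1 h).1, key⟩
    · exact key
  · dsimp only; split_ifs <;> simp [hx, hi]
  · dsimp only; split_ifs with a
    · exact (Jn.single (hv x (hT hx)).symm (by simp [hx, hi]) (by simp)).trans
        (.single (hv y (hT hy)) (by simp) (by simp [hy, hj]))
    · rw [h i a x hx y hy hi hj]; exact .refl _

/-- Deleting the edge `ab`. -/
def del (G : SimpleGraph V) (a b : V) : SimpleGraph V where
  Adj x y := G.Adj x y ∧ ¬ (x = a ∧ y = b) ∧ ¬ (x = b ∧ y = a)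
  symm := ⟨fun _ _ h => ⟨h.1.symm, fun h' => h.2.2 h'.symm, fun h' => h.2.1 h'.symm⟩⟩
  loopless := ⟨fun _ h => h.1.ne rfl⟩

theorem del_adj {G : SimpleGraph V} {a b x y : V} : (del G a b).Adj x y ↔
    G.Adj x y ∧ ¬ (x = a ∧ y = b) ∧ ¬ (x = b ∧ y = a) := Iff.rfl

/-- In a minimal counterexample with edges to spare, the pair stays massed when an edge outside `X` is
deleted, by `tight`. -/
theorem massed_del {c : Fin 3 → ℕ} {L N : ℕ} {G : SimpleGraph V} {U X : Finset V}
    {f : V → Option (Fin 3)} (hIH : IH V c L N #U) (hN : #X ≤ N) (hM : Massed L G U X)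
    (hf : Good c f X) (hns : ¬ Solv G U X f) {a b : V} (ha : a ∈ U \ X) (hb : b ∈ U \ X)
    (hab : G.Adj a b) (hbig : L * #(U \ X) + 2 < rr G U (U \ X)) :
    Massed L (del G a b) U X ∧ rr (del G a b) U (U \ X) < rr G U (U \ X) := by
  have hle : del G a b ≤ G := fun _ _ h => h.1
  have haU := (mem_sdiff.1 ha).1
  have hbU := (mem_sdiff.1 hb).1
  refine ⟨⟨hM.sub, ?_, ?_⟩, ?_⟩
  · have : rr G U (U \ X) ≤ rr (del G a b) U (U \ X) + #({(a, b), (b, a)} : Finset (V × V)) := by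
      refine le_trans (card_le_card ?_) (card_union_le _ _)
      rintro ⟨x, y⟩
      simp only [mem_filter, mem_union, mem_product, mem_insert, mem_singleton, Prod.mk.injEq,
        del_adj]
      tauto
    have h2 : #({(a, b), (b, a)} : Finset (V × V)) ≤ 2 := card_le_two
    omega
  · intro Y hY hlt
    by_cases hYA : Y = U \ X
    · exfalso
      subst hYA
      have : bd G U (U \ X) ⊆ bd (del G a b) U (U \ X) := by
        intro z hz
        obtain ⟨h1, h2, w, hw, h3⟩ := mem_bd.1 hz
        refine mem_bd.2 ⟨h1, h2, w, hw, h3, ?_, ?_⟩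
        · rintro ⟨rfl, -⟩; exact h2 ha
        · rintro ⟨rfl, -⟩; exact h2 hb
      have := card_le_card this
      have := hM.small _ subset_rfl (by omega)
      have := hM.mass
      omega
    · have h1 : ∃ z, bd G U Y ⊆ insert z (bd (del G a b) U Y) := by
        by_cases haY : a ∈ Y
        · refine ⟨b, fun z hz => ?_⟩
          obtain ⟨h1, h2, w, hw, h3⟩ := mem_bd.1 hz
          by_cases hzb : z = b
          · simp [hzb]
          · exact mem_insert_of_mem (mem_bd.2 ⟨h1, h2, w, hw, h3, fun h => h2 (h.1 ▸ haY),
              fun h => hzb h.1⟩)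
        · refine ⟨a, fun z hz => ?_⟩
          obtain ⟨h1, h2, w, hw, h3⟩ := mem_bd.1 hz
          by_cases hza : z = a
          · simp [hza]
          · exact mem_insert_of_mem (mem_bd.2 ⟨h1, h2, w, hw, h3, fun h => hza h.1,
              fun h => haY (h.2 ▸ hw)⟩)
      obtain ⟨z, hz⟩ := h1
      have := card_le_card hz
      have := card_insert_le z (bd (del G a b) U Y)
      have := tight hIH hN hM hf hns hY hYA (by omega)
      exact (rr_mono hle subset_rfl subset_rfl).trans this
  · apply card_lt_card
    refine (ssubset_iff_of_subset ?_).2 ⟨(a, b), by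
      rw [mem_filter]; exact ⟨mem_product.2 ⟨haU, hbU⟩, hab, .inl ha⟩, by simp [del]⟩
    intro p
    simp only [mem_filter]
    exact fun h => ⟨h.1, hle h.2.1, h.2.2⟩

/-- When no edge outside `X` can be spared, some vertex outside `X` has degree less than `L`. -/
theorem exists_low {L N : ℕ} {G : SimpleGraph V} {U X : Finset V}
    (hNL : N < L) (hN : #X ≤ N) (hX3 : 3 ≤ #X) (hM : Massed L G U X)
    (h : (∃ a ∈ U \ X, ∃ b ∈ U \ X, G.Adj a b) → rr G U (U \ X) ≤ L * #(U \ X) + 2) :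
    ∃ v ∈ U \ X, #{b ∈ U | G.Adj v b} < L := by
  by_cases he : ∃ a ∈ U \ X, ∃ b ∈ U \ X, G.Adj a b
  · by_contra hcon
    push Not at hcon
    have h := h he
    have hbX : bd G U (U \ X) = X := by
      refine eq_of_subset_of_card_le (fun u hu => ?_) ?_
      · rw [mem_bd] at hu
        by_contra h
        exact hu.2.1 (mem_sdiff.2 ⟨hu.1, h⟩)
      · by_contra hlt
        have := hM.small _ subset_rfl (by omega)
        have := hM.mass
        omega
    have hx : ∀ x ∈ X, ∃ w ∈ U \ X, G.Adj x w := fun x hx => by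
      rw [← hbX] at hx
      obtain ⟨-, -, w, hw, h3⟩ := mem_bd.1 hx
      exact ⟨w, hw, h3⟩
    have h1 : ∑ a ∈ U \ X, #{b ∈ U | G.Adj a b} + ∑ x ∈ X, #{b ∈ U \ X | G.Adj x b} ≤
        rr G U (U \ X) := by
      have e1 : ∑ a ∈ U \ X, #{b ∈ U | G.Adj a b} =
          #((U \ X).sigma fun a => {b ∈ U | G.Adj a b}) := (card_sigma _ _).symm
      have e2 : ∑ x ∈ X, #{b ∈ U \ X | G.Adj x b} =
          #(X.sigma fun x => {b ∈ U \ X | G.Adj x b}) := (card_sigma _ _).symm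
      rw [e1, e2, ← card_union_of_disjoint]
      · apply card_le_card_of_injOn (fun p => (p.1, p.2))
        · rintro ⟨a, b⟩ hp
          simp only [coe_union, coe_sigma, Set.mem_union, mem_coe, mem_filter,
            mem_sdiff, mem_product, Set.mem_sigma_iff] at hp ⊢
          have := @hM.sub
          rcases hp with hp | hp
          · tauto
          · have := hM.sub hp.1
            tauto
        · rintro ⟨a, b⟩ _ ⟨a', b'⟩ _ h
          simp only [Prod.mk.injEq] at h
          obtain ⟨rfl, rfl⟩ := h
          rfl
      · rw [Finset.disjoint_left]
        rintro ⟨a, b⟩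
        simp only [mem_sigma, mem_sdiff]
        tauto
    have h2 : L * #(U \ X) ≤ ∑ a ∈ U \ X, #{b ∈ U | G.Adj a b} := by
      rw [mul_comm, ← smul_eq_mul]
      exact card_nsmul_le_sum _ _ _ hcon
    have h3 : #X ≤ ∑ x ∈ X, #{b ∈ U \ X | G.Adj x b} := by
      rw [card_eq_sum_ones]
      refine sum_le_sum fun x hxX => card_pos.2 ?_
      obtain ⟨w, hw, h⟩ := hx x hxX
      exact ⟨w, mem_filter.2 ⟨hw, h⟩⟩
    omega
  · push Not at he
    obtain ⟨v, hv⟩ := nonempty_of_mass hM.mass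
    refine ⟨v, hv, lt_of_le_of_lt (card_le_card fun b hb => ?_) (hN.trans_lt hNL)⟩
    obtain ⟨h1, h2⟩ := mem_filter.1 hb
    by_contra h
    exact he v hv b (mem_sdiff.2 ⟨h1, h⟩) h2

/-- The linking theorem, from its local form (after Thomas and Wollan): in a counterexample with fewest
vertices and then fewest edges, the neighbourhood of a vertex of degree less than `L` satisfies the
hypotheses of `Local` by `contr`, which `core` excludes. -/
theorem TW {c : Fin 3 → ℕ} {L N : ℕ} (hNL : N < L) (hloc : Local V c L N) (n : ℕ) :
    IH V c L N n := by
  induction n with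
  | zero => intro G U X f h; omega
  | succ n ihn =>
    suffices ∀ m, ∀ (G : SimpleGraph V) (U X : Finset V) (f : V → Option (Fin 3)), #U < n + 1 →
        #X ≤ N → Massed L G U X → Good c f X → rr G U (U \ X) ≤ m → Solv G U X f from
      fun G U X f h1 h2 h3 h4 => this _ G U X f h1 h2 h3 h4 le_rfl
    intro m
    induction m with
    | zero => intro G U X f _ _ h _ h0; have := h.mass; omega
    | succ m ihm =>
      intro G U X f hn hN hM hf hm
      by_contra hns
      have hIH : IH V c L N #U := fun G' U' X' f' h => ihn G' U' X' f' (by omega)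
      have hnbr : ∀ v ∈ U \ X, bd G U {v} = {b ∈ U | G.Adj v b} := by
        intro v hv
        ext b
        simp only [mem_bd, mem_singleton, mem_filter, exists_eq_left]
        exact ⟨fun h => ⟨h.1, h.2.2.symm⟩, fun h => ⟨h.1, h.2.ne.symm, h.2.symm⟩⟩
      have hun : ∀ (v : V) (H : Finset V), {v} ∪ H = insert v H := fun v H => rfl
      -- with at most two terminals only one class is nontrivial, and `star` suffices
      by_cases hX3 : 3 ≤ #X
      · obtain ⟨v, hv, hlow⟩ := exists_low hNL hN hX3 hM (by
          rintro ⟨a, ha, b, hb, hab⟩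
          by_contra hbig
          push Not at hbig
          have hle : del G a b ≤ G := fun _ _ h => h.1
          obtain ⟨h1, h2⟩ := massed_del hIH hN hM hf hns ha hb hab hbig
          exact hns ((ihm (del G a b) U X f hn hN h1 hf (by omega)).mono hle
            subset_rfl subset_rfl (fun _ _ _ h => h)))
        refine core hIH hN hM hf hns (Z := {v}) (by simpa using hv) (by simp) ?_
        rw [hnbr v hv, hun]
        intro T hT hXT hTX g hg
        have hvX := (mem_sdiff.1 hv).2
        have hco : ∀ w ∈ ({b ∈ U | G.Adj v b} : Finset V), _ := fun w hw =>
          contr hIH hN hM hf hns hv (mem_filter.1 hw).1 (mem_filter.1 hw).2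
        refine hloc G v _ T g (fun h hh => (mem_filter.1 hh).2) hT (hTX.trans hN) hlow ?_ ?_ hg
        · intro w hw hwT
          refine (hco w hw).trans (Nat.mul_le_mul_left 2 (card_le_card ?_))
          intro b
          have := hXT w hw
          simp only [mem_filter]
          tauto
        · intro w hwT
          have hw := hT hwT
          refine (hco w hw).trans (Nat.mul_le_mul_left 2 (card_le_card ?_))
          intro b hb
          have := hXT b
          simp only [mem_filter] at hb this ⊢
          tauto
      · obtain ⟨v, hv⟩ := nonempty_of_mass hM.mass
        refine core hIH hN hM hf hns (Z := {v}) (by simpa using hv) (by simp) ?_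
        rw [hnbr v hv, hun]
        intro T hT hXT hTX g hg
        have hst := fun i0 => star (f := g) (fun h hh => (mem_filter.1 hh).2) hT i0
        by_cases hp : ∃ x ∈ T, ∃ y ∈ T, x ≠ y ∧ ∃ i, g x = some i ∧ g y = some i
        · obtain ⟨x, hx, y, hy, hxy, i0, hi, hj⟩ := hp
          refine hst i0 fun i hne x' hx' y' hy' hi' hj' => ?_
          by_contra hxy'
          have h1 : x' ≠ x := by rintro rfl; rw [hi] at hi'; exact hne (Option.some.inj hi').symm
          have h2 : x' ≠ y := by rintro rfl; rw [hj] at hi'; exact hne (Option.some.inj hi').symm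
          have : #({x', x, y} : Finset V) ≤ #T := card_le_card (by
            intro z; simp only [mem_insert, mem_singleton]; rintro (rfl | rfl | rfl) <;> assumption)
          rw [card_eq_three.2 ⟨x', x, y, h1, h2, hxy, rfl⟩] at this
          omega
        · push Not at hp
          refine hst 0 fun i _ x hx y hy hi hj => ?_
          by_contra hne
          exact hp x hx y hy hne i hi hj

/-! ### Two classes of terminals -/

/-- The component of `x` in `G[P]`. -/
noncomputable def comp (G : SimpleGraph V) (P : Finset V) (x : V) : Finset V :=
  {z ∈ P | Jn G P x z}

theorem mem_comp {G : SimpleGraph V} {P : Finset V} {x z : V} :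
    z ∈ comp G P x ↔ z ∈ P ∧ Jn G P x z := mem_filter

theorem comp_closed {G : SimpleGraph V} {P : Finset V} {x z b : V} (hz : z ∈ comp G P x)
    (hb : b ∈ P) (h : G.Adj b z) : b ∈ comp G P x :=
  mem_comp.2 ⟨hb, (mem_comp.1 hz).2.trans (.single h.symm (mem_comp.1 hz).1 hb)⟩

theorem comp_disj {G : SimpleGraph V} {P : Finset V} {x y : V} (h : ¬ Jn G P x y) :
    Disjoint (comp G P x) (comp G P y) :=
  Finset.disjoint_left.2 fun _ hz hz' => h ((mem_comp.1 hz).2.trans (mem_comp.1 hz').2.symm)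

theorem comp_subset {G : SimpleGraph V} {P : Finset V} {x : V} : comp G P x ⊆ P :=
  filter_subset _ _

/-- Any two vertices of `P` are joined in `G[P]`; `P` may be empty. -/
def Conn (G : SimpleGraph V) (P : Finset V) : Prop := ∀ x ∈ P, ∀ y ∈ P, Jn G P x y

/-- A disconnected set contains two disjoint components. -/
theorem two_comp {G : SimpleGraph V} {P : Finset V} (h : ¬ Conn G P) :
    ∃ x ∈ P, ∃ y ∈ P, ¬ Jn G P x y ∧ Disjoint (comp G P x) (comp G P y) ∧
      #(comp G P x) + #(comp G P y) ≤ #P := by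
  simp only [Conn] at h
  push Not at h
  obtain ⟨x, hx, y, hy, h⟩ := h
  refine ⟨x, hx, y, hy, h, comp_disj h, ?_⟩
  rw [← card_union_of_disjoint (comp_disj h)]
  exact card_le_card (union_subset comp_subset comp_subset)

theorem nbr_comp {G : SimpleGraph V} {P : Finset V} {x z : V} (hz : z ∈ comp G P x) :
    ({b ∈ P | b = z ∨ G.Adj b z} : Finset V) ⊆ comp G P x := by
  intro b hb
  obtain ⟨h1, rfl | h2⟩ := mem_filter.1 hb
  · exact hz
  · exact comp_closed hz h1 h2

/-- If all closed degrees in `G[P]` exceed half of `#P`, then `P` is connected. -/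
theorem conn_of_deg {G : SimpleGraph V} {P : Finset V} {m : ℕ}
    (hd : ∀ z ∈ P, m ≤ #{b ∈ P | b = z ∨ G.Adj b z}) (hP : #P < 2 * m) : Conn G P := by
  by_contra h
  obtain ⟨x, hx, y, hy, -, -, hle⟩ := two_comp h
  have h1 := (hd x hx).trans (card_le_card (nbr_comp (mem_comp.2 ⟨hx, .refl _⟩)))
  have h2 := (hd y hy).trans (card_le_card (nbr_comp (mem_comp.2 ⟨hy, .refl _⟩)))
  omega

theorem Conn.link {G : SimpleGraph V} {P Q : Finset V} (h : Conn G P) (hPQ : P ⊆ Q) {s t : V}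
    (hs : s ∈ Q) (ht : t ∈ Q) (h1 : ∃ p ∈ P, G.Adj s p) (h2 : ∃ p ∈ P, G.Adj t p) :
    Jn G Q s t := by
  obtain ⟨p, hp, hsp⟩ := h1
  obtain ⟨q, hq, htq⟩ := h2
  exact (Jn.single hsp hs (hPQ hp)).trans
    (((h p hp q hq).mono hPQ).trans (.single htq.symm (hPQ hq) ht))

/-- Realising a labelling with two labels by two disjoint sets. -/
theorem solv_two {G : SimpleGraph V} {U T A B : Finset V} {f : V → Option (Fin 3)} {i0 j0 : Fin 3}
    (hij : i0 ≠ j0) (hA : A ⊆ U) (hB : B ⊆ U) (hAB : Disjoint A B)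
    (hf : ∀ x ∈ T, ∀ i, f x = some i → i = i0 ∧ x ∈ A ∨ i = j0 ∧ x ∈ B)
    (jA : ∀ x ∈ T, ∀ y ∈ T, f x = some i0 → f y = some i0 → Jn G A x y)
    (jB : ∀ x ∈ T, ∀ y ∈ T, f x = some j0 → f y = some j0 → Jn G B x y) : Solv G U T f := by
  refine ⟨fun i => if i = i0 then A else if i = j0 then B else ∅, fun i => ?_, fun i j h => ?_,
    fun x hx i hi => ?_, fun x hx y hy i hi hj => ?_⟩
  · dsimp only; split_ifs <;> simp [*]
  · dsimp only
    split_ifs with a b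
    · exact absurd (a.trans b.symm) h
    · exact hAB
    all_goals first
      | exact disjoint_bot_left
      | exact disjoint_bot_right
      | exact hAB.symm
      | exact absurd (Eq.trans ‹i = j0› (Eq.symm ‹j = j0›)) h
  · dsimp only
    rcases hf x hx i hi with ⟨rfl, h⟩ | ⟨rfl, h⟩
    · simpa using h
    · simpa [hij.symm] using h
  · dsimp only
    rcases hf x hx i hi with ⟨rfl, h⟩ | ⟨rfl, h⟩
    · simpa using jA x hx y hy hi hj
    · simpa [hij.symm] using jB x hx y hy hi hj

/-- Two classes of terminals, one of them with at most three elements. Either `H` minus the small class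
`I` joins the other class, and `v` joins `I`; or a vertex of `H` joins `I` and `v` joins the other
class. -/
theorem local_b_aux {G : SimpleGraph V} {v : V} {H T : Finset V} {f : V → Option (Fin 3)}
    (hv : ∀ h ∈ H, G.Adj v h) (hT : T ⊆ H) (hT7 : #T ≤ 7) (hH : #H < 14)
    (h1 : ∀ w ∈ H, w ∉ T → 14 + 1 ≤ 2 * #{b ∈ H | b = w ∨ G.Adj b w})
    (h2 : ∀ w ∈ T, 14 + 1 ≤ 2 * #{b ∈ H | b = w ∨ G.Adj b w ∨ b ∈ T})
    {i0 j0 : Fin 3} (hij : i0 ≠ j0) (hf : ∀ x ∈ T, ∀ i, f x = some i → i = i0 ∨ i = j0)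
    (hI3 : #{x ∈ T | f x = some i0} ≤ 3) : Solv G (insert v H) T f := by
  set I : Finset V := {x ∈ T | f x = some i0} with hI
  have hIT : I ⊆ T := filter_subset _ _
  have hIH := hIT.trans hT
  have hvH : v ∉ H := fun h => (hv v h).ne rfl
  have starJ : ∀ (S : Finset V), S ⊆ H → ∀ x ∈ S, ∀ y ∈ S, Jn G (insert v S) x y :=
    fun S hS x hx y hy => (Jn.single (hv x (hS hx)).symm (mem_insert_of_mem hx)
      (mem_insert_self _ _)).trans (.single (hv y (hS hy)) (mem_insert_self _ _)
        (mem_insert_of_mem hy))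
  have memI : ∀ x ∈ T, f x = some i0 → x ∈ I := fun x hx h => mem_filter.2 ⟨hx, h⟩
  have memJ : ∀ x ∈ T, f x = some j0 → x ∈ T \ I := fun x hx h => mem_sdiff.2 ⟨hx, fun h' => by
    have := (mem_filter.1 h').2
    rw [h] at this
    exact hij (Option.some.inj this).symm⟩
  by_cases hc : ∀ x ∈ T \ I, ∀ y ∈ T \ I, Jn G (H \ I) x y
  · refine solv_two hij (A := insert v I) (B := H \ I) (insert_subset_insert _ hIH)
      (sdiff_subset.trans (subset_insert _ _)) ?_ ?_ ?_ ?_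
    · rw [disjoint_insert_left]
      exact ⟨fun h => hvH (mem_sdiff.1 h).1, disjoint_sdiff⟩
    · intro x hx i hi
      rcases hf x hx i hi with rfl | rfl
      · exact .inl ⟨rfl, mem_insert_of_mem (memI x hx hi)⟩
      · exact .inr ⟨rfl, sdiff_subset_sdiff hT subset_rfl (memJ x hx hi)⟩
    · exact fun x hx y hy hi hj => starJ I hIH x (memI x hx hi) y (memI y hy hj)
    · exact fun x hx y hy hi hj => hc x (memJ x hx hi) y (memJ y hy hj)
  · push Not at hc
    obtain ⟨x, hx, y, hy, hxy⟩ := hc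
    -- the smaller of two components contains a nonterminal adjacent to all of `I`
    have key : ∀ x ∈ T \ I, 2 * #(comp G (H \ I) x) + #I ≤ 13 →
        ∃ w ∈ H, w ∉ T ∧ ∀ z ∈ I, G.Adj z w := by
      intro x hx hsm
      obtain ⟨hxT, hxI⟩ := mem_sdiff.1 hx
      have e1 : ∃ w ∈ H, w ∉ T ∧ G.Adj w x := by
        by_contra hcon
        push Not at hcon
        have : #{b ∈ H | b = x ∨ G.Adj b x ∨ b ∈ T} ≤ #T := by
          refine card_le_card fun b hb => ?_
          obtain ⟨b1, rfl | b2 | b2⟩ := mem_filter.1 hb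
          · exact hxT
          · by_contra hbT
            exact hcon b b1 hbT b2
          · exact b2
        have := h2 x hxT
        omega
      obtain ⟨w, hwH, hwT, hwx⟩ := e1
      refine ⟨w, hwH, hwT, ?_⟩
      by_contra hcon
      push Not at hcon
      obtain ⟨z, hz, hzw⟩ := hcon
      have hwI : w ∉ I := fun h => hwT (hIT h)
      have hwc : w ∈ comp G (H \ I) x := comp_closed (mem_comp.2
        ⟨mem_sdiff.2 ⟨hT hxT, hxI⟩, .refl _⟩) (mem_sdiff.2 ⟨hwH, hwI⟩) hwx
      have : ({b ∈ H | b = w ∨ G.Adj b w} : Finset V) ⊆ comp G (H \ I) x ∪ I.erase z := by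
        intro b hb
        obtain ⟨hbH, hb⟩ := mem_filter.1 hb
        by_cases hbI : b ∈ I
        · refine mem_union_right _ (mem_erase.2 ⟨?_, hbI⟩)
          rintro rfl
          rcases hb with rfl | hb
          · exact hwI hbI
          · exact hzw hb
        · exact mem_union_left _ (nbr_comp hwc (mem_filter.2 ⟨mem_sdiff.2 ⟨hbH, hbI⟩, hb⟩))
      have a1 := card_le_card this
      have a2 := card_union_le (comp G (H \ I) x) (I.erase z)
      have a3 := card_erase_add_one hz
      have a4 := h1 w hwH hwT
      omega
    have hex : ∃ w ∈ H, w ∉ T ∧ ∀ z ∈ I, G.Adj z w := by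
      have hd := comp_disj hxy
      have hle : #(comp G (H \ I) x) + #(comp G (H \ I) y) ≤ #(H \ I) := by
        rw [← card_union_of_disjoint hd]
        exact card_le_card (union_subset comp_subset comp_subset)
      have := card_sdiff_add_card_eq_card hIH
      by_cases h : 2 * #(comp G (H \ I) x) + #I ≤ 13
      · exact key x hx h
      · exact key y hy (by omega)
    obtain ⟨w, hwH, hwT, hw⟩ := hex
    refine solv_two hij (A := insert w I) (B := insert v (T \ I))
      (insert_subset (mem_insert_of_mem hwH) (hIH.trans (subset_insert _ _)))
      (insert_subset_insert _ (sdiff_subset.trans hT)) ?_ ?_ ?_ ?_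
    · rw [disjoint_insert_left, disjoint_insert_right]
      refine ⟨?_, fun h => hvH (hIH h), disjoint_sdiff⟩
      intro h
      rcases mem_insert.1 h with rfl | h
      · exact hvH hwH
      · exact hwT (mem_sdiff.1 h).1
    · intro z hz i hi
      rcases hf z hz i hi with rfl | rfl
      · exact .inl ⟨rfl, mem_insert_of_mem (memI z hz hi)⟩
      · exact .inr ⟨rfl, mem_insert_of_mem (memJ z hz hi)⟩
    · intro x hx y hy hi hj
      have hx' := memI x hx hi
      have hy' := memI y hy hj
      exact (Jn.single (hw x hx') (mem_insert_of_mem hx') (mem_insert_self _ _)).trans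
        (.single (hw y hy').symm (mem_insert_self _ _) (mem_insert_of_mem hy'))
    · exact fun x hx y hy hi hj =>
        starJ _ (sdiff_subset.trans hT) x (memJ x hx hi) y (memJ y hy hj)

/-- Two classes on at most seven terminals: one of them has at most three elements. -/
theorem local_b : Local V ![7, 7, 0] 14 7 := by
  intro G v H T f hv hT hT7 hH h1 h2 hg
  have h0 : ∀ x ∈ T, f x ≠ some 2 := by
    intro x hx h
    have := hg 2
    have : #{x ∈ T | f x = some 2} ≤ 0 := this
    have := card_pos.2 ⟨x, (mem_filter (p := fun x => _ = _)).2 ⟨hx, h⟩⟩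
    omega
  have hf : ∀ x ∈ T, ∀ i, f x = some i → i = 0 ∨ i = 1 := by
    intro x hx i hi
    fin_cases i
    · exact .inl rfl
    · exact .inr rfl
    · exact absurd hi (h0 x hx)
  by_cases h : #{x ∈ T | f x = some 0} ≤ 3
  · exact local_b_aux hv hT hT7 hH h1 h2 (i0 := 0) (j0 := 1) (by decide) hf h
  · refine local_b_aux hv hT hT7 hH h1 h2 (i0 := 1) (j0 := 0) (by decide)
      (fun x hx i hi => (hf x hx i hi).symm) ?_
    have hd : Disjoint ({x ∈ T | f x = some 0}) ({x ∈ T | f x = some 1}) := by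
      rw [Finset.disjoint_left]
      intro z hz hz'
      have := (mem_filter.1 hz).2.symm.trans (mem_filter.1 hz').2
      simp at this
    have := card_le_card (union_subset (filter_subset (fun x => f x = some 0) T)
      (filter_subset (fun x => f x = some 1) T))
    rw [card_union_of_disjoint hd] at this
    omega

/-- A labelling of six terminals with classes of at most two elements extends to a partition into
three pairs. -/
theorem exists_fill {T : Finset V} (hT : #T = 6) (n : ℕ) : ∀ f : V → Option (Fin 3),
    Good (fun _ => 2) f T → #{x ∈ T | f x = none} ≤ n →
    ∃ g : V → Option (Fin 3), Good (fun _ => 2) g T ∧ (∀ x ∈ T, g x ≠ none) ∧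
      ∀ x i, f x = some i → g x = some i := by
  have hcol : ∀ f : V → Option (Fin 3), #{x ∈ T | f x = none} + ∑ i, #{x ∈ T | f x = some i} = 6 := by
    intro f
    rw [← hT, card_eq_sum_card_fiberwise (s := T) (t := univ) (f := f) (fun _ _ => mem_univ _),
      Fintype.sum_option]
  induction n with
  | zero =>
    intro f hf h0
    refine ⟨f, hf, fun x hx h => ?_, fun _ _ h => h⟩
    have := card_pos.2 ⟨x, (mem_filter (p := fun x => _ = _)).2 ⟨hx, h⟩⟩
    omega
  | succ n ih =>
    intro f hf hn
    by_cases hne : ∃ x ∈ T, f x = none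
    · obtain ⟨x, hx, hxn⟩ := hne
      have hi : ∃ i, #{x ∈ T | f x = some i} < 2 := by
        by_contra hcon
        push Not at hcon
        have h1 := hcol f
        have h2 : ∑ i : Fin 3, 2 ≤ ∑ i : Fin 3, #{x ∈ T | f x = some i} :=
          sum_le_sum fun i _ => hcon i
        simp only [sum_const, card_univ, Fintype.card_fin, smul_eq_mul] at h2
        have := card_pos.2 ⟨x, (mem_filter (p := fun x => _ = _)).2 ⟨hx, hxn⟩⟩
        omega
      obtain ⟨i, hi⟩ := hi
      obtain ⟨g, g1, g2, g3⟩ := ih (Function.update f x (some i)) (fun j => by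
        by_cases hj : j = i
        · subst hj
          refine le_trans (card_le_card (t := insert x ({x ∈ T | f x = some j})) fun z hz => ?_)
            ((card_insert_le _ _).trans hi)
          obtain ⟨z1, z2⟩ := mem_filter.1 hz
          by_cases hzx : z = x
          · simp [hzx]
          · rw [Function.update_of_ne hzx] at z2
            exact mem_insert_of_mem (mem_filter.2 ⟨z1, z2⟩)
        · refine (card_le_card fun z hz => ?_).trans (hf j)
          obtain ⟨z1, z2⟩ := mem_filter.1 hz
          by_cases hzx : z = x
          · rw [hzx, Function.update_self] at z2
            exact absurd (Option.some.inj z2).symm hj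
          · rw [Function.update_of_ne hzx] at z2
            exact mem_filter.2 ⟨z1, z2⟩) (by
        have : #{z ∈ T | Function.update f x (some i) z = none} < #{z ∈ T | f z = none} := by
          refine card_lt_card ((ssubset_iff_of_subset ?_).2 ⟨x, mem_filter.2 ⟨hx, hxn⟩, by simp⟩)
          intro z hz
          obtain ⟨z1, z2⟩ := mem_filter.1 hz
          by_cases hzx : z = x
          · simp [hzx] at z2
          · rw [Function.update_of_ne hzx] at z2
            exact mem_filter.2 ⟨z1, z2⟩
        omega)
      refine ⟨g, g1, g2, fun z j hz => g3 z j ?_⟩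
      rw [Function.update_of_ne]
      · exact hz
      · rintro rfl; rw [hxn] at hz; simp at hz
    · push Not at hne
      exact ⟨f, hf, hne, fun _ _ h => h⟩

/-! ### Three pairs of terminals -/

/-- Three pairs `t i`, `t' i` of terminals attached to a dense set `W` of at most nine vertices: two of
the pairs are joined through disjoint connected subsets of `W`. The third pair is then joined by the
vertex adjacent to everything. -/
theorem two_links {G : SimpleGraph V} {W : Finset V} (t t' : Fin 3 → V) (hW : #W ≤ 9)
    (hd : ∀ w ∈ W, 9 ≤ #{b ∈ W | b = w ∨ G.Adj b w} + (#{i | G.Adj (t i) w} + #{i | G.Adj (t' i) w}))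
    (h3 : ∀ i, 3 ≤ #{b ∈ W | G.Adj (t i) b}) (h3' : ∀ i, 3 ≤ #{b ∈ W | G.Adj (t' i) b}) :
    ∃ i j, i ≠ j ∧ ∃ P ⊆ W, ∃ Q ⊆ W, Disjoint P Q ∧ Conn G P ∧ Conn G Q ∧
      (∃ p ∈ P, G.Adj (t i) p) ∧ (∃ p ∈ P, G.Adj (t' i) p) ∧
      (∃ p ∈ Q, G.Adj (t j) p) ∧ (∃ p ∈ Q, G.Adj (t' j) p) := by
  have hgood : ∀ w, #{i | G.Adj (t i) w} + #{i | G.Adj (t' i) w} ≤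
      3 + #{i | G.Adj (t i) w ∧ G.Adj (t' i) w} := by
    intro w
    rw [← card_union_add_card_inter, ← filter_and]
    exact Nat.add_le_add_right (card_le_univ _) _
  have hsing : ∀ w : V, Conn G {w} := by
    intro w x hx y hy
    rw [mem_singleton.1 hx, mem_singleton.1 hy]; exact .refl _
  -- a terminal still has a neighbour outside a small set
  have htou : ∀ s : V, 3 ≤ #{b ∈ W | G.Adj s b} → ∀ P : Finset V, ¬ {b ∈ W | G.Adj s b} ⊆ P →
      ∃ p ∈ W \ P, G.Adj s p := by
    intro s _ P h
    obtain ⟨p, hp, hpP⟩ := not_subset.1 h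
    exact ⟨p, mem_sdiff.2 ⟨(mem_filter.1 hp).1, hpP⟩, (mem_filter.1 hp).2⟩
  have htou2 : ∀ s : V, 3 ≤ #{b ∈ W | G.Adj s b} → ∀ P : Finset V, #P ≤ 2 →
      ∃ p ∈ W \ P, G.Adj s p := by
    intro s hs P hP
    exact htou s hs P fun h => by have := card_le_card h; omega
  by_cases hA : ∃ w1 ∈ W, ∃ i, G.Adj (t i) w1 ∧ G.Adj (t' i) w1
  · obtain ⟨w1, hw1, i, hi1, hi2⟩ := hA
    by_cases hA2 : ∃ w2 ∈ W, w2 ≠ w1 ∧ ∃ j, j ≠ i ∧ G.Adj (t j) w2 ∧ G.Adj (t' j) w2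
    · obtain ⟨w2, hw2, hne, j, hji, hj1, hj2⟩ := hA2
      exact ⟨i, j, hji.symm, {w1}, by simpa using hw1, {w2}, by simpa using hw2,
        by simpa using hne.symm, hsing _, hsing _, by simpa using hi1, by simpa using hi2,
        by simpa using hj1, by simpa using hj2⟩
    · push Not at hA2
      obtain ⟨j, hji⟩ : ∃ j : Fin 3, j ≠ i := exists_ne i
      -- it suffices to delete a vertex good for `i` and keep the rest connected
      have win : ∀ y ∈ W, G.Adj (t i) y → G.Adj (t' i) y → Conn G (W \ {y}) → _ :=
        fun y hy h1 h2 hc => (⟨i, j, hji.symm, {y}, by simpa using hy, W \ {y}, sdiff_subset,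
          disjoint_sdiff, hsing _, hc, by simpa using h1, by simpa using h2,
          htou2 _ (h3 j) _ (by simp), htou2 _ (h3' j) _ (by simp)⟩ :
          ∃ i j, i ≠ j ∧ ∃ P ⊆ W, ∃ Q ⊆ W, Disjoint P Q ∧ Conn G P ∧ Conn G Q ∧
            (∃ p ∈ P, G.Adj (t i) p) ∧ (∃ p ∈ P, G.Adj (t' i) p) ∧
            (∃ p ∈ Q, G.Adj (t j) p) ∧ (∃ p ∈ Q, G.Adj (t' j) p))
      by_cases hc : Conn G (W \ {w1})
      · exact win w1 hw1 hi1 hi2 hc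
      · have hg1 : ∀ w ∈ W, w ≠ w1 → ({i' | G.Adj (t i') w ∧ G.Adj (t' i') w} : Finset (Fin 3)) ⊆
            {i} := by
          intro w hw hne i' hi'
          obtain ⟨-, a, b⟩ := mem_filter.1 hi'
          by_contra h
          exact hA2 w hw hne i' (fun h' => h (mem_singleton.2 h')) a b
        have hsplit : ∀ w ∈ W, #{b ∈ W | b = w ∨ G.Adj b w} ≤
            #{b ∈ W \ {w1} | b = w ∨ G.Adj b w} + 1 := by
          intro w hw
          refine (card_le_card (t := insert w1 {b ∈ W \ {w1} | b = w ∨ G.Adj b w}) ?_).trans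
            (card_insert_le _ _)
          intro b hb
          obtain ⟨b1, b2⟩ := mem_filter.1 hb
          by_cases h : b = w1
          · simp [h]
          · exact mem_insert_of_mem (mem_filter.2 ⟨mem_sdiff.2 ⟨b1, by simpa using h⟩, b2⟩)
        have hcW : #(W \ {w1}) ≤ 8 := by
          have := card_sdiff_add_card_eq_card (singleton_subset_iff.2 hw1)
          rw [card_singleton] at this
          omega
        have hd4 : ∀ w ∈ W \ {w1}, 4 ≤ #{b ∈ W \ {w1} | b = w ∨ G.Adj b w} := by
          intro w hw
          obtain ⟨w2, w3⟩ := mem_sdiff.1 hw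
          have := hd w w2
          have := hgood w
          have := card_le_card (hg1 w w2 (by simpa using w3))
          rw [card_singleton] at this
          have := hsplit w w2
          omega
        obtain ⟨x, hx, y, hy, hxy, hdis, hle⟩ := two_comp hc
        have cx := (hd4 x hx).trans (card_le_card (nbr_comp (mem_comp.2 ⟨hx, .refl _⟩)))
        have cy := (hd4 y hy).trans (card_le_card (nbr_comp (mem_comp.2 ⟨hy, .refl _⟩)))
        have hun : comp G (W \ {w1}) x ∪ comp G (W \ {w1}) y = W \ {w1} := by
          refine eq_of_subset_of_card_le (union_subset comp_subset comp_subset) ?_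
          rw [card_union_of_disjoint hdis]; omega
        have hall : ∀ w ∈ W \ {w1}, G.Adj w1 w ∧ G.Adj (t i) w ∧ G.Adj (t' i) w := by
          intro w hw
          obtain ⟨w2, w3⟩ := mem_sdiff.1 hw
          have w3' : w ≠ w1 := by simpa using w3
          have hle4 : #{b ∈ W \ {w1} | b = w ∨ G.Adj b w} ≤ 4 := by
            rw [← hun] at hw
            rcases mem_union.1 hw with h | h
            · have := card_le_card (nbr_comp h); omega
            · have := card_le_card (nbr_comp h); omega
          have a1 := hd w w2
          have a2 := hgood w
          have a3 := hsplit w w2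
          have a4 := card_le_card (hg1 w w2 w3')
          rw [card_singleton] at a4
          refine ⟨?_, ?_⟩
          · by_contra hna
            have : ({b ∈ W | b = w ∨ G.Adj b w} : Finset V) ⊆ {b ∈ W \ {w1} | b = w ∨ G.Adj b w} := by
              intro b hb
              obtain ⟨b1, b2⟩ := mem_filter.1 hb
              refine mem_filter.2 ⟨mem_sdiff.2 ⟨b1, ?_⟩, b2⟩
              rw [mem_singleton]
              rintro rfl
              rcases b2 with h | h
              · exact w3' h.symm
              · exact hna h
            have := card_le_card this
            omega
          · have h5 : 0 < #{i' | G.Adj (t i') w ∧ G.Adj (t' i') w} := by omega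
            obtain ⟨i', hi'⟩ := card_pos.1 h5
            have := mem_singleton.1 (hg1 w w2 w3' hi')
            subst this
            exact (mem_filter.1 hi').2
        obtain ⟨-, hy1, hy2⟩ := hall y hy
        refine win y (mem_sdiff.1 hy).1 hy1 hy2 ?_
        have hyw : w1 ≠ y := fun h => by simp [← h] at hy
        have hw1' : w1 ∈ W \ {y} := mem_sdiff.2 ⟨hw1, by simpa using hyw⟩
        have hto : ∀ z ∈ W \ {y}, Jn G (W \ {y}) z w1 := by
          intro z hz
          by_cases hzw : z = w1
          · rw [hzw]; exact .refl _
          · exact .single (hall z (mem_sdiff.2 ⟨(mem_sdiff.1 hz).1, by simpa using hzw⟩)).1.symm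
              hz hw1'
        exact fun a ha b hb => (hto a ha).trans (hto b hb).symm
  · push Not at hA
    have hd6 : ∀ w ∈ W, 6 ≤ #{b ∈ W | b = w ∨ G.Adj b w} := by
      intro w hw
      have := hd w hw
      have := hgood w
      have h0 : #{i | G.Adj (t i) w ∧ G.Adj (t' i) w} = 0 := by
        rw [card_eq_zero, filter_eq_empty_iff]
        exact fun i _ h => hA w hw i h.1 h.2
      omega
    set N := fun i => ({b ∈ W | G.Adj (t i) b} : Finset V) with hN
    set N' := fun i => ({b ∈ W | G.Adj (t' i) b} : Finset V) with hN'
    have hNW : ∀ i, N i ⊆ W := fun i => filter_subset _ _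
    have hNW' : ∀ i, N' i ⊆ W := fun i => filter_subset _ _
    have hdis : ∀ i b, b ∈ N i → b ∈ N' i → False := fun i b h h' =>
      hA b (hNW i h) i (mem_filter.1 h).2 (mem_filter.1 h').2
    have adjN : ∀ i b, b ∈ N i → G.Adj (t i) b := fun i b h => (mem_filter.1 h).2
    have adjN' : ∀ i b, b ∈ N' i → G.Adj (t' i) b := fun i b h => (mem_filter.1 h).2
    -- a connected set meeting `N 0` and `N' 0` whose removal keeps the rest usable
    have win : ∀ P ⊆ W, Conn G P → (∃ p ∈ P, p ∈ N 0) → (∃ p ∈ P, p ∈ N' 0) → ¬ N 1 ⊆ P →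
        ¬ N' 1 ⊆ P → Conn G (W \ P) → _ := fun P hP hc ⟨p, hp, hp'⟩ ⟨q, hq, hq'⟩ h1 h2 hcQ =>
      (⟨0, 1, by decide, P, hP, W \ P, sdiff_subset, disjoint_sdiff, hc, hcQ, ⟨p, hp, adjN _ _ hp'⟩,
        ⟨q, hq, adjN' _ _ hq'⟩, htou _ (h3 1) _ h1, htou _ (h3' 1) _ h2⟩ :
          ∃ i j, i ≠ j ∧ ∃ P ⊆ W, ∃ Q ⊆ W, Disjoint P Q ∧ Conn G P ∧ Conn G Q ∧
            (∃ p ∈ P, G.Adj (t i) p) ∧ (∃ p ∈ P, G.Adj (t' i) p) ∧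
            (∃ p ∈ Q, G.Adj (t j) p) ∧ (∃ p ∈ Q, G.Adj (t' j) p))
    by_cases hC : ∃ a ∈ N 0, ∃ b ∈ N' 0, G.Adj a b
    · obtain ⟨a, ha, b, hb, hab⟩ := hC
      have hPW : ({a, b} : Finset V) ⊆ W := by
        intro z hz
        rcases mem_insert.1 hz with rfl | hz
        · exact hNW _ ha
        · rw [mem_singleton.1 hz]; exact hNW' _ hb
      have hP2 : #({a, b} : Finset V) = 2 := card_pair hab.ne
      have hto : ∀ z ∈ ({a, b} : Finset V), Jn G {a, b} z a := by
        intro z hz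
        rcases mem_insert.1 hz with rfl | hz
        · exact .refl _
        · rw [mem_singleton.1 hz]; exact .single hab.symm (by simp) (by simp)
      refine win {a, b} hPW (fun x hx y hy => (hto x hx).trans (hto y hy).symm)
        ⟨a, by simp, ha⟩ ⟨b, by simp, hb⟩ ?_ ?_ ?_
      · intro h; have := card_le_card h; have := h3 1; simp only [hN] at *; omega
      · intro h; have := card_le_card h; have := h3' 1; simp only [hN'] at *; omega
      · refine conn_of_deg (m := 4) ?_ ?_
        · intro z hz
          have h6 := hd6 z (mem_sdiff.1 hz).1
          have : ({b ∈ W | b = z ∨ G.Adj b z} : Finset V) ⊆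
              {c ∈ W \ {a, b} | c = z ∨ G.Adj c z} ∪ {a, b} := by
            intro c hc
            obtain ⟨c1, c2⟩ := mem_filter.1 hc
            by_cases h : c ∈ ({a, b} : Finset V)
            · exact mem_union_right _ h
            · exact mem_union_left _ (mem_filter.2 ⟨mem_sdiff.2 ⟨c1, h⟩, c2⟩)
          have := card_le_card this
          have := card_union_le {c ∈ W \ {a, b} | c = z ∨ G.Adj c z} {a, b}
          omega
        · have := card_sdiff_add_card_eq_card hPW
          omega
    · push Not at hC
      have hcN := h3 0
      have hcN' := h3' 0
      have hsubA : ∀ a ∈ N 0, ({b ∈ W | b = a ∨ G.Adj b a} : Finset V) ⊆ W \ N' 0 := by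
        intro a ha b hb
        obtain ⟨b1, b2⟩ := mem_filter.1 hb
        refine mem_sdiff.2 ⟨b1, fun h => ?_⟩
        rcases b2 with rfl | b2
        · exact hdis _ _ ha h
        · exact hC a ha b h b2.symm
      have hsubB : ∀ a ∈ N' 0, ({b ∈ W | b = a ∨ G.Adj b a} : Finset V) ⊆ W \ N 0 := by
        intro a ha b hb
        obtain ⟨b1, b2⟩ := mem_filter.1 hb
        refine mem_sdiff.2 ⟨b1, fun h => ?_⟩
        rcases b2 with rfl | b2
        · exact hdis _ _ h ha
        · exact hC b h a ha b2
      have e1 := card_sdiff_add_card_eq_card (hNW 0)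
      have e2 := card_sdiff_add_card_eq_card (hNW' 0)
      obtain ⟨a0, ha0⟩ := card_pos.1 (show 0 < #(N 0) by simp only [hN]; omega)
      obtain ⟨b, hb⟩ := card_pos.1 (show 0 < #(N' 0) by simp only [hN']; omega)
      have f1 := hd6 a0 (hNW _ ha0)
      have f2 := card_le_card (hsubA a0 ha0)
      have f3 := hd6 b (hNW' _ hb)
      have f4 := card_le_card (hsubB b hb)
      change 3 ≤ #(N 0) at hcN
      change 3 ≤ #(N' 0) at hcN'
      have g1 : #(N 0) = 3 := by omega
      have g2 : #(N' 0) = 3 := by omega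
      have g3 : #W = 9 := by omega
      have hA' : ∀ a ∈ N 0, ∀ z ∈ W, z ∉ N' 0 → z = a ∨ G.Adj z a := by
        intro a ha z hz hz'
        have := eq_of_subset_of_card_le (hsubA a ha) (by have := hd6 a (hNW _ ha); omega)
        exact (mem_filter.1 (this.symm ▸ mem_sdiff.2 ⟨hz, hz'⟩ :
          z ∈ ({b ∈ W | b = a ∨ G.Adj b a} : Finset V))).2
      have hB' : ∀ a ∈ N' 0, ∀ z ∈ W, z ∉ N 0 → z = a ∨ G.Adj z a := by
        intro a ha z hz hz'
        have := eq_of_subset_of_card_le (hsubB a ha) (by have := hd6 a (hNW' _ ha); omega)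
        exact (mem_filter.1 (this.symm ▸ mem_sdiff.2 ⟨hz, hz'⟩ :
          z ∈ ({b ∈ W | b = a ∨ G.Adj b a} : Finset V))).2
      have hRc : 3 ≤ #(W \ (N 0 ∪ N' 0)) := by
        have := card_sdiff_add_card_eq_card (union_subset (hNW 0) (hNW' 0))
        have := card_union_le (N 0) (N' 0)
        omega
      obtain ⟨r, hr⟩ := card_pos.1 (show 0 < #(W \ (N 0 ∪ N' 0)) by omega)
      have hRm : ∀ z ∈ W \ (N 0 ∪ N' 0), z ∈ W ∧ z ∉ N 0 ∧ z ∉ N' 0 := by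
        intro z hz; simpa [not_or] using hz
      obtain ⟨r2, hr2, hrr⟩ := exists_mem_ne (show 1 < #(W \ (N 0 ∪ N' 0)) by omega) r
      obtain ⟨a1, ha1, haa⟩ := exists_mem_ne (show 1 < #(N 0) by omega) a0
      obtain ⟨r1, r2', r3⟩ := hRm r hr
      -- choice of `a`
      have hcard3 : ∀ a, #({a, b, r} : Finset V) ≤ 3 := fun a => card_le_three
      have hch : ∃ a ∈ N 0, ¬ N 1 ⊆ {a, b, r} ∧ ¬ N' 1 ⊆ {a, b, r} := by
        have h31 : 3 ≤ #(N 1) := h3 1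
        have h31' : 3 ≤ #(N' 1) := h3' 1
        have sw : ∀ M M' : Finset V, 3 ≤ #M → 3 ≤ #M' → (∀ z ∈ M, z ∈ M' → False) →
            M ⊆ {a0, b, r} → ¬ M ⊆ {a1, b, r} ∧ ¬ M' ⊆ {a1, b, r} := by
          intro M M' hM hM' hd hs
          have e : M = {a0, b, r} := eq_of_subset_of_card_le hs ((hcard3 a0).trans hM)
          have hab0 : a0 ≠ b := fun h => hdis _ _ ha0 (h ▸ hb)
          have har0 : a0 ≠ r := fun h => r2' (h ▸ ha0)
          constructor
          · intro h
            have := h (e.symm ▸ (by simp) : a0 ∈ M)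
            simp only [mem_insert, mem_singleton] at this
            rcases this with h | h | h
            · exact haa h.symm
            · exact hab0 h
            · exact har0 h
          · intro h
            have e' : M' = {a1, b, r} := eq_of_subset_of_card_le h ((hcard3 a1).trans hM')
            exact hd b (by rw [e]; simp) (by rw [e']; simp)
        by_cases s1 : N 1 ⊆ {a0, b, r}
        · exact ⟨a1, ha1, sw _ _ h31 h31' (hdis 1) s1⟩
        · by_cases s2 : N' 1 ⊆ {a0, b, r}
          · exact ⟨a1, ha1, (sw _ _ h31' h31 (fun z h h' => hdis 1 z h' h) s2).symm⟩
          · exact ⟨a0, ha0, s1, s2⟩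
      obtain ⟨a, ha, hs1, hs2⟩ := hch
      have hra : G.Adj r a := (hA' a ha r r1 r3).resolve_left fun h => r2' (h ▸ ha)
      have hrb : G.Adj r b := (hB' b hb r r1 r2').resolve_left fun h => r3 (h ▸ hb)
      have hto : ∀ z ∈ ({a, b, r} : Finset V), Jn G {a, b, r} z r := by
        intro z hz
        simp only [mem_insert, mem_singleton] at hz
        rcases hz with rfl | rfl | rfl
        · exact .single hra.symm (by simp) (by simp)
        · exact .single hrb.symm (by simp) (by simp)
        · exact .refl _
      have hPW : ({a, b, r} : Finset V) ⊆ W := by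
        intro z hz
        simp only [mem_insert, mem_singleton] at hz
        rcases hz with rfl | rfl | rfl
        · exact hNW _ ha
        · exact hNW' _ hb
        · exact r1
      refine win {a, b, r} hPW (fun x hx y hy => (hto x hx).trans (hto y hy).symm)
        ⟨a, by simp, ha⟩ ⟨b, by simp, hb⟩ hs1 hs2 ?_
      obtain ⟨q1, q2, q3⟩ := hRm r2 hr2
      have hQ : ∀ z ∈ W, z ≠ a → z ≠ b → z ≠ r → z ∈ W \ {a, b, r} := by
        intro z hz h1 h2 h3
        simp [hz, h1, h2, h3]
      have hr2Q : r2 ∈ W \ {a, b, r} := hQ r2 q1 (fun h => q2 (h ▸ ha)) (fun h => q3 (h ▸ hb)) hrr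
      obtain ⟨a', ha', haa'⟩ := exists_mem_ne (show 1 < #(N 0) by omega) a
      have ha'Q : a' ∈ W \ {a, b, r} := hQ a' (hNW _ ha') haa'
        (fun h => hdis _ _ ha' (h ▸ hb)) (fun h => r2' (h ▸ ha'))
      have hr2a : G.Adj r2 a' := (hA' a' ha' r2 q1 q3).resolve_left fun h => q2 (h ▸ ha')
      have hto2 : ∀ z ∈ W \ {a, b, r}, Jn G (W \ {a, b, r}) z r2 := by
        intro z hz
        have hzW := (mem_sdiff.1 hz).1
        by_cases hz2 : z = r2
        · rw [hz2]; exact .refl _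
        by_cases hzN : z ∈ N 0
        · exact .single ((hA' z hzN r2 q1 q3).resolve_left (Ne.symm hz2)).symm hz hr2Q
        by_cases hzN' : z ∈ N' 0
        · exact .single ((hB' z hzN' r2 q1 q2).resolve_left (Ne.symm hz2)).symm hz hr2Q
        · refine Jn.trans (.single ((hA' a' ha' z hzW hzN').resolve_left ?_) hz ha'Q)
            (.single hr2a.symm ha'Q hr2Q)
          exact fun h => hzN (h ▸ ha')
      exact fun x hx y hy => (hto2 x hx).trans (hto2 y hy).symm

/-- Three pairs of terminals: the central vertex joins one pair, and `two_links` joins the other two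
through the nonterminals. -/
theorem local_a : Local V ![2, 2, 2] 16 6 := by
  intro G v H T f hv hT hT6 hH h1 h2 hg
  have hgood : Good (fun _ => 2) f T := by
    intro i
    have := hg i
    fin_cases i <;> exact this
  by_cases hTe : T = ∅
  · subst hTe
    exact ⟨fun _ => ∅, by simp, by simp, by simp, by simp⟩
  obtain ⟨x0, hx0⟩ := nonempty_iff_ne_empty.2 hTe
  have hH9 : 9 ≤ #H := by
    have := h2 x0 hx0
    have := card_le_card (filter_subset (fun b => b = x0 ∨ G.Adj b x0 ∨ b ∈ T) H)
    omega
  obtain ⟨T', hTT', hT'H, hT'6⟩ := exists_subsuperset_card_eq hT hT6 (by omega)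
  set f0 : V → Option (Fin 3) := fun x => if x ∈ T then f x else none with hf0
  obtain ⟨g, g1, g2, g3⟩ := exists_fill hT'6 _ f0 (fun i => by
    refine (card_le_card fun z hz => ?_).trans (hgood i)
    obtain ⟨-, z2⟩ := mem_filter.1 hz
    by_cases hzT : z ∈ T
    · simp only [hf0, hzT, if_true] at z2
      exact mem_filter.2 ⟨hzT, z2⟩
    · simp [hf0, hzT] at z2) le_rfl
  have hcls : ∀ i, #{x ∈ T' | g x = some i} = 2 := by
    have e1 := card_eq_sum_card_fiberwise (s := T') (t := univ) (f := g) (fun _ _ => mem_univ _)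
    rw [Fintype.sum_option, hT'6, Fin.sum_univ_three] at e1
    have e2 : #{x ∈ T' | g x = none} = 0 := by
      rw [card_eq_zero, filter_eq_empty_iff]; exact fun x hx => g2 x hx
    have b0 := g1 0
    have b1 := g1 1
    have b2 := g1 2
    dsimp only at b0 b1 b2
    intro i
    fin_cases i <;> simp only [Fin.zero_eta, Fin.mk_one, Fin.reduceFinMk] <;> omega
  have hex : ∀ i, ∃ a b, a ≠ b ∧ ({x ∈ T' | g x = some i} : Finset V) = {a, b} := fun i =>
    card_eq_two.1 (hcls i)
  choose t t' htt' htc using hex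
  have ht : ∀ i, t i ∈ T' ∧ g (t i) = some i := fun i =>
    mem_filter.1 (htc i ▸ (by simp) : t i ∈ ({x ∈ T' | g x = some i} : Finset V))
  have ht' : ∀ i, t' i ∈ T' ∧ g (t' i) = some i := fun i =>
    mem_filter.1 (htc i ▸ (by simp) : t' i ∈ ({x ∈ T' | g x = some i} : Finset V))
  have hcl : ∀ i, ∀ x ∈ T', g x = some i → x = t i ∨ x = t' i := by
    intro i x hx hi
    have : x ∈ ({x ∈ T' | g x = some i} : Finset V) := mem_filter.2 ⟨hx, hi⟩
    rw [htc i] at this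
    simpa using this
  suffices Solv G (insert v H) T' g from this.mono le_rfl subset_rfl hTT' (fun x hx i hi =>
    g3 x i (by simpa [hf0, hx] using hi))
  set W := H \ T' with hW
  have hcW : #W ≤ 9 := by
    have := card_sdiff_add_card_eq_card hT'H
    rw [← hW] at this
    omega
  have h3 : ∀ s ∈ T', 3 ≤ #{b ∈ W | G.Adj s b} := by
    intro s hs
    by_cases hsT : s ∈ T
    · have a1 := h2 s hsT
      have : ({b ∈ H | b = s ∨ G.Adj b s ∨ b ∈ T} : Finset V) ⊆ T' ∪ {b ∈ W | G.Adj s b} := by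
        intro b hb
        obtain ⟨b1, b2⟩ := mem_filter.1 hb
        by_cases hbT : b ∈ T'
        · exact mem_union_left _ hbT
        · refine mem_union_right _ (mem_filter.2 ⟨mem_sdiff.2 ⟨b1, hbT⟩, ?_⟩)
          rcases b2 with rfl | b2 | b2
          · exact absurd hs hbT
          · exact b2.symm
          · exact absurd (hTT' b2) hbT
      have := card_le_card this
      have := card_union_le T' {b ∈ W | G.Adj s b}
      omega
    · have a1 := h1 s (hT'H hs) hsT
      have : ({b ∈ H | b = s ∨ G.Adj b s} : Finset V) ⊆ T' ∪ {b ∈ W | G.Adj s b} := by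
        intro b hb
        obtain ⟨b1, b2⟩ := mem_filter.1 hb
        by_cases hbT : b ∈ T'
        · exact mem_union_left _ hbT
        · refine mem_union_right _ (mem_filter.2 ⟨mem_sdiff.2 ⟨b1, hbT⟩, ?_⟩)
          rcases b2 with rfl | b2
          · exact absurd hs hbT
          · exact b2.symm
      have := card_le_card this
      have := card_union_le T' {b ∈ W | G.Adj s b}
      omega
  obtain ⟨i, j, hij, P, hP, Q, hQ, hPQ, cP, cQ, p1, p2, q1, q2⟩ := two_links (G := G) t t' hcW (by
    intro w hw
    obtain ⟨w1, w2⟩ := mem_sdiff.1 hw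
    have a1 := h1 w w1 (fun h => w2 (hTT' h))
    have : ({b ∈ H | b = w ∨ G.Adj b w} : Finset V) ⊆ {b ∈ W | b = w ∨ G.Adj b w} ∪
        (({i | G.Adj (t i) w} : Finset (Fin 3)).image t ∪
          ({i | G.Adj (t' i) w} : Finset (Fin 3)).image t') := by
      intro b hb
      obtain ⟨b1, b2⟩ := mem_filter.1 hb
      by_cases hbT : b ∈ T'
      · refine mem_union_right _ ?_
        have b3 : G.Adj b w := b2.resolve_left fun h => w2 (h ▸ hbT)
        obtain ⟨i, hi⟩ := Option.ne_none_iff_exists'.1 (g2 b hbT)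
        rcases hcl i b hbT hi with rfl | rfl
        · exact mem_union_left _ (mem_image_of_mem _ (by simpa using b3))
        · exact mem_union_right _ (mem_image_of_mem _ (by simpa using b3))
      · exact mem_union_left _ (mem_filter.2 ⟨mem_sdiff.2 ⟨b1, hbT⟩, b2⟩)
    have c1 := card_le_card this
    have c2 := card_union_le {b ∈ W | b = w ∨ G.Adj b w}
      (({i | G.Adj (t i) w} : Finset (Fin 3)).image t ∪
          ({i | G.Adj (t' i) w} : Finset (Fin 3)).image t')
    have c3 := card_union_le (({i | G.Adj (t i) w} : Finset (Fin 3)).image t)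
          (({i | G.Adj (t' i) w} : Finset (Fin 3)).image t')
    have c4 : #(({i | G.Adj (t i) w} : Finset (Fin 3)).image t) ≤ #{i | G.Adj (t i) w} :=
      card_image_le
    have c5 : #(({i | G.Adj (t' i) w} : Finset (Fin 3)).image t') ≤ #{i | G.Adj (t' i) w} :=
      card_image_le
    omega) (fun i => h3 _ (ht i).1) (fun i => h3 _ (ht' i).1)
  have hvH : v ∉ H := fun h => (hv v h).ne rfl
  -- private parts of the three connecting sets
  let R : Fin 3 → Finset V := fun l => if l = i then P else if l = j then Q else {v}
  have hR1 : ∀ l, ∀ z ∈ R l, z ∈ insert v H ∧ z ∉ T' := by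
    intro l z hz
    simp only [R] at hz
    split_ifs at hz
    · have := mem_sdiff.1 (hP hz); exact ⟨mem_insert_of_mem this.1, this.2⟩
    · have := mem_sdiff.1 (hQ hz); exact ⟨mem_insert_of_mem this.1, this.2⟩
    · rw [mem_singleton.1 hz]; exact ⟨mem_insert_self _ _, fun h => hvH (hT'H h)⟩
  have hvP : v ∉ P := fun h => hvH (mem_sdiff.1 (hP h)).1
  have hvQ : v ∉ Q := fun h => hvH (mem_sdiff.1 (hQ h)).1
  have hR2 : ∀ l m, l ≠ m → Disjoint (R l) (R m) := by
    intro l m hlm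
    have h2 : ∀ i j l m : Fin 3, l ≠ i → l ≠ j → m ≠ i → m ≠ j → i ≠ j → l = m := by decide
    simp only [R]
    split_ifs with c1 c2 c3 c4 c5 c6 c7 c8
    all_goals first
      | exact hPQ
      | exact hPQ.symm
      | (rw [disjoint_singleton_right]; assumption)
      | (rw [disjoint_singleton_left]; assumption)
      | (exfalso; apply hlm; grind)
  have hsing : Conn G {v} := by
    intro x hx y hy
    rw [mem_singleton.1 hx, mem_singleton.1 hy]; exact .refl _
  have hR3 : ∀ l, Conn G (R l) ∧ (∃ p ∈ R l, G.Adj (t l) p) ∧ (∃ p ∈ R l, G.Adj (t' l) p) := by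
    intro l
    simp only [R]
    split_ifs with c1 c2
    · subst c1; exact ⟨cP, p1, p2⟩
    · subst c2; exact ⟨cQ, q1, q2⟩
    · exact ⟨hsing, ⟨v, by simp, (hv _ (hT'H (ht l).1)).symm⟩,
        ⟨v, by simp, (hv _ (hT'H (ht' l).1)).symm⟩⟩
  refine ⟨fun l => {x ∈ T' | g x = some l} ∪ R l, fun l => ?_, fun l m hlm => ?_,
    fun x hx l hl => mem_union_left _ (mem_filter.2 ⟨hx, hl⟩), fun x hx y hy l hl hm => ?_⟩
  · refine union_subset (((filter_subset _ _).trans hT'H).trans (subset_insert _ _)) ?_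
    exact fun z hz => (hR1 l z hz).1
  · rw [disjoint_union_left, disjoint_union_right, disjoint_union_right]
    refine ⟨⟨?_, ?_⟩, ?_, hR2 l m hlm⟩
    · rw [Finset.disjoint_left]
      intro z hz hz'
      have := (mem_filter.1 hz).2.symm.trans (mem_filter.1 hz').2
      exact hlm (Option.some.inj this)
    · exact Finset.disjoint_left.2 fun z hz hz' => (hR1 m z hz').2 (mem_filter.1 hz).1
    · exact Finset.disjoint_left.2 fun z hz hz' => (hR1 l z hz).2 (mem_filter.1 hz').1
  · obtain ⟨c1, c2, c3⟩ := hR3 l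
    have hx' : ∃ p ∈ R l, G.Adj x p := by
      rcases hcl l x hx hl with rfl | rfl <;> assumption
    have hy' : ∃ p ∈ R l, G.Adj y p := by
      rcases hcl l y hy hm with rfl | rfl <;> assumption
    exact c1.link subset_union_right (mem_union_left _ (mem_filter.2 ⟨hx, hl⟩))
      (mem_union_left _ (mem_filter.2 ⟨hy, hm⟩)) hx' hy'

/-! ### Contraction-critical graphs: quotient colourings and minimum degree -/

theorem Jn.reach {G : SimpleGraph V} {C : Finset V} {s : Set V} (hC : ∀ x ∈ C, x ∈ s) {x y : V}
    (h : Jn G C x y) (hx : x ∈ s) (hy : y ∈ s) :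
    (G.induce s).Reachable ⟨x, hx⟩ ⟨y, hy⟩ := by
  induction h with
  | refl => exact .refl _
  | tail _ h ih =>
    exact (ih (hC _ h.2.1)).trans (Adj.reachable (by simpa using h.1))

/-- `c` is a proper colouring of `G[T]`. -/
def PC (G : SimpleGraph V) {m : ℕ} (T : Finset V) (c : V → Fin m) : Prop :=
  ∀ a ∈ T, ∀ b ∈ T, G.Adj a b → c a ≠ c b

/-- `I` is independent. -/
def Ind (G : SimpleGraph V) (I : Finset V) : Prop := ∀ a ∈ I, ∀ b ∈ I, ¬ G.Adj a b

/-- `I` is monochromatic under `c`. -/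
def Mono {m : ℕ} (c : V → Fin m) (I : Finset V) : Prop := ∀ a ∈ I, ∀ b ∈ I, c a = c b

/-- A quotient of `G[Ω]` with connected fibres and fewer vertices than `G` is a proper minor of a
`k`-contraction-critical graph, hence `(k - 1)`-colourable. -/
theorem quot [Fintype V] {G : SimpleGraph V} {k : ℕ} (hk : 2 ≤ k) (hG : ContractionCritical k G)
    (Ω : Finset V) (φ : V → V)
    (h1 : ∀ a ∈ Ω, ∀ b ∈ Ω, φ a = φ b → Jn G {z ∈ Ω | φ z = φ a} a b)
    (h2 : #(Ω.image φ) < Fintype.card V) :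
    ∃ c : V → Fin (k - 1), ∀ a ∈ Ω, ∀ b ∈ Ω, G.Adj a b → φ a ≠ φ b → c (φ a) ≠ c (φ b) := by
  let W := {w : V // w ∈ Ω.image φ}
  let H : SimpleGraph W :=
    { Adj := fun w w' => w ≠ w' ∧ ∃ a ∈ Ω, ∃ b ∈ Ω, φ a = w ∧ φ b = w' ∧ G.Adj a b
      symm := ⟨by
        rintro w w' ⟨h, a, ha, b, hb, e1, e2, hab⟩
        exact ⟨h.symm, b, hb, a, ha, e2, e1, hab.symm⟩⟩
      loopless := ⟨fun w h => h.1 rfl⟩ }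
  have hH : H.Colorable (k - 1) := by
    apply hG.2 W H
    constructor
    · refine ⟨fun w => {a | a ∈ Ω ∧ φ a = w}, fun w => ?_, fun w => ?_, fun w w' h => ?_, ?_⟩
      · obtain ⟨a, ha, e⟩ := mem_image.1 w.2
        exact ⟨a, ha, e⟩
      · obtain ⟨a, ha, e⟩ := mem_image.1 w.2
        have : Nonempty ({a | a ∈ Ω ∧ φ a = w} : Set V) := ⟨⟨a, ha, e⟩⟩
        refine ⟨fun x y => ?_⟩
        refine Jn.reach (C := {z ∈ Ω | φ z = w}) (fun z hz => mem_filter.1 hz) ?_ x.2 y.2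
        have := h1 x x.2.1 y y.2.1 (x.2.2.trans y.2.2.symm)
        rwa [x.2.2] at this
      · refine Set.disjoint_left.2 ?_
        rintro x ⟨-, e1⟩ ⟨-, e2⟩
        exact h (Subtype.ext (e1.symm.trans e2))
      · rintro w w' ⟨-, a, ha, b, hb, e1, e2, hab⟩
        exact ⟨a, ⟨ha, e1⟩, b, ⟨hb, e2⟩, hab⟩
    · rintro ⟨f, f1, -, f3, -⟩
      choose g hg using f1
      have hinj : Function.Injective g := by
        intro a b hab
        by_contra hne
        exact Set.disjoint_left.1 (f3 hne) (hg a) (hab ▸ hg b)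
      have := Fintype.card_le_of_injective g hinj
      have e : Fintype.card W = #(Ω.image φ) := Fintype.card_coe _
      omega
  obtain ⟨c⟩ := hH
  have : NeZero (k - 1) := ⟨by omega⟩
  refine ⟨fun v => if h : v ∈ Ω.image φ then c ⟨v, h⟩ else 0, fun a ha b hb hab hne => ?_⟩
  have ha' := mem_image_of_mem φ ha
  have hb' := mem_image_of_mem φ hb
  dsimp only
  rw [dif_pos ha', dif_pos hb']
  exact c.valid ⟨fun h => hne (congrArg Subtype.val h), a, ha, b, hb, rfl, rfl, hab⟩

/-- Disjoint connected sets whose traces on `T` are independent yield a `(k - 1)`-colouring of `G[T]`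
that is constant on each of these traces. -/
theorem con_col [Fintype V] {G : SimpleGraph V} {k : ℕ} (hk : 2 ≤ k)
    (hG : ContractionCritical k G) (T : Finset V) (hT : T ≠ univ) (C : Fin 3 → Finset V)
    (hd : ∀ i j, i ≠ j → Disjoint (C i) (C j)) (hI : ∀ i, Ind G (C i ∩ T))
    (hJ : ∀ i, ∀ x ∈ C i ∩ T, ∀ y ∈ C i ∩ T, Jn G (C i) x y) :
    ∃ c : V → Fin (k - 1), PC G T c ∧ ∀ i, Mono c (C i ∩ T) := by
  have hrep : ∀ i, ∃ r : V, (C i ∩ T).Nonempty → r ∈ C i ∩ T := fun i => by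
    rcases (C i ∩ T).eq_empty_or_nonempty with h | ⟨r, hr⟩
    · by_cases hV : Nonempty V
      · exact ⟨hV.some, fun h' => absurd h h'.ne_empty⟩
      · exact absurd (Finset.eq_univ_iff_forall.2 fun x => absurd ⟨x⟩ hV) hT
    · exact ⟨r, fun _ => hr⟩
  choose r hr using hrep
  let D : Fin 3 → Finset V := fun i => if (C i ∩ T).Nonempty then comp G (C i) (r i) else ∅
  have hDC : ∀ i, D i ⊆ C i := fun i => by
    dsimp only [D]; split_ifs
    · exact filter_subset _ _
    · simp
  have hD : ∀ i x, x ∈ D i → r i ∈ C i ∩ T ∧ r i ∈ D i ∧ Jn G (D i) (r i) x := by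
    intro i x hx
    by_cases h : (C i ∩ T).Nonempty
    · have e : D i = comp G (C i) (r i) := if_pos h
      rw [e] at hx ⊢
      have hj := (mem_comp.1 hx).2
      refine ⟨hr i h, mem_comp.2 ⟨(mem_inter.1 (hr i h)).1, .refl _⟩, ?_⟩
      have hx2 := hx
      clear hx
      induction hj with
      | refl => exact .refl _
      | @tail b d h1 h2 ih =>
        have hb : b ∈ comp G (C i) (r i) := mem_comp.2 ⟨h2.2.1, h1⟩
        exact (ih hb).trans (.single h2.1 hb hx2)
    · simp [D, h] at hx
  have hTD : ∀ i x, x ∈ C i ∩ T → x ∈ D i := by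
    intro i x hx
    have h : (C i ∩ T).Nonempty := ⟨x, hx⟩
    have e : D i = comp G (C i) (r i) := if_pos h
    rw [e]
    exact mem_comp.2 ⟨(mem_inter.1 hx).1, hJ i _ (hr i h) _ hx⟩
  have huniq : ∀ i j x, x ∈ D i → x ∈ D j → i = j := by
    intro i j x hi hj
    by_contra h
    exact Finset.disjoint_left.1 (hd i j h) (hDC i hi) (hDC j hj)
  let φ : V → V := fun v => if h : ∃ i, v ∈ D i then r h.choose else v
  have φ1 : ∀ i v, v ∈ D i → φ v = r i := by
    intro i v hv
    have h : ∃ i, v ∈ D i := ⟨i, hv⟩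
    have : h.choose = i := huniq _ _ v h.choose_spec hv
    simp only [φ]
    rw [dif_pos h, this]
  have φ2 : ∀ v, (∀ i, v ∉ D i) → φ v = v := fun v hv => dif_neg (by push Not; exact hv)
  have φ3 : ∀ a b, φ a = φ b → a = b ∨ ∃ i, a ∈ D i ∧ b ∈ D i := by
    intro a b hab
    by_cases ha : ∃ i, a ∈ D i
    · obtain ⟨i, hi⟩ := ha
      rw [φ1 i a hi] at hab
      by_cases hb : ∃ j, b ∈ D j
      · obtain ⟨j, hj⟩ := hb
        rw [φ1 j b hj] at hab
        have : i = j := huniq i j (r i) (hD i a hi).2.1 (hab ▸ (hD j b hj).2.1)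
        subst this
        exact .inr ⟨i, hi, hj⟩
      · push Not at hb
        rw [φ2 b hb] at hab
        exact .inr ⟨i, hi, hab ▸ (hD i a hi).2.1⟩
    · push Not at ha
      rw [φ2 a ha] at hab
      by_cases hb : ∃ j, b ∈ D j
      · obtain ⟨j, hj⟩ := hb
        rw [φ1 j b hj] at hab
        exact absurd (hab ▸ (hD j b hj).2.1) (ha j)
      · push Not at hb
        rw [φ2 b hb] at hab
        exact .inl hab
  let Ω := T ∪ univ.biUnion D
  have hDΩ : ∀ i, D i ⊆ Ω := fun i x hx => mem_union_right _ (mem_biUnion.2 ⟨i, mem_univ _, hx⟩)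
  obtain ⟨c, hc⟩ := quot hk hG Ω φ (by
    intro a ha b hb hab
    rcases φ3 a b hab with rfl | ⟨i, hi, hj⟩
    · exact .refl _
    · refine ((hD i a hi).2.2.symm.trans (hD i b hj).2.2).mono fun z hz => mem_filter.2 ⟨hDΩ i hz, ?_⟩
      rw [φ1 i z hz, φ1 i a hi]) (by
    rw [← card_univ]
    refine card_lt_card (_root_.ssubset_of_subset_of_ssubset (?_ : _ ⊆ T) (ssubset_univ_iff.2 hT))
    intro w hw
    obtain ⟨a, ha, rfl⟩ := mem_image.1 hw
    by_cases h : ∃ i, a ∈ D i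
    · obtain ⟨i, hi⟩ := h
      rw [φ1 i a hi]
      exact (mem_inter.1 (hD i a hi).1).2
    · push Not at h
      rw [φ2 a h]
      rcases mem_union.1 ha with h' | h'
      · exact h'
      · obtain ⟨i, -, hi⟩ := mem_biUnion.1 h'
        exact absurd hi (h i))
  refine ⟨fun v => c (φ v), fun a ha b hb hab => ?_, fun i a ha b hb => ?_⟩
  · refine hc a (mem_union_left _ ha) b (mem_union_left _ hb) hab fun e => ?_
    rcases φ3 a b e with rfl | ⟨i, hi, hj⟩
    · exact G.loopless.1 _ hab
    · exact hI i a (mem_inter.2 ⟨hDC i hi, ha⟩) b (mem_inter.2 ⟨hDC i hj, hb⟩) hab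
  · dsimp only
    rw [φ1 i a (hTD i a ha), φ1 i b (hTD i b hb)]

theorem no_col {G : SimpleGraph V} {k : ℕ} (hk : 1 ≤ k) (hG : ContractionCritical k G)
    (c : V → Fin (k - 1)) (hc : ∀ a b, G.Adj a b → c a ≠ c b) : False := by
  have h : G.Colorable (k - 1) := ⟨Coloring.mk c fun {a b} h => hc a b h⟩
  have := h.chromaticNumber_le
  rw [hG.1] at this
  have := Nat.cast_le.1 this
  omega

/-- Dirac's degree bound: contracting `v` with an independent set `I` of neighbours gives a colouring
of `G - v` in which `I` uses one colour, so the other neighbours of `v` use the remaining `k - 2`. -/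
theorem card_le_nbr [Fintype V] {G : SimpleGraph V} {k : ℕ} (hk : 2 ≤ k)
    (hG : ContractionCritical k G) (v : V) (I : Finset V) (hI : Ind G I)
    (hv : ∀ x ∈ I, G.Adj v x) (hne : I.Nonempty) : k ≤ #{u | G.Adj v u} - #I + 2 := by
  by_contra! hlt
  have hvI : v ∉ I := fun h => G.loopless.1 _ (hv v h)
  obtain ⟨c, hc, hm⟩ := con_col hk hG (univ.erase v) (fun h => by
      have := mem_univ v; rw [← h] at this; simp at this)
    (fun i => if i = 0 then insert v I else ∅) (fun i j hij => by
      by_cases hi : i = 0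
      · have : j ≠ 0 := fun h => hij (hi.trans h.symm)
        simp [this]
      · simp [hi]) (fun i a ha b hb => by
      by_cases hi : i = 0
      · simp only [hi, if_true, mem_inter, mem_insert, mem_erase] at ha hb
        exact hI a (by tauto) b (by tauto)
      · simp [hi] at ha) (fun i x hx y hy => by
      by_cases hi : i = 0
      · simp only [hi, if_true, mem_inter, mem_insert, mem_erase] at hx hy ⊢
        have hx' : x ∈ I := by tauto
        have hy' : y ∈ I := by tauto
        exact (Jn.single (hv x hx').symm (by simp [hx']) (by simp)).trans
          (.single (hv y hy') (by simp) (by simp [hy']))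
      · simp [hi] at hx)
  have hmI : Mono c I := fun a ha b hb => hm 0 a (by
      simp only [if_true, mem_inter, mem_insert, mem_erase, mem_univ, ha]
      exact ⟨.inr trivial, fun h => hvI (h ▸ ha), trivial⟩) b (by
      simp only [if_true, mem_inter, mem_insert, mem_erase, mem_univ, hb]
      exact ⟨.inr trivial, fun h => hvI (h ▸ hb), trivial⟩)
  obtain ⟨p, hp⟩ := hne
  set N : Finset V := {u | G.Adj v u} with hN
  have hsub : N.image c ⊆ insert (c p) ((N \ I).image c) := by
    intro z hz
    obtain ⟨u, hu, rfl⟩ := mem_image.1 hz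
    by_cases h : u ∈ I
    · rw [hmI u h p hp]; exact mem_insert_self _ _
    · exact mem_insert_of_mem (mem_image_of_mem _ (mem_sdiff.2 ⟨hu, h⟩))
  have hIN : I ⊆ N := fun x hx => by simp [hN, hv x hx]
  have h1 := card_le_card hsub
  have h2 := card_insert_le (c p) ((N \ I).image c)
  have h3 : #((N \ I).image c) ≤ #(N \ I) := card_image_le
  have h4 := card_sdiff_add_card_eq_card hIN
  have hlt' : #(N.image c) < #(univ : Finset (Fin (k - 1))) := by
    rw [card_univ, Fintype.card_fin]; omega
  obtain ⟨z, -, hz⟩ := exists_mem_notMem_of_card_lt_card hlt'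
  have hz' : ∀ u, G.Adj v u → c u ≠ z := fun u hu e =>
    hz (mem_image.2 ⟨u, by simp [hN, hu], e⟩)
  refine no_col (by omega) hG (fun u => if u = v then z else c u) fun a b hab => ?_
  by_cases ha : a = v
  · have hb : b ≠ v := fun h => G.loopless.1 v (by rwa [ha, h] at hab)
    simp only [ha, hb, if_true, if_false]
    exact (hz' b (ha ▸ hab)).symm
  · by_cases hb : b = v
    · simp only [ha, hb, if_true, if_false]
      exact hz' a (hb ▸ hab.symm)
    · simp only [ha, hb, if_false]
      exact hc a (by simp [ha]) b (by simp [hb]) hab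

/-- A noncomplete contraction-critical graph has minimum degree at least `k`: by `card_le_nbr` with two
nonadjacent neighbours, or else the closed neighbourhood is a clique on at least `k` vertices that is
a proper subgraph, hence `(k - 1)`-colourable, which is absurd. -/
theorem deg_ge [Fintype V] {G : SimpleGraph V} {k : ℕ} (hk : 3 ≤ k)
    (hG : ContractionCritical k G) (hnc : G ≠ ⊤) (v : V) : k ≤ #{u | G.Adj v u} := by
  by_contra! hlt
  set N : Finset V := {u | G.Adj v u} with hN
  by_cases hcl : ∃ x ∈ N, ∃ y ∈ N, x ≠ y ∧ ¬ G.Adj x y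
  · obtain ⟨x, hx, y, hy, hxy, hna⟩ := hcl
    have := card_le_nbr (by omega) hG v {x, y} (by
      have h2 : ¬ G.Adj y x := fun h => hna h.symm
      intro a ha b hb
      simp only [mem_insert, mem_singleton] at ha hb
      rcases ha with rfl | rfl <;> rcases hb with rfl | rfl <;> simp_all) (by
      intro z hz
      simp only [mem_insert, mem_singleton] at hz
      rcases hz with rfl | rfl
      · exact (mem_filter.1 hx).2
      · exact (mem_filter.1 hy).2) ⟨x, by simp⟩
    rw [card_pair hxy, ← hN] at this
    omega
  · push Not at hcl
    have hcl' : ∀ x ∈ insert v N, ∀ y ∈ insert v N, x ≠ y → G.Adj x y := by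
      intro x hx y hy hxy
      rcases mem_insert.1 hx with rfl | hx
      · rcases mem_insert.1 hy with rfl | hy
        · exact absurd rfl hxy
        · exact (mem_filter.1 hy).2
      · rcases mem_insert.1 hy with rfl | hy
        · exact (mem_filter.1 hx).2.symm
        · exact hcl x hx y hy hxy
    by_cases hu : insert v N = univ
    · refine hnc (SimpleGraph.ext ?_)
      ext x y
      refine ⟨fun h => h.ne, fun h => hcl' x (by simp [hu]) y (by simp [hu]) h⟩
    obtain ⟨c, hc, -⟩ := con_col (by omega) hG (insert v N) hu (fun _ => ∅) (by simp)
      (by simp [Ind]) (by simp)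
    have hN0 : N.Nonempty := by
      by_contra h
      rw [not_nonempty_iff_eq_empty] at h
      -- an isolated vertex can be given any colour
      obtain ⟨c, hc, -⟩ := con_col (by omega) hG (univ.erase v) (fun h => by
        have := mem_univ v; rw [← h] at this; simp at this) (fun _ => ∅) (by simp)
        (by simp [Ind]) (by simp)
      refine no_col (by omega) hG c fun a b hab => ?_
      refine hc a ?_ b ?_ hab
      · simp only [mem_erase, mem_univ, and_true]
        rintro rfl
        have : b ∈ N := by simp [hN, hab]
        simp [h] at this
      · simp only [mem_erase, mem_univ, and_true]
        rintro rfl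
        have : a ∈ N := by simp [hN, hab.symm]
        simp [h] at this
    obtain ⟨p, hp⟩ := hN0
    have h1 := card_le_nbr (by omega) hG v {p} (by simp [Ind]) (by
      intro x hx; rw [mem_singleton.1 hx]; exact (mem_filter.1 hp).2) ⟨p, by simp⟩
    rw [card_singleton, ← hN] at h1
    have h0 : 0 < #N := card_pos.2 ⟨p, hp⟩
    have h2 : #(insert v N) = #N + 1 := card_insert_of_notMem (by simp [hN])
    have h3 : #(insert v N) ≤ #(univ : Finset (Fin (k - 1))) :=
      card_le_card_of_injOn c (fun _ _ => mem_univ _) fun a ha b hb e => by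
        by_contra hne
        exact hc a ha b hb (hcl' a ha b hb hne) e
    rw [card_univ, Fintype.card_fin] at h3
    omega

/-! ### Colourings of the two parts of a minimum separator -/

/-- `B` is a union of components of `G - S`, and every nonempty subset of `B` has at least `#S` boundary
vertices. -/
structure Side [Fintype V] (G : SimpleGraph V) (S B : Finset V) : Prop where
  disj : Disjoint B S
  ne : B.Nonempty
  cl : ∀ b ∈ B, ∀ z, G.Adj b z → z ∈ B ∨ z ∈ S
  ex : ∀ Y ⊆ B, Y.Nonempty → #S ≤ #(bd G univ Y)

/-- Every union of components of `G[B]` has all of `S` as its boundary. -/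
theorem Side.nbr [Fintype V] {G : SimpleGraph V} {S B : Finset V} (h : Side G S B) {Y : Finset V}
    (hY : Y ⊆ B) (hne : Y.Nonempty) (hcl : ∀ y ∈ Y, ∀ z, G.Adj y z → z ∈ Y ∨ z ∈ S) :
    ∀ s ∈ S, ∃ y ∈ Y, G.Adj s y := by
  have : bd G univ Y ⊆ S := by
    intro u hu
    obtain ⟨-, h2, w, hw, h3⟩ := mem_bd.1 hu
    exact (hcl w hw u h3.symm).resolve_left h2
  have e := eq_of_subset_of_card_le this (h.ex Y hY hne)
  intro s hs
  rw [← e] at hs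
  exact (mem_bd.1 hs).2.2

/-- The linking theorem applies to `B ∪ X` for `X ⊆ S`: vertices of `B` have at least 17 neighbours,
of which at most `#S - #X` are lost. -/
theorem Side.solv [Fintype V] {G : SimpleGraph V} {S B : Finset V} (h : Side G S B)
    {c : Fin 3 → ℕ} {L N : ℕ} (hIH : ∀ n, IH V c L N n) (hd : ∀ v, 17 ≤ #{u | G.Adj v u})
    {X : Finset V} (hX : X ⊆ S) (hXN : #X ≤ N) (hne : X.Nonempty) (hL : L + (#S - #X) ≤ 17)
    {f : V → Option (Fin 3)} (hf : Good c f X) : Solv G (B ∪ X) X f := by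
  have hBX : Disjoint B X := h.disj.mono_right hX
  have hUX : (B ∪ X) \ X = B := by
    rw [union_sdiff_right, sdiff_eq_self_of_disjoint hBX]
  refine hIH _ G (B ∪ X) X f (Nat.lt_succ_self _) hXN ⟨subset_union_right, ?_, ?_⟩ hf
  · rw [hUX]
    obtain ⟨s, hs⟩ := hne
    obtain ⟨y, hy, hsy⟩ := h.nbr subset_rfl h.ne h.cl s (hX hs)
    have hsB : s ∉ B := Finset.disjoint_right.1 hBX hs
    let P : Finset (V × V) := {p ∈ (B ∪ X) ×ˢ (B ∪ X) | G.Adj p.1 p.2 ∧ p.1 ∈ B}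
    have h1 : insert (s, y) P ⊆ ({p ∈ (B ∪ X) ×ˢ (B ∪ X) | G.Adj p.1 p.2 ∧ (p.1 ∈ B ∨ p.2 ∈ B)} :
        Finset (V × V)) := by
      intro p hp
      rcases mem_insert.1 hp with rfl | hp
      · simp [hs, hy, hsy]
      · obtain ⟨a1, a2, a3⟩ := mem_filter.1 hp
        exact mem_filter.2 ⟨a1, a2, .inl a3⟩
    have h2 : #(insert (s, y) P) = #P + 1 := card_insert_of_notMem (by simp [P, hsB])
    have h3 : #P = ∑ b ∈ B, #{u ∈ B ∪ X | G.Adj b u} := by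
      rw [card_eq_sum_card_fiberwise (s := P) (t := B) (f := Prod.fst)
        (fun p hp => (mem_filter.1 hp).2.2)]
      refine sum_congr rfl fun b hb => ?_
      refine card_bij' (fun p _ => p.2) (fun u _ => (b, u)) ?_ ?_ ?_ ?_
      · rintro ⟨p, q⟩ hp
        simp only [P, mem_filter, mem_product] at hp ⊢
        obtain ⟨⟨⟨a1, a2⟩, a3, a4⟩, rfl⟩ := hp
        exact ⟨a2, a3⟩
      · intro u hu
        simp only [P, mem_filter, mem_product] at hu ⊢
        exact ⟨⟨⟨mem_union_left _ hb, hu.1⟩, hu.2, hb⟩, trivial⟩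
      · rintro ⟨p, q⟩ hp
        simp only [P, mem_filter, mem_product] at hp ⊢
        rw [hp.2]
      · intro u hu; rfl
    have h4 : ∀ b ∈ B, L ≤ #{u ∈ B ∪ X | G.Adj b u} := by
      intro b hb
      have : ({u | G.Adj b u} : Finset V) ⊆ {u ∈ B ∪ X | G.Adj b u} ∪ (S \ X) := by
        intro u hu
        have hu := (mem_filter.1 hu).2
        by_cases huX : u ∈ X
        · exact mem_union_left _ (mem_filter.2 ⟨mem_union_right _ huX, hu⟩)
        rcases h.cl b hb u hu with h' | h'
        · exact mem_union_left _ (mem_filter.2 ⟨mem_union_left _ h', hu⟩)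
        · exact mem_union_right _ (mem_sdiff.2 ⟨h', huX⟩)
      have a1 := card_le_card this
      have a2 := card_union_le {u ∈ B ∪ X | G.Adj b u} (S \ X)
      have a3 := hd b
      have a4 := card_sdiff_add_card_eq_card hX
      omega
    have h5 := card_nsmul_le_sum B _ L h4
    have h6 := card_le_card h1
    rw [h2, h3] at h6
    rw [smul_eq_mul, mul_comm] at h5
    unfold rr
    omega
  · rw [hUX]
    intro Y hY hlt
    rcases Y.eq_empty_or_nonempty with rfl | hYne
    · simp [rr]
    · exfalso
      have := h.ex Y hY hYne
      have h1 : bd G univ Y ⊆ bd G (B ∪ X) Y ∪ (S \ X) := by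
        intro u hu
        obtain ⟨-, a2, w, hw, a3⟩ := mem_bd.1 hu
        by_cases huX : u ∈ X
        · exact mem_union_left _ (mem_bd.2 ⟨mem_union_right _ huX, a2, w, hw, a3⟩)
        rcases h.cl w (hY hw) u a3.symm with h' | h'
        · exact mem_union_left _ (mem_bd.2 ⟨mem_union_left _ h', a2, w, hw, a3⟩)
        · exact mem_union_right _ (mem_sdiff.2 ⟨h', huX⟩)
      have a1 := card_le_card h1
      have a2 := card_union_le (bd G (B ∪ X) Y) (S \ X)
      have a4 := card_sdiff_add_card_eq_card hX
      have a5 := card_le_card hX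
      omega

/-- A single class `I ⊆ S` is joined through `B`. -/
theorem Side.joined [Fintype V] {G : SimpleGraph V} {S B : Finset V} (h : Side G S B)
    {I : Finset V} (hI : I ⊆ S) : ∀ x ∈ I, ∀ y ∈ I, Jn G (B ∪ I) x y := by
  obtain ⟨b, hb⟩ := h.ne
  have hn := h.nbr (Y := comp G B b) (filter_subset _ _) ⟨b, mem_comp.2 ⟨hb, .refl _⟩⟩
    (fun y hy z hz => (h.cl y (mem_comp.1 hy).1 z hz).imp_left fun hzB =>
      comp_closed hy hzB hz.symm)
  have hj : ∀ x ∈ I, Jn G (B ∪ I) x b := by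
    intro x hx
    obtain ⟨y, hy, hxy⟩ := hn x (hI hx)
    obtain ⟨hyB, hby⟩ := mem_comp.1 hy
    exact (Jn.single hxy (mem_union_right _ hx) (mem_union_left _ hyB)).trans
      (hby.mono subset_union_left).symm
  exact fun x hx y hy => (hj x hx).trans (hj y hy).symm

theorem Side.sub [Fintype V] {G : SimpleGraph V} {S B : Finset V} (h : Side G S B) :
    S ⊆ univ \ B := fun x hx => by simpa using Finset.disjoint_right.1 h.disj hx

/-- A separator `S` of at most seven vertices with sides `A` and `B` in a graph that has no
`m`-colouring, where `m` is one less than the chromatic number. The field `con` is the conclusion of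
`con_col`. -/
structure Cut [Fintype V] (m : ℕ) (G : SimpleGraph V) (S A B : Finset V) : Prop where
  hm : 16 ≤ m
  hS : #S ≤ 7
  deg : ∀ v, 17 ≤ #{u | G.Adj v u}
  sA : Side G S A
  sB : Side G S B
  cov : ∀ v, v ∈ A ∨ v ∈ B ∨ v ∈ S
  dAB : Disjoint A B
  con : ∀ T : Finset V, T ≠ univ → ∀ C : Fin 3 → Finset V,
    (∀ i j, i ≠ j → Disjoint (C i) (C j)) → (∀ i, Ind G (C i ∩ T)) →
    (∀ i, ∀ x ∈ C i ∩ T, ∀ y ∈ C i ∩ T, Jn G (C i) x y) →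
    ∃ c : V → Fin m, PC G T c ∧ ∀ i, Mono c (C i ∩ T)
  nocol : ∀ c : V → Fin m, (∀ a b, G.Adj a b → c a ≠ c b) → False

namespace Cut

/-- The assignment with classes `I`, `J`, `K`. -/
noncomputable def lab (I J K : Finset V) (v : V) : Option (Fin 3) :=
  if v ∈ I then some 0 else if v ∈ J then some 1 else if v ∈ K then some 2 else none

theorem lab_class {I J K : Finset V} (hIJ : Disjoint I J) (hIK : Disjoint I K)
    (hJK : Disjoint J K) : ∀ i, ({x ∈ I ∪ J ∪ K | lab I J K x = some i} : Finset V) = ![I, J, K] i := by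
  have a1 := Finset.disjoint_left.1 hIJ
  have a2 := Finset.disjoint_left.1 hIK
  have a3 := Finset.disjoint_left.1 hJK
  intro i
  ext x
  have := a1 (a := x); have := a2 (a := x); have := a3 (a := x)
  fin_cases i <;> by_cases x ∈ I <;> by_cases x ∈ J <;> by_cases x ∈ K <;> simp_all [lab]

variable [Fintype V] {m : ℕ} {G : SimpleGraph V} {S A B : Finset V}

theorem symm (h : Cut m G S A B) : Cut m G S B A :=
  ⟨h.hm, h.hS, h.deg, h.sB, h.sA, fun v => or_left_comm.1 (h.cov v), h.dAB.symm, h.con, h.nocol⟩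

/-- Colourings of the two parts that induce the same partition of `S` would combine, after a permutation
of the colours, to an `m`-colouring of `G`. -/
theorem no_match (h : Cut m G S A B) {c c' : V → Fin m} (hc : PC G (univ \ B) c)
    (hc' : PC G (univ \ A) c') (hk : ∀ x ∈ S, ∀ y ∈ S, c x = c y ↔ c' x = c' y) : False := by
  let r : Fin m → Fin m := fun z => if hz : ∃ s ∈ S, c' s = z then c hz.choose else z
  have hr : ∀ s ∈ S, r (c' s) = c s := by
    intro s hs
    have hz : ∃ t ∈ S, c' t = c' s := ⟨s, hs, rfl⟩
    simp only [r]
    rw [dif_pos hz]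
    exact (hk _ hz.choose_spec.1 _ hs).2 hz.choose_spec.2
  obtain ⟨g, hg⟩ := Finset.exists_equiv_extend_of_card_eq (α := Fin m) (β := Fin m) (t := univ)
    (by simp) (s := S.image c') (f := r) (subset_univ _) (by
      intro a ha b hb e
      obtain ⟨s, hs, rfl⟩ := mem_image.1 (mem_coe.1 ha)
      obtain ⟨t, ht, rfl⟩ := mem_image.1 (mem_coe.1 hb)
      rw [hr s hs, hr t ht] at e
      exact (hk s hs t ht).1 e)
  have hgS : ∀ s ∈ S, (g (c' s) : Fin m) = c s := fun s hs => by
    rw [hg _ (mem_image_of_mem _ hs), hr s hs]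
  have hginj : ∀ a b, (g a : Fin m) = g b → a = b := fun a b e =>
    g.injective (Subtype.ext e)
  have key : ∀ v, v ∉ A → v ∉ B → (g (c' v) : Fin m) = c v := fun v h1 h2 =>
    hgS v (((h.cov v).resolve_left h1).resolve_left h2)
  have cross : ∀ a b, G.Adj a b → a ∈ B → b ∈ A → False := fun a b hab ha hb => by
    rcases h.sB.cl a ha b hab with h1 | h1
    · exact Finset.disjoint_left.1 h.dAB hb h1
    · exact Finset.disjoint_left.1 h.sA.disj hb h1
  refine h.nocol (fun v => if v ∈ B then g (c' v) else c v) fun a b hab => ?_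
  have dA : ∀ v, v ∈ B → v ∉ A := fun v h1 h2 => Finset.disjoint_left.1 h.dAB h2 h1
  by_cases ha : a ∈ B <;> by_cases hb : b ∈ B <;> simp only [ha, hb, if_true, if_false]
  · exact fun e => hc' a (by simp [dA a ha]) b (by simp [dA b hb]) hab (hginj _ _ e)
  · have hbA : b ∉ A := fun h' => cross a b hab ha h'
    rw [← key b hbA hb]
    exact fun e => hc' a (by simp [dA a ha]) b (by simp [hbA]) hab (hginj _ _ e)
  · have haA : a ∉ A := fun h' => cross b a hab.symm hb h'
    rw [← key a haA ha]
    exact fun e => hc' a (by simp [haA]) b (by simp [dA b hb]) hab (hginj _ _ e)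
  · exact hc a (by simp [ha]) b (by simp [hb]) hab

/-- Contracting connected pieces of `G - A` gives colourings of `G - B`. -/
theorem ext (h : Cut m G S A B) (C : Fin 3 → Finset V) (hA : ∀ i, Disjoint (C i) A)
    (hd : ∀ i j, i ≠ j → Disjoint (C i) (C j)) (hI : ∀ i, Ind G (C i ∩ S))
    (hJ : ∀ i, ∀ x ∈ C i ∩ S, ∀ y ∈ C i ∩ S, Jn G (C i) x y) :
    ∃ c : V → Fin m, PC G (univ \ B) c ∧ ∀ i, Mono c (C i ∩ S) := by
  have e : ∀ i, C i ∩ (univ \ B) = C i ∩ S := by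
    intro i
    ext v
    simp only [mem_inter, mem_sdiff, mem_univ, true_and]
    refine and_congr_right fun hv => ⟨fun hB => ?_, fun hS hB => Finset.disjoint_left.1 h.sB.disj hB hS⟩
    rcases h.cov v with h1 | h1 | h1
    · exact absurd h1 (Finset.disjoint_left.1 (hA i) hv)
    · exact absurd h1 hB
    · exact h1
  have hne : (univ \ B : Finset V) ≠ univ := by
    obtain ⟨b, hb⟩ := h.sB.ne
    intro e
    have := mem_univ b
    rw [← e] at this
    simp [hb] at this
  have := h.con (univ \ B) hne C hd (by simpa only [e] using hI) (by simpa only [e] using hJ)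
  simpa only [e] using this

/-- A labelling of `X ⊆ S` with independent classes that is realised in `B ∪ X` gives a colouring of
`G - B` in which the classes are monochromatic. -/
theorem solv (h : Cut m G S A B) {X : Finset V} (hX : X ⊆ S) {f : V → Option (Fin 3)}
    (hf : ∀ x ∈ X, f x ≠ none) (hI : ∀ i, Ind G {x ∈ X | f x = some i})
    (hs : Solv G (B ∪ X) X f) :
    ∃ c : V → Fin m, PC G (univ \ B) c ∧ ∀ i, Mono c {x ∈ X | f x = some i} := by
  obtain ⟨C, h1, h2, h3, h4⟩ := hs
  have e : ∀ i, C i ∩ S = {x ∈ X | f x = some i} := by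
    intro i
    ext v
    simp only [mem_inter, mem_filter]
    constructor
    · rintro ⟨hv, hvS⟩
      have hvX : v ∈ X := (mem_union.1 (h1 i hv)).resolve_left
        (Finset.disjoint_right.1 h.sB.disj hvS)
      refine ⟨hvX, ?_⟩
      obtain ⟨j, hj⟩ := Option.ne_none_iff_exists'.1 (hf v hvX)
      rw [hj]
      by_contra hne
      exact Finset.disjoint_left.1 (h2 i j fun e => hne (e ▸ rfl)) hv (h3 v hvX j hj)
    · rintro ⟨hv, hi⟩
      exact ⟨h3 v hv i hi, hX hv⟩
  have := h.ext C (fun i => Finset.disjoint_left.2 fun v hv hvA => by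
      rcases mem_union.1 (h1 i hv) with h' | h'
      · exact Finset.disjoint_left.1 h.dAB hvA h'
      · exact Finset.disjoint_left.1 h.sA.disj hvA (hX h')) h2
    (by simpa only [e] using hI) (by
      intro i x hx y hy
      rw [e, mem_filter] at hx hy
      exact h4 x hx.1 y hy.1 i hx.2 hy.2)
  simpa only [e] using this

/-- Any independent subset of `S` is monochromatic in some colouring of `G - B`. -/
theorem L1 (h : Cut m G S A B) {I : Finset V} (hI : I ⊆ S) (iI : Ind G I) :
    ∃ c : V → Fin m, PC G (univ \ B) c ∧ Mono c I := by
  have hBI : (B ∪ I) ∩ S = I := by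
    rw [union_inter_distrib_right, disjoint_iff_inter_eq_empty.1 h.sB.disj, empty_union,
      inter_eq_left.2 hI]
  have e : ∀ i : Fin 3, (if i = 0 then B ∪ I else ∅) ∩ S = if i = 0 then I else ∅ := by
    intro i; split_ifs
    · exact hBI
    · simp
  obtain ⟨c, h1, h2⟩ := h.ext (fun i => if i = 0 then B ∪ I else ∅) (fun i => by
      split_ifs
      · exact disjoint_union_left.2 ⟨h.dAB.symm, (h.sA.disj.mono_right hI).symm⟩
      · simp) (fun i j hij => by
      by_cases hi : i = 0
      · have : j ≠ 0 := fun h => hij (hi.trans h.symm)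
        simp [this]
      · simp [hi]) (fun i => by
      rw [e]; split_ifs
      · exact iI
      · simp [Ind]) (fun i x hx y hy => by
      rw [e] at hx hy
      by_cases hi : i = 0
      · simp only [hi, if_true] at hx hy ⊢
        exact h.sB.joined hI x hx y hy
      · simp [hi] at hx)
  refine ⟨c, h1, ?_⟩
  have := h2 0
  rwa [e, if_pos rfl] at this

/-- The three classes `I`, `J`, `K` can be made monochromatic whenever the linking theorem covers them. -/
theorem links (h : Cut m G S A B) {c : Fin 3 → ℕ} {L N : ℕ} (hIH : ∀ n, IH V c L N n)
    {I J K : Finset V} (hX : I ∪ J ∪ K ⊆ S) (hXN : #(I ∪ J ∪ K) ≤ N) (hne : (I ∪ J ∪ K).Nonempty)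
    (hL : L + (#S - #(I ∪ J ∪ K)) ≤ 17) (hIJ : Disjoint I J) (hIK : Disjoint I K)
    (hJK : Disjoint J K) (iI : Ind G I) (iJ : Ind G J) (iK : Ind G K)
    (cI : #I ≤ c 0) (cJ : #J ≤ c 1) (cK : #K ≤ c 2) :
    ∃ c : V → Fin m, PC G (univ \ B) c ∧ Mono c I ∧ Mono c J ∧ Mono c K := by
  have e := lab_class hIJ hIK hJK
  obtain ⟨c, h1, h2⟩ := h.solv hX (f := lab I J K) (fun x hx => by
      simp only [mem_union] at hx
      unfold lab
      split_ifs <;> simp_all) (fun i => by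
      rw [e]; fin_cases i <;> assumption)
    (h.sB.solv hIH h.deg hX hXN hne hL fun i => by
      rw [e]; fin_cases i <;> assumption)
  simp only [e] at h2
  exact ⟨c, h1, h2 0, h2 1, h2 2⟩

/-- Two disjoint independent subsets of `S` can be made monochromatic. -/
theorem L2 (h : Cut m G S A B) {I J : Finset V} (hI : I ⊆ S) (hJ : J ⊆ S) (hIJ : Disjoint I J)
    (iI : Ind G I) (iJ : Ind G J) (cI : 2 ≤ #I) (cJ : 2 ≤ #J) :
    ∃ c : V → Fin m, PC G (univ \ B) c ∧ Mono c I ∧ Mono c J := by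
  have e : I ∪ J ∪ ∅ = I ∪ J := union_empty _
  have hc := card_union_of_disjoint hIJ
  have hle := card_le_card (union_subset hI hJ)
  have hS := h.hS
  obtain ⟨c, h1, h2, h3, -⟩ := h.links (K := ∅) (TW (by norm_num) local_b)
    (by rw [e]; exact union_subset hI hJ) (by rw [e]; omega)
    (by rw [e, ← card_pos]; omega) (by rw [e]; omega) hIJ (by simp) (by simp) iI iJ (by simp [Ind])
    (by simp; omega) (by simp; omega) (by simp)
  exact ⟨c, h1, h2, h3⟩

/-- Three disjoint independent pairs in `S` can be made monochromatic. -/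
theorem L3 (h : Cut m G S A B) {I J K : Finset V} (hI : I ⊆ S) (hJ : J ⊆ S) (hK : K ⊆ S)
    (hIJ : Disjoint I J) (hIK : Disjoint I K) (hJK : Disjoint J K)
    (iI : Ind G I) (iJ : Ind G J) (iK : Ind G K) (cI : #I = 2) (cJ : #J = 2) (cK : #K = 2) :
    ∃ c : V → Fin m, PC G (univ \ B) c ∧ Mono c I ∧ Mono c J ∧ Mono c K := by
  have hc : #(I ∪ J ∪ K) = 6 := by
    rw [card_union_of_disjoint (disjoint_union_left.2 ⟨hIK, hJK⟩), card_union_of_disjoint hIJ]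
    omega
  have hS := h.hS
  exact h.links (TW (by norm_num) local_a) (union_subset (union_subset hI hJ) hK) (by omega)
    (by rw [← card_pos]; omega) (by omega) hIJ hIK hJK iI iJ iK (by simp [cI]) (by simp [cJ])
    (by simp [cK])

end Cut

/-! ### Independent classes of sizes 3, 2, 2 -/

/-- The vertices of `T` coloured `p` or `q`. -/
noncomputable def two {m : ℕ} (T : Finset V) (c : V → Fin m) (p q : Fin m) : Finset V :=
  {z ∈ T | c z = p ∨ c z = q}

/-- A Kempe change at `x` with colours `p` and `q`, where `q` does not occur on `S`. -/
theorem kempe {G : SimpleGraph V} {m : ℕ} {T S : Finset V} {c : V → Fin m} (hc : PC G T c)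
    (hST : S ⊆ T) (x : V) (p q : Fin m) (hq : ∀ s ∈ S, c s ≠ q) :
    ∃ c' : V → Fin m, PC G T c' ∧
      ∀ s ∈ S, c' s = if c s = p ∧ Jn G (two T c p q) x s then q else c s := by
  refine ⟨fun z => if z ∈ comp G (two T c p q) x then Equiv.swap p q (c z) else c z, ?_, ?_⟩
  · intro a ha b hb hab
    have h1 := hc a ha b hb hab
    have key : ∀ a b, a ∈ T → b ∈ T → G.Adj a b → a ∈ comp G (two T c p q) x →
        b ∉ comp G (two T c p q) x → Equiv.swap p q (c a) ≠ c b := by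
      intro a b ha hb hab h2 h3 e
      have h4 : c a = p ∨ c a = q := (mem_filter.1 (mem_comp.1 h2).1).2
      refine h3 (comp_closed h2 (mem_filter.2 ⟨hb, ?_⟩) hab.symm)
      rw [← e]
      rcases h4 with h4 | h4 <;> rw [h4] <;> simp
    by_cases ha' : a ∈ comp G (two T c p q) x <;> by_cases hb' : b ∈ comp G (two T c p q) x <;>
      simp only [ha', hb', if_true, if_false]
    · exact fun e => h1 (Equiv.injective _ e)
    · exact key a b ha hb hab ha' hb'
    · exact (key b a hb ha hab.symm hb' ha').symm
    · exact h1
  · intro s hs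
    have h1 : s ∈ comp G (two T c p q) x ↔ c s = p ∧ Jn G (two T c p q) x s := by
      rw [mem_comp, two, mem_filter]
      exact and_congr_left fun _ => ⟨fun h => h.2.resolve_right (hq s hs), fun h => ⟨hST hs, .inl h⟩⟩
    simp only [h1]
    split_ifs with h
    · rw [h.1, Equiv.swap_apply_left]
    · rfl

/-- `S` consists of an independent triple `{a, b, c}` and independent pairs `{j1, j2}`, `{k1, k2}`; each
vertex of a pair has a neighbour in the triple and in the other pair, and `a` and `b` have a neighbour
in each pair. -/
structure Conf (G : SimpleGraph V) (S : Finset V) (a b c j1 j2 k1 k2 : V) : Prop where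
  mem : ∀ x, x ∈ S ↔ x = a ∨ x = b ∨ x = c ∨ x = j1 ∨ x = j2 ∨ x = k1 ∨ x = k2
  nd : [a, b, c, j1, j2, k1, k2].Nodup
  nab : ¬ G.Adj a b
  nac : ¬ G.Adj a c
  nbc : ¬ G.Adj b c
  nj : ¬ G.Adj j1 j2
  nk : ¬ G.Adj k1 k2
  hj1 : G.Adj j1 a ∨ G.Adj j1 b ∨ G.Adj j1 c
  hj2 : G.Adj j2 a ∨ G.Adj j2 b ∨ G.Adj j2 c
  hk1 : G.Adj k1 a ∨ G.Adj k1 b ∨ G.Adj k1 c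
  hk2 : G.Adj k2 a ∨ G.Adj k2 b ∨ G.Adj k2 c
  aj : G.Adj a j1 ∨ G.Adj a j2
  ak : G.Adj a k1 ∨ G.Adj a k2
  bj : G.Adj b j1 ∨ G.Adj b j2
  bk : G.Adj b k1 ∨ G.Adj b k2
  kj1 : G.Adj k1 j1 ∨ G.Adj k1 j2
  kj2 : G.Adj k2 j1 ∨ G.Adj k2 j2
  jk1 : G.Adj j1 k1 ∨ G.Adj j1 k2
  jk2 : G.Adj j2 k1 ∨ G.Adj j2 k2

theorem comp_joined {G : SimpleGraph V} {P : Finset V} {x z : V} (h : z ∈ comp G P x) :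
    Jn G (comp G P x) x z := by
  obtain ⟨-, hj⟩ := mem_comp.1 h
  induction hj with
  | refl => exact .refl _
  | @tail b d h1 h2 ih =>
    have hb : b ∈ comp G P x := mem_comp.2 ⟨h2.2.1, h1⟩
    exact (ih hb).trans (.single h2.1 hb h)

namespace Conf
variable {G : SimpleGraph V} {S : Finset V} {a b c j1 j2 k1 k2 : V}

theorem swapJK (h : Conf G S a b c j1 j2 k1 k2) : Conf G S a b c k1 k2 j1 j2 where
  mem x := by rw [h.mem]; tauto
  nd := by
    have := h.nd
    simp only [List.nodup_cons, List.mem_cons, List.not_mem_nil, not_or] at this ⊢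
    grind
  nab := h.nab
  nac := h.nac
  nbc := h.nbc
  nj := h.nk
  nk := h.nj
  hj1 := h.hk1
  hj2 := h.hk2
  hk1 := h.hj1
  hk2 := h.hj2
  aj := h.ak
  ak := h.aj
  bj := h.bk
  bk := h.bj
  kj1 := h.jk1
  kj2 := h.jk2
  jk1 := h.kj1
  jk2 := h.kj2

/-- A proper colouring of `S` in which `a`, `b`, and `j1`, `j2`, and `k1`, `k2` agree, and in
which `c` is alone. -/
def Split {m : ℕ} (a b c j1 j2 k1 k2 : V) (f : V → Fin m) : Prop :=
  f a = f b ∧ f j1 = f j2 ∧ f k1 = f k2 ∧ f a ≠ f c ∧ f a ≠ f j1 ∧ f a ≠ f k1 ∧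
    f c ≠ f j1 ∧ f c ≠ f k1 ∧ f j1 ≠ f k1

theorem ind2 {x y : V} (h : ¬ G.Adj x y) : Ind G {x, y} := by
  have h' : ¬ G.Adj y x := fun e => h e.symm
  intro u hu v hv
  simp only [mem_insert, mem_singleton] at hu hv
  rcases hu with rfl | rfl <;> rcases hv with rfl | rfl <;> simp_all

theorem ind3 {x y z : V} (h : ¬ G.Adj x y) (h2 : ¬ G.Adj x z) (h3 : ¬ G.Adj y z) :
    Ind G {x, y, z} := by
  have h' : ¬ G.Adj y x := fun e => h e.symm
  have h2' : ¬ G.Adj z x := fun e => h2 e.symm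
  have h3' : ¬ G.Adj z y := fun e => h3 e.symm
  intro u hu v hv
  simp only [mem_insert, mem_singleton] at hu hv
  rcases hu with rfl | rfl | rfl <;> rcases hv with rfl | rfl | rfl <;> simp_all


/-- Two colourings agreeing with the same four representatives induce the same partition of `S`. -/
theorem ker4 {m : ℕ} {f g : V → Fin m} {p q r s : V}
    (h : ∀ x ∈ S, f x = f p ∧ g x = g p ∨ f x = f q ∧ g x = g q ∨ f x = f r ∧ g x = g r ∨
      f x = f s ∧ g x = g s)
    (hf : f p ≠ f q ∧ f p ≠ f r ∧ f p ≠ f s ∧ f q ≠ f r ∧ f q ≠ f s ∧ f r ≠ f s)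
    (hg : g p ≠ g q ∧ g p ≠ g r ∧ g p ≠ g s ∧ g q ≠ g r ∧ g q ≠ g s ∧ g r ≠ g s) :
    ∀ x ∈ S, ∀ y ∈ S, f x = f y ↔ g x = g y := by
  intro x hx y hy
  obtain ⟨f1, f2, f3, f4, f5, f6⟩ := hf
  obtain ⟨g1, g2, g3, g4, g5, g6⟩ := hg
  have f1' := f1.symm
  have f2' := f2.symm
  have f3' := f3.symm
  have f4' := f4.symm
  have f5' := f5.symm
  have f6' := f6.symm
  have g1' := g1.symm
  have g2' := g2.symm
  have g3' := g3.symm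
  have g4' := g4.symm
  have g5' := g5.symm
  have g6' := g6.symm
  rcases h x hx with ⟨e1, e2⟩ | ⟨e1, e2⟩ | ⟨e1, e2⟩ | ⟨e1, e2⟩ <;>
    rcases h y hy with ⟨e3, e4⟩ | ⟨e3, e4⟩ | ⟨e3, e4⟩ | ⟨e3, e4⟩ <;>
    simp only [e1, e2, e3, e4, f1, f2, f3, f4, f5, f6, g1, g2, g3, g4, g5, g6,
      f1', f2', f3', f4', f5', f6', g1', g2', g3', g4', g5', g6']

/-- Two colourings agreeing with the same three representatives induce the same partition of `S`. -/
theorem ker3 {m : ℕ} {f g : V → Fin m} {p q r : V}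
    (h : ∀ x ∈ S, f x = f p ∧ g x = g p ∨ f x = f q ∧ g x = g q ∨ f x = f r ∧ g x = g r)
    (hf : f p ≠ f q ∧ f p ≠ f r ∧ f q ≠ f r) (hg : g p ≠ g q ∧ g p ≠ g r ∧ g q ≠ g r) :
    ∀ x ∈ S, ∀ y ∈ S, f x = f y ↔ g x = g y := by
  intro x hx y hy
  obtain ⟨f1, f2, f4⟩ := hf
  obtain ⟨g1, g2, g4⟩ := hg
  have f1' := f1.symm
  have f2' := f2.symm
  have f4' := f4.symm
  have g1' := g1.symm
  have g2' := g2.symm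
  have g4' := g4.symm
  rcases h x hx with ⟨e1, e2⟩ | ⟨e1, e2⟩ | ⟨e1, e2⟩ <;>
    rcases h y hy with ⟨e3, e4⟩ | ⟨e3, e4⟩ | ⟨e3, e4⟩ <;>
    simp only [e1, e2, e3, e4, f1, f2, f4, g1, g2, g4, f1', f2', f4', g1', g2', g4']

/-- Colour inequalities forced by the adjacencies of a configuration. -/
theorem sep (h : Conf G S a b c j1 j2 k1 k2) {m : ℕ} {T : Finset V} {f : V → Fin m} (hT : S ⊆ T)
    (hf : PC G T f) :
    (f j1 = f j2 → f a ≠ f j1 ∧ f b ≠ f j1 ∧ f k1 ≠ f j1 ∧ f k2 ≠ f j1) ∧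
    (f k1 = f k2 → f a ≠ f k1 ∧ f b ≠ f k1 ∧ f j1 ≠ f k1 ∧ f j2 ≠ f k1) ∧
    (f a = f b → f a = f c → f j1 ≠ f a ∧ f j2 ≠ f a ∧ f k1 ≠ f a ∧ f k2 ≠ f a) := by
  have hmem := h.mem
  have ha : a ∈ T := hT (by simp [hmem])
  have hb : b ∈ T := hT (by simp [hmem])
  have hc : c ∈ T := hT (by simp [hmem])
  have hj1 : j1 ∈ T := hT (by simp [hmem])
  have hj2 : j2 ∈ T := hT (by simp [hmem])
  have hk1 : k1 ∈ T := hT (by simp [hmem])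
  have hk2 : k2 ∈ T := hT (by simp [hmem])
  refine ⟨fun e => ⟨?_, ?_, ?_, ?_⟩, fun e => ⟨?_, ?_, ?_, ?_⟩, fun e e' => ⟨?_, ?_, ?_, ?_⟩⟩
  · simpa [← e] using h.aj.imp (hf _ ha _ hj1) (hf _ ha _ hj2)
  · simpa [← e] using h.bj.imp (hf _ hb _ hj1) (hf _ hb _ hj2)
  · simpa [← e] using h.kj1.imp (hf _ hk1 _ hj1) (hf _ hk1 _ hj2)
  · simpa [← e] using h.kj2.imp (hf _ hk2 _ hj1) (hf _ hk2 _ hj2)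
  · simpa [← e] using h.ak.imp (hf _ ha _ hk1) (hf _ ha _ hk2)
  · simpa [← e] using h.bk.imp (hf _ hb _ hk1) (hf _ hb _ hk2)
  · simpa [← e] using h.jk1.imp (hf _ hj1 _ hk1) (hf _ hj1 _ hk2)
  · simpa [← e] using h.jk2.imp (hf _ hj2 _ hk1) (hf _ hj2 _ hk2)
  · simpa [← e, ← e'] using h.hj1.imp (hf _ hj1 _ ha) (Or.imp (hf _ hj1 _ hb) (hf _ hj1 _ hc))
  · simpa [← e, ← e'] using h.hj2.imp (hf _ hj2 _ ha) (Or.imp (hf _ hj2 _ hb) (hf _ hj2 _ hc))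
  · simpa [← e, ← e'] using h.hk1.imp (hf _ hk1 _ ha) (Or.imp (hf _ hk1 _ hb) (hf _ hk1 _ hc))
  · simpa [← e, ← e'] using h.hk2.imp (hf _ hk2 _ ha) (Or.imp (hf _ hk2 _ hb) (hf _ hk2 _ hc))

theorem swapab (h : Conf G S a b c j1 j2 k1 k2) : Conf G S b a c j1 j2 k1 k2 where
  mem x := by rw [h.mem]; tauto
  nd := by
    have := h.nd
    simp only [List.nodup_cons, List.mem_cons, List.not_mem_nil, not_or] at this ⊢
    grind
  nab := fun e => h.nab e.symm
  nac := h.nbc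
  nbc := h.nac
  nj := h.nj
  nk := h.nk
  hj1 := or_left_comm.1 h.hj1
  hj2 := or_left_comm.1 h.hj2
  hk1 := or_left_comm.1 h.hk1
  hk2 := or_left_comm.1 h.hk2
  aj := h.bj
  ak := h.bk
  bj := h.aj
  bk := h.ak
  kj1 := h.kj1
  kj2 := h.kj2
  jk1 := h.jk1
  jk2 := h.jk2

theorem sub2 {x y : V} (hx : x ∈ S) (hy : y ∈ S) : ({x, y} : Finset V) ⊆ S := by
  simp [insert_subset_iff, hx, hy]

theorem sub3 {x y z : V} (hx : x ∈ S) (hy : y ∈ S) (hz : z ∈ S) : ({x, y, z} : Finset V) ⊆ S := by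
  simp [insert_subset_iff, hx, hy, hz]

variable [Fintype V] {m : ℕ} {A B : Finset V}

/-- If no colouring of `G - A` makes all three classes monochromatic, then in `G - B` a monochromatic
triple and first pair force the second pair: otherwise the partition of `S` is the one given by `L2`
on the other side. -/
theorem n1 (hc : Cut m G S A B) (h : Conf G S a b c j1 j2 k1 k2)
    (hB : ∀ f : V → Fin m, PC G (univ \ A) f → f a = f b → f a = f c → f j1 = f j2 →
      f k1 = f k2 → False) {f : V → Fin m} (hf : PC G (univ \ B) f) (e1 : f a = f b)
    (e2 : f a = f c) (e3 : f j1 = f j2) : f k1 = f k2 := by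
  by_contra e4
  have hmem := h.mem
  have nd := h.nd
  simp only [List.nodup_cons, List.mem_cons, List.not_mem_nil, not_or] at nd
  obtain ⟨g, hg, g1, g2⟩ := hc.symm.L2 (I := {a, b, c}) (J := {j1, j2})
    (sub3 (by simp [hmem]) (by simp [hmem]) (by simp [hmem]))
    (sub2 (by simp [hmem]) (by simp [hmem])) (by simp; tauto) (ind3 h.nab h.nac h.nbc) (ind2 h.nj)
    (by rw [card_eq_three.2 ⟨_, _, _, nd.1.1, nd.1.2.1, nd.2.1.1, rfl⟩]; norm_num)
    (by rw [card_pair nd.2.2.2.1.1])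
  have e1' : g a = g b := g1 _ (by simp) _ (by simp)
  have e2' : g a = g c := g1 _ (by simp) _ (by simp)
  have e3' : g j1 = g j2 := g2 _ (by simp) _ (by simp)
  have e4' : g k1 ≠ g k2 := hB g hg e1' e2' e3'
  obtain ⟨t1, -, t3⟩ := h.sep hc.sB.sub hf
  obtain ⟨t1', -, t3'⟩ := h.sep hc.sA.sub hg
  obtain ⟨-, -, t1, t2⟩ := t1 e3
  obtain ⟨t3, -, t4, t5⟩ := t3 e1 e2
  obtain ⟨-, -, t1', t2'⟩ := t1' e3'
  obtain ⟨t3', -, t4', t5'⟩ := t3' e1' e2'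
  refine hc.no_match hf hg (ker4 (p := a) (q := j1) (r := k1) (s := k2) (fun x hx => ?_)
    ⟨t3.symm, t4.symm, t5.symm, t1.symm, t2.symm, e4⟩
    ⟨t3'.symm, t4'.symm, t5'.symm, t1'.symm, t2'.symm, e4'⟩)
  rw [hmem] at hx
  rcases hx with rfl | rfl | rfl | rfl | rfl | rfl | rfl <;>
    simp [e1.symm, e2.symm, e1'.symm, e2'.symm, e3, e3']

/-- If no colouring of `G - A` makes all three classes monochromatic, then in `G - B` three
monochromatic pairs `{a, c}`, `{j1, j2}`, `{k1, k2}` force `b` to have the colour of `a`: otherwise the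
partition of `S` is the one given by `L3` on the other side. -/
theorem n3 (hc : Cut m G S A B) (h : Conf G S a b c j1 j2 k1 k2)
    (hB : ∀ f : V → Fin m, PC G (univ \ A) f → f a = f b → f a = f c → f j1 = f j2 →
      f k1 = f k2 → False) {f : V → Fin m} (hf : PC G (univ \ B) f) (e1 : f a = f c)
    (e2 : f j1 = f j2) (e3 : f k1 = f k2) : f a = f b := by
  by_contra e4
  have hmem := h.mem
  have nd := h.nd
  simp only [List.nodup_cons, List.mem_cons, List.not_mem_nil, not_or] at nd
  obtain ⟨g, hg, g1, g2, g3⟩ := hc.symm.L3 (I := {a, c}) (J := {j1, j2}) (K := {k1, k2})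
    (sub2 (by simp [hmem]) (by simp [hmem]))
    (sub2 (by simp [hmem]) (by simp [hmem]))
    (sub2 (by simp [hmem]) (by simp [hmem])) (by simp; tauto) (by simp; tauto) (by simp; tauto)
    (ind2 h.nac) (ind2 h.nj) (ind2 h.nk) (card_pair nd.1.2.1) (card_pair nd.2.2.2.1.1)
    (card_pair nd.2.2.2.2.2.1.1)
  have e1' : g a = g c := g1 _ (by simp) _ (by simp)
  have e2' : g j1 = g j2 := g2 _ (by simp) _ (by simp)
  have e3' : g k1 = g k2 := g3 _ (by simp) _ (by simp)
  have e4' : g a ≠ g b := fun e => hB g hg e e1' e2' e3'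
  obtain ⟨t1, t3, -⟩ := h.sep hc.sB.sub hf
  obtain ⟨t1', t3', -⟩ := h.sep hc.sA.sub hg
  obtain ⟨t1, t2, -, -⟩ := t1 e2
  obtain ⟨t3, t4, t5, -⟩ := t3 e3
  obtain ⟨t1', t2', -, -⟩ := t1' e2'
  obtain ⟨t3', t4', t5', -⟩ := t3' e3'
  refine hc.no_match hf hg (ker4 (p := a) (q := b) (r := j1) (s := k1) (fun x hx => ?_)
    ⟨e4, t1, t3, t2, t4, t5⟩ ⟨e4', t1', t3', t2', t4', t5'⟩)
  rw [hmem] at hx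
  rcases hx with rfl | rfl | rfl | rfl | rfl | rfl | rfl <;> simp [*]

set_option maxHeartbeats 1000000 in
/-- If no colouring of `G - A` makes all three classes monochromatic, then `G - B` has a `Split`
colouring, and `G - A` has a colouring with the same pairs in which `c` shares the colour of
`{j1, j2}` or of `{k1, k2}`.

From a colouring of `G - B` with all three classes monochromatic, Kempe chains using three colours
absent from `S` join `j1` to `j2` and `k1` to `k2`, and `a` to `b` but not to `c`. Recolouring the chain
of `c` gives the first colouring; contracting the three chains gives the second. -/
theorem main1 (hc : Cut m G S A B) (h : Conf G S a b c j1 j2 k1 k2)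
    (hB : ∀ f : V → Fin m, PC G (univ \ A) f → f a = f b → f a = f c → f j1 = f j2 →
      f k1 = f k2 → False) :
    (∃ f : V → Fin m, PC G (univ \ B) f ∧ Split a b c j1 j2 k1 k2 f) ∧
    ∃ f : V → Fin m, PC G (univ \ A) f ∧ f a = f b ∧ f j1 = f j2 ∧ f k1 = f k2 ∧
      (f c = f j1 ∨ f c = f k1) := by
  have hmem := h.mem
  have nd := h.nd
  simp only [List.nodup_cons, List.mem_cons, List.not_mem_nil, not_or] at nd
  have ha : a ∈ S := by simp [hmem]
  have hb : b ∈ S := by simp [hmem]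
  have hcS : c ∈ S := by simp [hmem]
  have hj1 : j1 ∈ S := by simp [hmem]
  have hj2 : j2 ∈ S := by simp [hmem]
  have hk1 : k1 ∈ S := by simp [hmem]
  have hk2 : k2 ∈ S := by simp [hmem]
  have hSB := hc.sB.sub
  -- a colouring in which all three classes are monochromatic
  obtain ⟨f, hf, e1, e2, e3, e4⟩ : ∃ f : V → Fin m, PC G (univ \ B) f ∧ f a = f b ∧ f a = f c ∧
      f j1 = f j2 ∧ f k1 = f k2 := by
    obtain ⟨g, hg, g1, g2, g3⟩ := hc.L3 (I := {a, c}) (J := {j1, j2}) (K := {k1, k2})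
      (sub2 ha hcS) (sub2 hj1 hj2) (sub2 hk1 hk2) (by simp; tauto) (by simp; tauto)
      (by simp; tauto) (ind2 h.nac) (ind2 h.nj) (ind2 h.nk) (card_pair nd.1.2.1)
      (card_pair nd.2.2.2.1.1) (card_pair nd.2.2.2.2.2.1.1)
    have e1' : g a = g c := g1 _ (by simp) _ (by simp)
    have e2' : g j1 = g j2 := g2 _ (by simp) _ (by simp)
    have e3' : g k1 = g k2 := g3 _ (by simp) _ (by simp)
    exact ⟨g, hg, n3 hc h hB hg e1' e2' e3', e1', e2', e3'⟩
  obtain ⟨s1, s2, -⟩ := h.sep hSB hf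
  obtain ⟨x1, -, x2, -⟩ := s1 e3
  obtain ⟨x3, -⟩ := s2 e4
  clear s1 s2
  -- three colours that do not occur on `S`
  obtain ⟨u1, u2, u3, u12, u13, u23, hu⟩ : ∃ u1 u2 u3 : Fin m, u1 ≠ u2 ∧ u1 ≠ u3 ∧ u2 ≠ u3 ∧
      ∀ u, (u = u1 ∨ u = u2 ∨ u = u3) → u ≠ f a ∧ u ≠ f j1 ∧ u ≠ f k1 := by
    have h1 : 3 ≤ #(univ \ {f a, f j1, f k1} : Finset (Fin m)) := by
      have h1 := le_card_sdiff {f a, f j1, f k1} (univ : Finset (Fin m))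
      have h2 : #({f a, f j1, f k1} : Finset (Fin m)) ≤ 3 := card_le_three
      have h3 := hc.hm
      rw [card_univ, Fintype.card_fin] at h1
      omega
    obtain ⟨U, hU, hU3⟩ := exists_subset_card_eq h1
    obtain ⟨u1, u2, u3, u12, u13, u23, rfl⟩ := card_eq_three.1 hU3
    refine ⟨u1, u2, u3, u12, u13, u23, fun u hu => ?_⟩
    have := hU (show u ∈ ({u1, u2, u3} : Finset (Fin m)) by simpa using hu)
    simpa using this
  have hval : ∀ s ∈ S, f s = f a ∨ f s = f j1 ∨ f s = f k1 := by
    intro s hs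
    rw [hmem] at hs
    rcases hs with rfl | rfl | rfl | rfl | rfl | rfl | rfl <;>
      simp [← e1, ← e2, ← e3, ← e4]
  have hun : ∀ u, (u = u1 ∨ u = u2 ∨ u = u3) → ∀ s ∈ S, f s ≠ u := by
    intro u hu' s hs
    obtain ⟨v1, v2, v3⟩ := hu u hu'
    rcases hval s hs with e | e | e <;> rw [e]
    · exact v1.symm
    · exact v2.symm
    · exact v3.symm
  obtain ⟨w11, w12, w13⟩ := hu u1 (.inl rfl)
  obtain ⟨w21, w22, w23⟩ := hu u2 (.inr (.inl rfl))
  obtain ⟨w31, w32, w33⟩ := hu u3 (.inr (.inr rfl))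
  have q1 := hun u1 (.inl rfl)
  have q2 := hun u2 (.inr (.inl rfl))
  have q3 := hun u3 (.inr (.inr rfl))
  set D1 := two (univ \ B) f (f a) u1 with hD1
  set D2 := two (univ \ B) f (f j1) u2 with hD2
  set D3 := two (univ \ B) f (f k1) u3 with hD3
  -- otherwise a Kempe change at `j1` splits the first pair only, against `n1`
  have jJ : Jn G D2 j1 j2 := by
    by_contra hj
    obtain ⟨g, hg, hgS⟩ := kempe hf hSB j1 (f j1) u2 q2
    rw [← hD2] at hgS
    have ga := hgS a ha
    have gb := hgS b hb
    have gc := hgS c hcS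
    have gj1 := hgS j1 hj1
    have gj2 := hgS j2 hj2
    have gk1 := hgS k1 hk1
    have gk2 := hgS k2 hk2
    simp only [← e1, ← e2, ← e3, ← e4, x1, x2, false_and, if_false, true_and, hj, Jn.refl,
      if_true] at ga gb gc gj1 gj2 gk1 gk2
    have := n1 hc h.swapJK (fun f h1 h2 h3 h4 h5 => hB f h1 h2 h3 h5 h4) hg (ga.trans gb.symm)
      (ga.trans gc.symm) (gk1.trans gk2.symm)
    rw [gj1, gj2] at this
    exact w22 this
  have jK : Jn G D3 k1 k2 := by
    by_contra hj
    obtain ⟨g, hg, hgS⟩ := kempe hf hSB k1 (f k1) u3 q3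
    rw [← hD3] at hgS
    have ga := hgS a ha
    have gb := hgS b hb
    have gc := hgS c hcS
    have gj1 := hgS j1 hj1
    have gj2 := hgS j2 hj2
    have gk1 := hgS k1 hk1
    have gk2 := hgS k2 hk2
    simp only [← e1, ← e2, ← e3, ← e4, x3, x2.symm, false_and, if_false, true_and, hj, Jn.refl,
      if_true] at ga gb gc gj1 gj2 gk1 gk2
    have := n1 hc h hB hg (ga.trans gb.symm) (ga.trans gc.symm) (gj1.trans gj2.symm)
    rw [gk1, gk2] at this
    exact w33 this
  -- in the chain through `I`, no vertex of `I` is separated from the two others except `c`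
  have sw : ∀ x, ∃ g : V → Fin m, PC G (univ \ B) g ∧
      (∀ z, z = a ∨ z = b ∨ z = c → g z = if Jn G D1 x z then u1 else f a) ∧
      g j1 = f j1 ∧ g j2 = f j1 ∧ g k1 = f k1 ∧ g k2 = f k1 := by
    intro x
    obtain ⟨g, hg, hgS⟩ := kempe hf hSB x (f a) u1 q1
    rw [← hD1] at hgS
    have ga := hgS a ha
    have gb := hgS b hb
    have gc := hgS c hcS
    have gj1 := hgS j1 hj1
    have gj2 := hgS j2 hj2
    have gk1 := hgS k1 hk1
    have gk2 := hgS k2 hk2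
    simp only [← e1, ← e2, ← e3, ← e4, x3.symm, x1.symm, false_and, if_false, true_and] at ga gb gc gj1 gj2 gk1 gk2
    refine ⟨g, hg, ?_, gj1, gj2, gk1, gk2⟩
    rintro z (rfl | rfl | rfl) <;> assumption
  have jab : Jn G D1 a b := by
    by_contra hab
    have hbc : Jn G D1 b c := by
      by_contra hbc
      obtain ⟨g, hg, g1, g2, g3, g4, g5⟩ := sw b
      have ga := g1 a (by simp)
      have gb := g1 b (by simp)
      have gc := g1 c (by simp)
      rw [if_neg fun e => hab e.symm] at ga
      rw [if_pos (.refl _)] at gb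
      rw [if_neg hbc] at gc
      have := n3 hc h hB hg (ga.trans gc.symm) (g2.trans g3.symm) (g4.trans g5.symm)
      rw [ga, gb] at this
      exact w11 this.symm
    have hac : Jn G D1 a c := by
      by_contra hac
      obtain ⟨g, hg, g1, g2, g3, g4, g5⟩ := sw a
      have ga := g1 a (by simp)
      have gb := g1 b (by simp)
      have gc := g1 c (by simp)
      rw [if_pos (.refl _)] at ga
      rw [if_neg hab] at gb
      rw [if_neg hac] at gc
      have := n3 hc h.swapab (fun f h1 h2 h3 h4 h5 => hB f h1 h2.symm (h2.symm.trans h3) h4 h5) hg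
        (gb.trans gc.symm) (g2.trans g3.symm) (g4.trans g5.symm)
      rw [ga, gb] at this
      exact w11 this.symm
    exact hab (hac.trans hbc.symm)
  have sub : ∀ p q, Disjoint (two (univ \ B) f p q) B := fun p q =>
    Finset.disjoint_left.2 fun z hz => (mem_sdiff.1 (mem_filter.1 hz).1).2
  have m2 : ∀ s ∈ S, s ∈ D2 → s = j1 ∨ s = j2 := by
    intro s hs h'
    have h1 := (mem_filter.1 h').2.resolve_right (q2 s hs)
    rw [hmem] at hs
    clear * - hs h1 e1 e2 e4 x1 x2
    rcases hs with rfl | rfl | rfl | rfl | rfl | rfl | rfl <;> simp_all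
  have m3 : ∀ s ∈ S, s ∈ D3 → s = k1 ∨ s = k2 := by
    intro s hs h'
    have h1 := (mem_filter.1 h').2.resolve_right (q3 s hs)
    rw [hmem] at hs
    clear * - hs h1 e1 e2 e3 x2 x3
    rcases hs with rfl | rfl | rfl | rfl | rfl | rfl | rfl <;> simp_all
  have m1 : ∀ s ∈ S, s ∈ D1 → s = a ∨ s = b ∨ s = c := by
    intro s hs h'
    have h1 := (mem_filter.1 h').2.resolve_right (q1 s hs)
    rw [hmem] at hs
    clear * - hs h1 e3 e4 x1 x3
    rcases hs with rfl | rfl | rfl | rfl | rfl | rfl | rfl <;> simp_all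
  have dtwo : ∀ p q p' q', p ≠ p' → p ≠ q' → q ≠ p' → q ≠ q' →
      Disjoint (two (univ \ B) f p q) (two (univ \ B) f p' q') := by
    intro p q p' q' i1 i2 i3 i4
    refine Finset.disjoint_left.2 fun z hz hz' => ?_
    rcases (mem_filter.1 hz).2 with i5 | i5 <;> rcases (mem_filter.1 hz').2 with i6 | i6
    · exact i1 (i5.symm.trans i6)
    · exact i2 (i5.symm.trans i6)
    · exact i3 (i5.symm.trans i6)
    · exact i4 (i5.symm.trans i6)
  have d12 : Disjoint D1 D2 := dtwo _ _ _ _ x1 w21.symm w12 u12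
  have d13 : Disjoint D1 D3 := dtwo _ _ _ _ x3 w31.symm w13 u13
  have d23 : Disjoint D2 D3 := dtwo _ _ _ _ x2.symm w32.symm w23 u23
  have indD2 : Ind G (D2 ∩ S) := by
    intro x hx y hy
    obtain ⟨hx1, hx2⟩ := mem_inter.1 hx
    obtain ⟨hy1, hy2⟩ := mem_inter.1 hy
    exact ind2 h.nj x (by simpa using m2 x hx2 hx1) y (by simpa using m2 y hy2 hy1)
  have indD3 : Ind G (D3 ∩ S) := by
    intro x hx y hy
    obtain ⟨hx1, hx2⟩ := mem_inter.1 hx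
    obtain ⟨hy1, hy2⟩ := mem_inter.1 hy
    exact ind2 h.nk x (by simpa using m3 x hx2 hx1) y (by simpa using m3 y hy2 hy1)
  have hm2 : j1 ∈ D2 ∧ j2 ∈ D2 :=
    ⟨mem_filter.2 ⟨hSB hj1, .inl rfl⟩, mem_filter.2 ⟨hSB hj2, .inl e3.symm⟩⟩
  have hm3 : k1 ∈ D3 ∧ k2 ∈ D3 :=
    ⟨mem_filter.2 ⟨hSB hk1, .inl rfl⟩, mem_filter.2 ⟨hSB hk2, .inl e4.symm⟩⟩
  -- contracting the chains, with a connected part `D` of the chain of the triple, colours `G - A`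
  have con : ∀ D ⊆ D1, (∀ x ∈ D ∩ S, ∀ y ∈ D ∩ S, Jn G D x y) →
      ∃ g : V → Fin m, PC G (univ \ A) g ∧ Mono g (D ∩ S) ∧ g j1 = g j2 ∧ g k1 = g k2 := by
    intro D hD hDj
    have indD : Ind G (D ∩ S) := by
      intro x hx y hy
      obtain ⟨hx1, hx2⟩ := mem_inter.1 hx
      obtain ⟨hy1, hy2⟩ := mem_inter.1 hy
      have hx3 := m1 x hx2 (hD hx1)
      have hy3 := m1 y hy2 (hD hy1)
      exact ind3 h.nab h.nac h.nbc x (by simpa using hx3) y (by simpa using hy3)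
    obtain ⟨g, hg, hgm⟩ := hc.symm.ext ![D, D2, D3] (fun i => by
        fin_cases i
        · exact (sub _ _).mono_left hD
        · exact sub _ _
        · exact sub _ _) (fun i j hij => by
        have d1 := d12.mono_left hD
        have d2 := d13.mono_left hD
        fin_cases i <;> fin_cases j <;>
          first
          | exact absurd rfl hij
          | assumption
          | exact Disjoint.symm (by assumption)) (fun i => by
        fin_cases i
        · exact indD
        · exact indD2
        · exact indD3) (fun i => by
        fin_cases i
        · exact hDj
        · intro x hx y hy
          obtain ⟨hx1, hx2⟩ := mem_inter.1 hx
          obtain ⟨hy1, hy2⟩ := mem_inter.1 hy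
          have := jJ.symm
          rcases m2 x hx2 hx1 with rfl | rfl <;> rcases m2 y hy2 hy1 with rfl | rfl <;>
            first
            | exact .refl _
            | assumption
        · intro x hx y hy
          obtain ⟨hx1, hx2⟩ := mem_inter.1 hx
          obtain ⟨hy1, hy2⟩ := mem_inter.1 hy
          have := jK.symm
          rcases m3 x hx2 hx1 with rfl | rfl <;> rcases m3 y hy2 hy1 with rfl | rfl <;>
            first
            | exact .refl _
            | assumption)
    exact ⟨g, hg, hgm 0, hgm 1 _ (mem_inter.2 ⟨hm2.1, hj1⟩) _ (mem_inter.2 ⟨hm2.2, hj2⟩),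
      hgm 2 _ (mem_inter.2 ⟨hm3.1, hk1⟩) _ (mem_inter.2 ⟨hm3.2, hk2⟩)⟩
  have hm1 : a ∈ D1 ∧ b ∈ D1 ∧ c ∈ D1 :=
    ⟨mem_filter.2 ⟨hSB ha, .inl rfl⟩, mem_filter.2 ⟨hSB hb, .inl e1.symm⟩,
      mem_filter.2 ⟨hSB hcS, .inl e2.symm⟩⟩
  have jac : ¬ Jn G D1 a c := by
    intro hac
    obtain ⟨g, hg, g1, g2, g3⟩ := con D1 subset_rfl (by
      intro x hx y hy
      have jall : ∀ x ∈ D1 ∩ S, Jn G D1 a x := by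
        intro x hx
        obtain ⟨hx1, hx2⟩ := mem_inter.1 hx
        rcases m1 x hx2 hx1 with rfl | rfl | rfl
        · exact .refl _
        · exact jab
        · exact hac
      exact (jall x hx).symm.trans (jall y hy))
    exact hB g hg (g1 _ (mem_inter.2 ⟨hm1.1, ha⟩) _ (mem_inter.2 ⟨hm1.2.1, hb⟩))
      (g1 _ (mem_inter.2 ⟨hm1.1, ha⟩) _ (mem_inter.2 ⟨hm1.2.2, hcS⟩)) g2 g3
  -- recolour the component of `c`
  obtain ⟨f', hf', hs⟩ : ∃ f : V → Fin m, PC G (univ \ B) f ∧ Split a b c j1 j2 k1 k2 f := by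
    obtain ⟨g, hg, g1, g2, g3, g4, g5⟩ := sw c
    have ga := g1 a (by simp)
    have gb := g1 b (by simp)
    have gc := g1 c (by simp)
    rw [if_neg fun e => jac e.symm] at ga
    rw [if_neg fun e => jac (jab.trans e.symm)] at gb
    rw [if_pos (.refl _)] at gc
    refine ⟨g, hg, ?_⟩
    rw [Split, ga, gb, gc, g2, g3, g4, g5]
    exact ⟨rfl, rfl, rfl, w11.symm, x1, x3, w12, w13, x2.symm⟩
  refine ⟨⟨f', hf', hs⟩, ?_⟩
  obtain ⟨g, hg, g1, g2, g3⟩ := con (comp G D1 a) (filter_subset _ _) (by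
    intro x hx y hy
    have jx : ∀ x ∈ comp G D1 a ∩ S, Jn G (comp G D1 a) a x := fun x hx =>
      comp_joined (mem_inter.1 hx).1
    exact (jx x hx).symm.trans (jx y hy))
  have gab : g a = g b := g1 _ (mem_inter.2 ⟨mem_comp.2 ⟨hm1.1, .refl _⟩, ha⟩) _
    (mem_inter.2 ⟨mem_comp.2 ⟨hm1.2.1, jab⟩, hb⟩)
  refine ⟨g, hg, gab, g2, g3, ?_⟩
  by_contra! hne
  obtain ⟨y1, y2⟩ := hne
  have y3 : g a ≠ g c := fun e => hB g hg gab e g2 g3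
  obtain ⟨s1, s2, -⟩ := h.sep hc.sA.sub hg
  obtain ⟨y4, -⟩ := s1 g2
  obtain ⟨y5, -, y6, -⟩ := s2 g3
  obtain ⟨t1, t2, t3, t4, t5, t6, t7, t8, t9⟩ := hs
  refine hc.no_match hf' hg (ker4 (p := a) (q := c) (r := j1) (s := k1) (fun x hx => ?_)
    ⟨t4, t5, t6, t7, t8, t9⟩ ⟨y3, y4, y5, y1, y2, y6⟩)
  rw [hmem] at hx
  clear * - hx t1 t2 t3 gab g2 g3
  rcases hx with rfl | rfl | rfl | rfl | rfl | rfl | rfl <;> simp [*]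

/-- `S` contains no two disjoint independent triples. -/
def NT (G : SimpleGraph V) (S : Finset V) : Prop :=
  ∀ I J : Finset V, I ⊆ S → J ⊆ S → Disjoint I J → Ind G I → Ind G J → #I = 3 → #J ≠ 3

/-- When `c` has the colour of `{j1, j2}` in `G - A`, the triple `{j1, j2, c}` and the pairs `{a, b}`,
`{k1, k2}` form a configuration as well. By `main1` with the two sides exchanged, `G - A` has a colouring
inducing the same partition of `S` as the `Split` colouring of `G - B`. -/
theorem main2 (hc : Cut m G S A B) (h : Conf G S a b c j1 j2 k1 k2) (hNT : NT G S)
    {g : V → Fin m} (hg : PC G (univ \ A) g) (gab : g a = g b) (g2 : g j1 = g j2)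
    (g3 : g k1 = g k2) (hcj : g c = g j1) {f : V → Fin m} (hf : PC G (univ \ B) f)
    (hs : Split a b c j1 j2 k1 k2 f) : False := by
  have hmem := h.mem
  have nd := h.nd
  simp only [List.nodup_cons, List.mem_cons, List.not_mem_nil, not_or] at nd
  obtain ⟨⟨dab, dac, daj1, daj2, dak1, dak2, -⟩, ⟨dbc, dbj1, dbj2, dbk1, dbk2, -⟩,
    ⟨dcj1, dcj2, dck1, dck2, -⟩, ⟨dj, djk1, djk2, -⟩, ⟨dj2k1, dj2k2, -⟩, -⟩ := nd
  have ha : a ∈ S := by simp [hmem]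
  have hb : b ∈ S := by simp [hmem]
  have hcS : c ∈ S := by simp [hmem]
  have hj1 : j1 ∈ S := by simp [hmem]
  have hj2 : j2 ∈ S := by simp [hmem]
  have hk1 : k1 ∈ S := by simp [hmem]
  have hk2 : k2 ∈ S := by simp [hmem]
  have nj1c : ¬ G.Adj j1 c := fun e => hg _ (hc.sA.sub hj1) _ (hc.sA.sub hcS) e hcj.symm
  have nj2c : ¬ G.Adj j2 c := fun e => hg _ (hc.sA.sub hj2) _ (hc.sA.sub hcS) e (g2.symm.trans hcj.symm)
  have tri : ∀ k ∈ S, k ≠ a → k ≠ b → k ≠ j1 → k ≠ j2 → k ≠ c → G.Adj k a ∨ G.Adj k b := by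
    intro k hk i1 i2 i3 i4 i5
    by_contra! hh
    refine hNT {k, a, b} {c, j1, j2} (sub3 hk ha hb) (sub3 hcS hj1 hj2)
      (by simp [Ne.symm i3, Ne.symm i4, Ne.symm i5, Ne.symm dac, Ne.symm daj1, Ne.symm daj2, Ne.symm dbc, Ne.symm dbj1,
        Ne.symm dbj2])
      (ind3 hh.1 hh.2 h.nab) (ind3 (fun e => nj1c e.symm) (fun e => nj2c e.symm) h.nj)
      (card_eq_three.2 ⟨_, _, _, i1, i2, dab, rfl⟩)
      (card_eq_three.2 ⟨_, _, _, dcj1, dcj2, dj, rfl⟩)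
  have h' : Conf G S j1 j2 c a b k1 k2 :=
    { mem := fun x => by rw [hmem]; clear * -; tauto
      nd := by
        have hp : [j1, j2, c, a, b, k1, k2].Perm [a, b, c, j1, j2, k1, k2] := by
          have e1 : [j1, j2, c, a, b].Perm [a, b, c, j1, j2] :=
            (List.perm_append_comm (l₁ := [j1, j2, c]) (l₂ := [a, b])).trans
              (List.Perm.append_left [a, b] (List.perm_append_comm (l₁ := [j1, j2]) (l₂ := [c])))
          exact e1.append_right [k1, k2]
        exact hp.nodup_iff.2 h.nd
      nab := h.nj
      nac := nj1c
      nbc := nj2c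
      nj := h.nab
      nk := h.nk
      hj1 := h.aj.imp_right .inl
      hj2 := h.bj.imp_right .inl
      hk1 := h.kj1.imp_right .inl
      hk2 := h.kj2.imp_right .inl
      aj := h.hj1.imp_right fun e => e.resolve_right nj1c
      ak := h.jk1
      bj := h.hj2.imp_right fun e => e.resolve_right nj2c
      bk := h.jk2
      kj1 := tri k1 hk1 (Ne.symm dak1) (Ne.symm dbk1) (Ne.symm djk1) (Ne.symm dj2k1)
        (Ne.symm dck1)
      kj2 := tri k2 hk2 (Ne.symm dak2) (Ne.symm dbk2) (Ne.symm djk2) (Ne.symm dj2k2)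
        (Ne.symm dck2)
      jk1 := h.ak
      jk2 := h.bk }
  obtain ⟨s1, s2, -⟩ := h.sep hc.sA.sub hg
  obtain ⟨y4, -⟩ := s1 g2
  obtain ⟨y5, -, y6, -⟩ := s2 g3
  obtain ⟨⟨g', hg', ht⟩, -⟩ := main1 hc.symm h' (by
    intro f hf i1 i2 i3 i4
    obtain ⟨s1, s2, -⟩ := h.sep hc.sB.sub hf
    obtain ⟨z4, -⟩ := s1 i1
    obtain ⟨z5, -, z6, -⟩ := s2 i4
    refine hc.no_match hf hg (ker3 (p := a) (q := j1) (r := k1) (fun x hx => ?_)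
      ⟨z4, z5, z6⟩ ⟨y4, y5, y6⟩)
    rw [hmem] at hx
    clear * - hx i1 i2 i3 i4 gab g2 g3 hcj
    rcases hx with rfl | rfl | rfl | rfl | rfl | rfl | rfl <;> simp [← i1, ← i2, ← i3, ← i4, ← gab, ← g2, ← g3, hcj])
  obtain ⟨t1, t2, t3, t4, t5, t6, t7, t8, t9⟩ := hs
  obtain ⟨t1', t2', t3', t4', t5', t6', t7', t8', t9'⟩ := ht
  refine hc.no_match hf hg' (ker4 (p := a) (q := c) (r := j1) (s := k1) (fun x hx => ?_)
    ⟨t4, t5, t6, t7, t8, t9⟩ ⟨t7'.symm, t5'.symm, t9', t4'.symm, t8', t6'⟩)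
  rw [hmem] at hx
  clear * - hx t1 t2 t3 t1' t2' t3'
  rcases hx with rfl | rfl | rfl | rfl | rfl | rfl | rfl <;> simp [*]

/-- A separator as in `Cut` does not have the shape `Conf`. -/
theorem not_conf (hc : Cut m G S A B) (h : Conf G S a b c j1 j2 k1 k2) (hNT : NT G S) :
    False := by
  -- some side has no colouring in which all three classes are monochromatic
  wlog hB : ∀ f : V → Fin m, PC G (univ \ A) f → f a = f b → f a = f c → f j1 = f j2 →
      f k1 = f k2 → False generalizing A B
  · refine this hc.symm fun f hf e1 e2 e3 e4 => ?_
    push Not at hB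
    obtain ⟨g, hg, e1', e2', e3', e4', -⟩ := hB
    obtain ⟨s1, s2, -⟩ := h.sep hc.sB.sub hf
    obtain ⟨z4, -⟩ := s1 e3
    obtain ⟨z5, -, z6, -⟩ := s2 e4
    obtain ⟨s1, s2, -⟩ := h.sep hc.sA.sub hg
    obtain ⟨y4, -⟩ := s1 e3'
    obtain ⟨y5, -, y6, -⟩ := s2 e4'
    refine hc.no_match hf hg (ker3 (p := a) (q := j1) (r := k1) (fun x hx => ?_)
      ⟨z4, z5, z6⟩ ⟨y4, y5, y6⟩)
    rw [h.mem] at hx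
    clear * - hx e1 e2 e3 e4 e1' e2' e3' e4'
    rcases hx with rfl | rfl | rfl | rfl | rfl | rfl | rfl <;>
      simp [← e1, ← e2, ← e3, ← e4, ← e1', ← e2', ← e3', ← e4']
  obtain ⟨⟨f, hf, hs⟩, g, hg, g1, g2, g3, g4⟩ := main1 hc h hB
  rcases g4 with g4 | g4
  · exact main2 hc h hNT hg g1 g2 g3 g4 hf hs
  · obtain ⟨t1, t2, t3, t4, t5, t6, t7, t8, t9⟩ := hs
    exact main2 hc h.swapJK hNT hg g1 g3 g2 g4 hf ⟨t1, t3, t2, t4, t6, t5, t8, t7, t9.symm⟩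
end Conf

/-! ### Greedy independent classes -/

/-- `I` is an independent subset of `Q` of maximum cardinality. -/
structure MaxInd (G : SimpleGraph V) (Q I : Finset V) : Prop where
  sub : I ⊆ Q
  ind : Ind G I
  max : ∀ I' ⊆ Q, Ind G I' → #I' ≤ #I

theorem exists_maxInd (G : SimpleGraph V) (Q : Finset V) : ∃ I, MaxInd G Q I := by
  obtain ⟨I, hI, hm⟩ := exists_max_image ({I ∈ Q.powerset | Ind G I} : Finset (Finset V)) card
    ⟨∅, mem_filter.2 ⟨by simp, by simp [Ind]⟩⟩
  obtain ⟨h1, h2⟩ := mem_filter.1 hI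
  exact ⟨I, mem_powerset.1 h1, h2, fun I' h3 h4 => hm I' (by simp [h3, h4])⟩

theorem Ind.subset {G : SimpleGraph V} {I J : Finset V} (h : Ind G J) (hIJ : I ⊆ J) : Ind G I :=
  fun a ha b hb => h a (hIJ ha) b (hIJ hb)

theorem Ind.insert {G : SimpleGraph V} {I : Finset V} (h : Ind G I) {y : V}
    (hy : ∀ z ∈ I, ¬ G.Adj y z) : Ind G (insert y I) := by
  intro a ha b hb
  rcases mem_insert.1 ha with rfl | ha' <;> rcases mem_insert.1 hb with rfl | hb'
  · exact G.loopless.irrefl _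
  · exact hy b hb'
  · exact fun e => hy a ha' e.symm
  · exact h a ha' b hb'

namespace MaxInd
variable {G : SimpleGraph V} {Q I J : Finset V}

theorem dom (h : MaxInd G Q I) {y : V} (hy : y ∈ Q) (hyI : y ∉ I) : ∃ z ∈ I, G.Adj y z := by
  by_contra! hn
  have := h.max _ (insert_subset hy h.sub) (h.ind.insert hn)
  rw [card_insert_of_notMem hyI] at this
  omega

/-- A colour class meeting a monochromatic maximum independent set lies inside it. -/
theorem both (h : MaxInd G Q I) {m : ℕ} {T : Finset V} {c : V → Fin m} (hc : PC G T c)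
    (hQ : Q ⊆ T) (hm : Mono c I) {x y : V} (hx : x ∈ Q) (hy : y ∈ Q) (e : c x = c y) :
    x ∈ I ↔ y ∈ I := by
  have key : ∀ x y, y ∈ Q → c x = c y → x ∈ I → y ∈ I := by
    intro x y hy e hxI
    by_contra hyI
    obtain ⟨z, hz, hyz⟩ := h.dom hy hyI
    exact hc y (hQ hy) z (hQ (h.sub hz)) hyz (e.symm.trans (hm x hxI z hz))
  exact ⟨key x y hy e, key y x hx e.symm⟩
end MaxInd

/-- A colouring in which the greedy classes `I`, `J`, `K` are monochromatic and the rest of `S` is a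
clique induces on `S` exactly the partition into these classes and singletons. -/
theorem kernel {G : SimpleGraph V} {S I J K : Finset V} (hI : MaxInd G S I)
    (hJ : MaxInd G (S \ I) J) (hK : MaxInd G ((S \ I) \ J) K)
    (hR : ∀ x ∈ ((S \ I) \ J) \ K, ∀ y ∈ ((S \ I) \ J) \ K, x ≠ y → G.Adj x y)
    {m : ℕ} {T : Finset V} {c : V → Fin m} (hc : PC G T c) (hT : S ⊆ T)
    (mI : Mono c I) (mJ : Mono c J) (mK : Mono c K) : ∀ x ∈ S, ∀ y ∈ S, c x = c y ↔
      x = y ∨ (x ∈ I ∧ y ∈ I) ∨ (x ∈ J ∧ y ∈ J) ∨ (x ∈ K ∧ y ∈ K) := by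
  intro x hx y hy
  constructor
  · intro e
    by_contra! hn
    obtain ⟨n0, n1, n2, n3⟩ := hn
    have b1 := hI.both hc hT mI hx hy e
    have xI : x ∉ I := fun h => n1 h (b1.1 h)
    have yI : y ∉ I := fun h => xI (b1.2 h)
    have hx1 := mem_sdiff.2 ⟨hx, xI⟩
    have hy1 := mem_sdiff.2 ⟨hy, yI⟩
    have b2 := hJ.both hc (sdiff_subset.trans hT) mJ hx1 hy1 e
    have xJ : x ∉ J := fun h => n2 h (b2.1 h)
    have yJ : y ∉ J := fun h => xJ (b2.2 h)
    have hx2 := mem_sdiff.2 ⟨hx1, xJ⟩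
    have hy2 := mem_sdiff.2 ⟨hy1, yJ⟩
    have b3 := hK.both hc ((sdiff_subset.trans sdiff_subset).trans hT) mK hx2 hy2 e
    have xK : x ∉ K := fun h => n3 h (b3.1 h)
    have yK : y ∉ K := fun h => xK (b3.2 h)
    exact hc x (hT hx) y (hT hy) (hR x (mem_sdiff.2 ⟨hx2, xK⟩) y (mem_sdiff.2 ⟨hy2, yK⟩) n0) e
  · rintro (rfl | ⟨h1, h2⟩ | ⟨h1, h2⟩ | ⟨h1, h2⟩)
    · rfl
    · exact mI _ h1 _ h2
    · exact mJ _ h1 _ h2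
    · exact mK _ h1 _ h2

theorem mono_of_card {m : ℕ} (c : V → Fin m) {I : Finset V} (h : #I ≤ 1) : Mono c I :=
  fun a ha b hb => by rw [card_le_one.1 h a ha b hb]

/-- If the third greedy class has at most one element, then what remains is a clique. -/
theorem clique_rest {G : SimpleGraph V} {S I J K : Finset V}
    (hK : MaxInd G ((S \ I) \ J) K) (hk : #K ≤ 1) :
    ∀ x ∈ ((S \ I) \ J) \ K, ∀ y ∈ ((S \ I) \ J) \ K, x ≠ y → G.Adj x y := by
  intro x hx y hy hxy
  by_contra hn
  have := hK.max {x, y} (Conf.sub2 (mem_sdiff.1 hx).1 (mem_sdiff.1 hy).1) (Conf.ind2 hn)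
  rw [card_pair hxy] at this
  omega

namespace Cut
variable [Fintype V] {m : ℕ} {G : SimpleGraph V} {S A B I J K : Finset V}

/-- Greedy classes whose remainder is a clique cannot be monochromatic on both sides. -/
theorem greedy (h : Cut m G S A B) (hI : MaxInd G S I)
    (hJ : MaxInd G (S \ I) J) (hK : MaxInd G ((S \ I) \ J) K)
    (hR : ∀ x ∈ ((S \ I) \ J) \ K, ∀ y ∈ ((S \ I) \ J) \ K, x ≠ y → G.Adj x y)
    (h1 : ∃ c : V → Fin m, PC G (univ \ B) c ∧ Mono c I ∧ Mono c J ∧ Mono c K)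
    (h2 : ∃ c : V → Fin m, PC G (univ \ A) c ∧ Mono c I ∧ Mono c J ∧ Mono c K) : False := by
  obtain ⟨c, pc, m1, m2, m3⟩ := h1
  obtain ⟨c', pc', m1', m2', m3'⟩ := h2
  exact h.no_match pc pc' fun x hx y hy =>
    (kernel hI hJ hK hR pc h.sB.sub m1 m2 m3 x hx y hy).trans
      (kernel hI hJ hK hR pc' h.sA.sub m1' m2' m3' x hx y hy).symm

/-- If independent subsets of `S` have at most three elements, no two independent triples are disjoint:
they would be greedy classes leaving at most one vertex. -/
theorem nt (h : Cut m G S A B) (hmax : ∀ I ⊆ S, Ind G I → #I ≤ 3) : Conf.NT G S := by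
  intro I J hI hJ hd iI iJ cI cJ
  obtain ⟨K, hK⟩ := exists_maxInd G ((S \ I) \ J)
  have hJ' : J ⊆ S \ I := subset_sdiff.2 ⟨hJ, hd.symm⟩
  have a1 := card_sdiff_add_card_eq_card hI
  have a2 := card_sdiff_add_card_eq_card hJ'
  have a3 := card_le_card hK.sub
  have a4 := h.hS
  have cK : #K ≤ 1 := by omega
  refine h.greedy (I := I) (J := J) ⟨hI, iI, fun I' h1 h2 => cI ▸ hmax I' h1 h2⟩
    ⟨hJ', iJ, fun I' h1 h2 => cJ ▸ hmax I' (h1.trans sdiff_subset) h2⟩ hK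
    (clique_rest hK cK) ?_ ?_
  · obtain ⟨c, h1, h2, h3⟩ := h.L2 hI hJ hd iI iJ (by omega) (by omega)
    exact ⟨c, h1, h2, h3, mono_of_card c cK⟩
  · obtain ⟨c, h1, h2, h3⟩ := h.symm.L2 hI hJ hd iI iJ (by omega) (by omega)
    exact ⟨c, h1, h2, h3, mono_of_card c cK⟩

/-- Greedy classes of sizes 3, 2, 2 form a configuration excluded by `not_conf`: at most one vertex of
the triple is nonadjacent to a whole pair, and it takes the role of `c`. -/
theorem seven (h : Cut m G S A B) (hI : MaxInd G S I) (hJ : MaxInd G (S \ I) J)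
    (hK : MaxInd G ((S \ I) \ J) K) (cI : #I = 3) (cJ : #J = 2) (cK : #K = 2) : False := by
  have hNT : Conf.NT G S := h.nt fun I' h1 h2 => cI ▸ hI.max I' h1 h2
  have a1 := card_sdiff_add_card_eq_card hI.sub
  have a2 := card_sdiff_add_card_eq_card hJ.sub
  have a3 := card_le_card hK.sub
  have a4 := h.hS
  have eK : K = (S \ I) \ J := eq_of_subset_of_card_le hK.sub (by omega)
  have hJS : J ⊆ S := hJ.sub.trans sdiff_subset
  have hKI : K ⊆ S \ I := hK.sub.trans sdiff_subset
  have hKS : K ⊆ S := hKI.trans sdiff_subset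
  have dJ : ∀ x ∈ I, x ∉ J := fun x h1 h2 => (mem_sdiff.1 (hJ.sub h2)).2 h1
  have dK : ∀ x ∈ I, x ∉ K := fun x h1 h2 => (mem_sdiff.1 (hKI h2)).2 h1
  have dJK : ∀ x ∈ J, x ∉ K := fun x h1 h2 => (mem_sdiff.1 (hK.sub h2)).2 h1
  have hK' : MaxInd G (S \ I) K := ⟨hKI, hK.ind, fun I' h1 h2 => by
    rw [cK, ← cJ]; exact hJ.max I' h1 h2⟩
  let Att : V → Prop := fun x => (∀ z ∈ J, ¬ G.Adj x z) ∨ ∀ z ∈ K, ¬ G.Adj x z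
  -- two vertices of the triple cannot attach to the same pair
  have same : ∀ x ∈ I, ∀ y ∈ I, x ≠ y → ∀ P ⊆ S, Ind G P → #P = 2 → (∀ z ∈ I, z ∉ P) →
      (∀ z ∈ P, ¬ G.Adj x z) → (∀ z ∈ P, ¬ G.Adj y z) → False := by
    intro x hx y hy hxy P hP iP cP dP h1 h2
    have := hI.max (insert x (insert y P))
      (insert_subset (hI.sub hx) (insert_subset (hI.sub hy) hP))
      ((iP.insert h2).insert fun z hz => by
        rcases mem_insert.1 hz with rfl | hz
        · exact hI.ind x hx z hy
        · exact h1 z hz)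
    rw [card_insert_of_notMem (by simp [hxy, dP x hx]), card_insert_of_notMem (dP y hy)] at this
    omega
  -- nor to different pairs, by the absence of two disjoint triples
  have diff : ∀ x ∈ I, ∀ y ∈ I, x ≠ y → (∀ z ∈ J, ¬ G.Adj x z) → (∀ z ∈ K, ¬ G.Adj y z) →
      False := by
    intro x hx y hy hxy h1 h2
    refine hNT (insert x J) (insert y K) (insert_subset (hI.sub hx) hJS)
      (insert_subset (hI.sub hy) hKS) ?_ (hJ.ind.insert h1) (hK.ind.insert h2)
      (by rw [card_insert_of_notMem (dJ x hx)]; omega)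
      (by rw [card_insert_of_notMem (dK y hy)]; omega)
    rw [Finset.disjoint_left]
    intro z hz hz'
    rcases mem_insert.1 hz with rfl | hz <;> rcases mem_insert.1 hz' with e | hz'
    · exact hxy e
    · exact dK _ hx hz'
    · exact dJ _ hy (e ▸ hz)
    · exact dJK _ hz hz'
  have uniq : ∀ x ∈ I, ∀ y ∈ I, x ≠ y → Att x → Att y → False := by
    rintro x hx y hy hxy (h1 | h1) (h2 | h2)
    · exact same x hx y hy hxy J hJS hJ.ind cJ dJ h1 h2
    · exact diff x hx y hy hxy h1 h2
    · exact diff y hy x hx hxy.symm h2 h1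
    · exact same x hx y hy hxy K hKS hK.ind cK dK h1 h2
  obtain ⟨c, hcI, hcA⟩ : ∃ c ∈ I, ∀ x ∈ I, x ≠ c → ¬ Att x := by
    by_cases hA : ∃ c ∈ I, Att c
    · obtain ⟨c, h1, h2⟩ := hA
      exact ⟨c, h1, fun x hx hxc h3 => uniq x hx c h1 hxc h3 h2⟩
    · obtain ⟨c, h1⟩ := card_pos.1 (by omega : 0 < #I)
      exact ⟨c, h1, fun x hx _ h3 => hA ⟨x, hx, h3⟩⟩
  obtain ⟨a, b, hab, eab⟩ := card_eq_two.1
    (by rw [card_erase_of_mem hcI, cI] : #(I.erase c) = 2)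
  obtain ⟨j1, j2, hj, rfl⟩ := card_eq_two.1 cJ
  obtain ⟨k1, k2, hk, rfl⟩ := card_eq_two.1 cK
  have ha := mem_erase.1 (eab ▸ mem_insert_self a {b} : a ∈ I.erase c)
  have hb := mem_erase.1 (eab ▸ mem_insert_of_mem (mem_singleton_self b) : b ∈ I.erase c)
  have hIe : ∀ x, x ∈ I ↔ x = a ∨ x = b ∨ x = c := by
    intro x
    have h1 : x ∈ I.erase c ↔ x = a ∨ x = b := by rw [eab]; simp
    rw [mem_erase] at h1
    constructor
    · intro hx
      by_cases hxc : x = c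
      · exact .inr (.inr hxc)
      · rcases h1.1 ⟨hxc, hx⟩ with h' | h'
        · exact .inl h'
        · exact .inr (.inl h')
    · rintro (rfl | rfl | rfl)
      exacts [ha.2, hb.2, hcI]
  have mj1 : j1 ∈ ({j1, j2} : Finset V) := by simp
  have mj2 : j2 ∈ ({j1, j2} : Finset V) := by simp
  have mk1 : k1 ∈ ({k1, k2} : Finset V) := by simp
  have mk2 : k2 ∈ ({k1, k2} : Finset V) := by simp
  have adjI : ∀ x ∈ S, x ∉ I → G.Adj x a ∨ G.Adj x b ∨ G.Adj x c := by
    intro x hx hxI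
    obtain ⟨z, hz, hxz⟩ := hI.dom hx hxI
    rcases (hIe z).1 hz with rfl | rfl | rfl <;> simp [hxz]
  have nI : ∀ x ∈ S \ I, x ∉ I := fun x hx => (mem_sdiff.1 hx).2
  have adjP : ∀ p q x : V, (∃ z ∈ ({p, q} : Finset V), G.Adj x z) → G.Adj x p ∨ G.Adj x q := by
    rintro p q x ⟨z, hz, hxz⟩
    rcases mem_insert.1 hz with rfl | hz
    · exact .inl hxz
    · exact .inr (mem_singleton.1 hz ▸ hxz)
  have att : ∀ x ∈ I, x ≠ c → (G.Adj x j1 ∨ G.Adj x j2) ∧ (G.Adj x k1 ∨ G.Adj x k2) := by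
    intro x hx hxc
    have := hcA x hx hxc
    simp only [Att, not_or] at this
    push Not at this
    exact ⟨adjP _ _ _ this.1, adjP _ _ _ this.2⟩
  refine Conf.not_conf h (a := a) (b := b) (c := c) (j1 := j1) (j2 := j2) (k1 := k1) (k2 := k2)
    { mem := ?_, nd := ?_
      nab := hI.ind a ha.2 b hb.2, nac := hI.ind a ha.2 c hcI, nbc := hI.ind b hb.2 c hcI
      nj := hJ.ind _ mj1 _ mj2, nk := hK.ind _ mk1 _ mk2
      hj1 := adjI _ (hJS mj1) (nI _ (hJ.sub mj1)), hj2 := adjI _ (hJS mj2) (nI _ (hJ.sub mj2))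
      hk1 := adjI _ (hKS mk1) (nI _ (hKI mk1)), hk2 := adjI _ (hKS mk2) (nI _ (hKI mk2))
      aj := (att a ha.2 ha.1).1, ak := (att a ha.2 ha.1).2
      bj := (att b hb.2 hb.1).1, bk := (att b hb.2 hb.1).2
      kj1 := adjP _ _ _ (hJ.dom (hKI mk1) fun e => dJK _ e mk1)
      kj2 := adjP _ _ _ (hJ.dom (hKI mk2) fun e => dJK _ e mk2)
      jk1 := adjP _ _ _ (hK'.dom (hJ.sub mj1) (dJK _ mj1))
      jk2 := adjP _ _ _ (hK'.dom (hJ.sub mj2) (dJK _ mj2)) } hNT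
  · intro x
    constructor
    · intro hx
      by_cases hxI : x ∈ I
      · rcases (hIe x).1 hxI with h' | h' | h' <;> simp [h']
      by_cases hxJ : x ∈ ({j1, j2} : Finset V)
      · simp only [mem_insert, mem_singleton] at hxJ
        rcases hxJ with h' | h' <;> simp [h']
      have hxK : x ∈ ({k1, k2} : Finset V) := by
        rw [eK]; exact mem_sdiff.2 ⟨mem_sdiff.2 ⟨hx, hxI⟩, hxJ⟩
      simp only [mem_insert, mem_singleton] at hxK
      rcases hxK with h' | h' <;> simp [h']
    · rintro (rfl | rfl | rfl | rfl | rfl | rfl | rfl)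
      exacts [hI.sub ha.2, hI.sub hb.2, hI.sub hcI, hJS mj1, hJS mj2, hKS mk1, hKS mk2]
  · have e1 := dJ _ ha.2; have e2 := dJ _ hb.2; have e3 := dJ _ hcI
    have e4 := dK _ ha.2; have e5 := dK _ hb.2; have e6 := dK _ hcI
    have e7 := dJK _ mj1; have e8 := dJK _ mj2
    simp only [mem_insert, mem_singleton, not_or] at e1 e2 e3 e4 e5 e6 e7 e8
    simp only [List.nodup_cons, List.mem_cons, List.not_mem_nil, not_or, not_false_eq_true,
      and_true, List.nodup_nil]
    exact ⟨⟨hab, ha.1, e1.1, e1.2, e4⟩, ⟨hb.1, e2.1, e2.2, e5⟩, ⟨e3.1, e3.2, e6⟩,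
      ⟨hj, e7⟩, e8, hk⟩

/-- A separator as in `Cut` does not exist. -/
theorem false (h : Cut m G S A B) : False := by
  obtain ⟨I, hI⟩ := exists_maxInd G S
  obtain ⟨J, hJ⟩ := exists_maxInd G (S \ I)
  obtain ⟨K, hK⟩ := exists_maxInd G ((S \ I) \ J)
  have hJS : J ⊆ S := hJ.sub.trans sdiff_subset
  have hKI : K ⊆ S \ I := hK.sub.trans sdiff_subset
  have hKS : K ⊆ S := hKI.trans sdiff_subset
  have dIJ : Disjoint I J := (disjoint_sdiff (s := I) (t := S)).mono_right hJ.sub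
  have dIK : Disjoint I K := (disjoint_sdiff (s := I) (t := S)).mono_right hKI
  have dJK : Disjoint J K := (disjoint_sdiff (s := J) (t := S \ I)).mono_right hK.sub
  have cJI : #J ≤ #I := hI.max J hJS hJ.ind
  have cKJ : #K ≤ #J := hJ.max K hKI hK.ind
  have a1 := card_sdiff_add_card_eq_card hI.sub
  have a2 := card_sdiff_add_card_eq_card hJ.sub
  have a3 := card_sdiff_add_card_eq_card hK.sub
  have a4 := h.hS
  by_cases cK : #K ≤ 1
  · refine h.greedy hI hJ hK (clique_rest hK cK) ?_ ?_
    all_goals by_cases cJ : #J ≤ 1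
    · obtain ⟨c, h1, h2⟩ := h.L1 hI.sub hI.ind
      exact ⟨c, h1, h2, mono_of_card c cJ, mono_of_card c cK⟩
    · obtain ⟨c, h1, h2, h3⟩ := h.L2 hI.sub hJS dIJ hI.ind hJ.ind (by omega) (by omega)
      exact ⟨c, h1, h2, h3, mono_of_card c cK⟩
    · obtain ⟨c, h1, h2⟩ := h.symm.L1 hI.sub hI.ind
      exact ⟨c, h1, h2, mono_of_card c cJ, mono_of_card c cK⟩
    · obtain ⟨c, h1, h2, h3⟩ := h.symm.L2 hI.sub hJS dIJ hI.ind hJ.ind (by omega) (by omega)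
      exact ⟨c, h1, h2, h3, mono_of_card c cK⟩
  by_cases cI : #I = 3
  · exact h.seven hI hJ hK cI (by omega) (by omega)
  refine h.greedy hI hJ hK (fun x hx y hy hxy => ?_)
    (h.L3 hI.sub hJS hKS dIJ dIK dJK hI.ind hJ.ind hK.ind (by omega) (by omega) (by omega))
    (h.symm.L3 hI.sub hJS hKS dIJ dIK dJK hI.ind hJ.ind hK.ind (by omega) (by omega) (by omega))
  exact absurd (card_le_one.1 (by omega) x hx y hy) hxy

end Cut

/-! ### Connectivity -/

/-- Deleting `S` separates two of the remaining vertices. -/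
def Sep [Fintype V] (G : SimpleGraph V) (S : Finset V) : Prop :=
  ∃ x ∉ S, ∃ y ∉ S, ¬ Jn G (univ \ S) x y

/-- The neighbourhood of a nonempty set missing some vertex not adjacent to it separates. -/
theorem sep_bd [Fintype V] {G : SimpleGraph V} {Y : Finset V} {x y : V} (hx : x ∈ Y)
    (hy : y ∉ Y) (hyb : y ∉ bd G univ Y) : Sep G (bd G univ Y) := by
  refine ⟨x, fun h => (mem_bd.1 h).2.1 hx, y, hyb, fun h => hy ?_⟩
  clear hy hyb
  induction h with
  | refl => exact hx
  | @tail b c _ hbc ih =>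
    obtain ⟨h1, h2, h3⟩ := hbc
    by_contra hc
    have hb : b ∉ bd G univ Y := by simpa using h2
    have hc' : c ∉ bd G univ Y := by simpa using h3
    exact hc' (mem_bd.2 ⟨mem_univ _, hc, b, ih, h1.symm⟩)

/-- In a minimum separator every union of components with a nonempty complement is a `Side`. -/
theorem Sep.side [Fintype V] {G : SimpleGraph V} {S A B : Finset V}
    (hmin : ∀ S', Sep G S' → #S ≤ #S') (dA : Disjoint A S) (dB : Disjoint B S)
    (hAB : Disjoint A B) (nA : A.Nonempty) (nB : B.Nonempty)
    (cl : ∀ b ∈ A, ∀ z, G.Adj b z → z ∈ A ∨ z ∈ S) : Side G S A := by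
  refine ⟨dA, nA, cl, fun Y hY ⟨x, hx⟩ => ?_⟩
  obtain ⟨y, hy⟩ := nB
  refine hmin _ (sep_bd hx (fun h => Finset.disjoint_left.1 hAB (hY h) hy) fun h => ?_)
  obtain ⟨-, -, w, hw, h2⟩ := mem_bd.1 h
  rcases cl w (hY hw) y h2.symm with h3 | h3
  · exact Finset.disjoint_left.1 hAB h3 hy
  · exact Finset.disjoint_left.1 dB hy h3

/-- Separators of a noncomplete contraction-critical graph with `k ≥ 17` have more than seven
vertices. -/
theorem main {G : SimpleGraph V} [Fintype V] {k : ℕ} (hk : 17 ≤ k)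
    (hG : ContractionCritical k G) (hnc : G ≠ ⊤) {S₀ : Finset V} (hS₀ : Sep G S₀) : 7 < #S₀ := by
  by_contra! hlt
  obtain ⟨S, hS, hmin⟩ := exists_min_image ({S | Sep G S} : Finset (Finset V)) card
    ⟨S₀, by simp [hS₀]⟩
  have hmin' : ∀ S', Sep G S' → #S ≤ #S' := fun S' h => hmin S' (by simp [h])
  obtain ⟨x, hx, y, hy, hxy⟩ := (mem_filter.1 hS).2
  let A := comp G (univ \ S) x
  let B := (univ \ S) \ A
  have dA : Disjoint A S := Finset.disjoint_left.2 fun v hv => by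
    have := (mem_comp.1 hv).1
    simpa using this
  have dB : Disjoint B S := Finset.disjoint_left.2 fun v hv => by
    have := (mem_sdiff.1 hv).1
    simpa using this
  have dAB : Disjoint A B := disjoint_sdiff
  have nA : A.Nonempty := ⟨x, mem_comp.2 ⟨by simp [hx], .refl _⟩⟩
  have nB : B.Nonempty := ⟨y, mem_sdiff.2 ⟨by simp [hy], fun h => hxy (mem_comp.1 h).2⟩⟩
  have clA : ∀ b ∈ A, ∀ z, G.Adj b z → z ∈ A ∨ z ∈ S := by
    intro b hb z hbz
    by_cases hz : z ∈ S
    · exact .inr hz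
    · exact .inl (comp_closed hb (by simp [hz]) hbz.symm)
  have clB : ∀ b ∈ B, ∀ z, G.Adj b z → z ∈ B ∨ z ∈ S := by
    intro b hb z hbz
    by_cases hz : z ∈ S
    · exact .inr hz
    · refine .inl (mem_sdiff.2 ⟨by simp [hz], fun h => ?_⟩)
      exact (mem_sdiff.1 hb).2 (comp_closed h (mem_sdiff.1 hb).1 hbz)
  exact Cut.false (m := k - 1) (G := G) (S := S) (A := A) (B := B)
    { hm := by omega
      hS := (hmin' S₀ hS₀).trans hlt
      deg := fun v => hk.trans (deg_ge (by omega) hG hnc v)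
      sA := Sep.side hmin' dA dB dAB nA nB clA
      sB := Sep.side hmin' dB dA dAB.symm nB nA clB
      cov := fun v => by
        by_cases h1 : v ∈ A
        · exact .inl h1
        by_cases h2 : v ∈ S
        · exact .inr (.inr h2)
        · exact .inr (.inl (mem_sdiff.2 ⟨by simp [h2], h1⟩))
      dAB := dAB
      con := fun T hT C hd hI hJ => con_col (by omega) hG T hT C hd hI hJ
      nocol := fun c hc => no_col (by omega) hG c hc }

end CC

theorem stmt9 {V : Type} [Fintype V] (k : ℕ) (hk : 17 ≤ k) (G : SimpleGraph V)
    (hG : ContractionCritical k G) (hnc : G ≠ ⊤) :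
    KConnected G 8 := by
  classical
  have hne : Nonempty V := by
    by_contra h
    have := not_nonempty_iff.1 h
    exact hnc (Subsingleton.elim _ _)
  have hcard : 17 ≤ Fintype.card V := by
    obtain ⟨v⟩ := hne
    exact (hk.trans (CC.deg_ge (by omega) hG hnc v)).trans (Finset.card_le_univ _)
  refine ⟨by omega, fun S hS => ?_⟩
  have hex : ∃ x, x ∉ S := by
    by_contra! h
    have := Finset.card_le_card (fun x _ => h x : Finset.univ ⊆ S)
    rw [Finset.card_univ] at this
    omega
  obtain ⟨x₀, hx₀⟩ := hex
  have : Nonempty {v : V | v ∉ S} := ⟨⟨x₀, hx₀⟩⟩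
  refine Connected.mk fun x y => ?_
  by_contra hxy
  refine absurd (CC.main hk hG hnc (S₀ := S) ⟨x, x.2, y, y.2, fun h => hxy ?_⟩) (by omega)
  exact h.reach (fun z hz => by simpa using hz) x.2 y.2
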